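/- Let Ω ⊂ ℂⁿ, n ≥ 2, be a bounded pseudoconvex domain with C^∞ boundary, and let p ∈ ∂Ω be a strongly pseudoconvex boundary point. Let F : Ω → Ω be a holomorphic map with F(z) = z + o(‖z−p‖²) as z → p within Ω, and suppose F is not the identity map. Then the iterates F^m converge normally to p (i.e., F^m converges to the constant map p uniformly on compact subsets of Ω), and F is not an automorphism of Ω. -/

import Mathlib

open Complex Topology Filter Metric Set Function

noncomputable section

/-- `ℂⁿ` as a normed space. -/
abbrev En (n : ℕ) : Type := EuclideanSpace ℂ (Fin n)

/-- A domain: a nonempty open connected set. -/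
def IsDomain' {n : ℕ} (Ω : Set (En n)) : Prop :=
  IsOpen Ω ∧ IsConnected Ω

/-- The Levi form of `ρ` at `q` in direction `ξ`:
`(1/4)(H_q(ξ,ξ) + H_q(iξ,iξ))` with `H_q` the second real Fréchet derivative. -/
def LeviForm {n : ℕ} (ρ : En n → ℝ) (q ξ : En n) : ℝ :=
  (1 / 4) * (iteratedFDeriv ℝ 2 ρ q ![ξ, ξ] + iteratedFDeriv ℝ 2 ρ q ![I • ξ, I • ξ])

/-- `ξ` lies in the complex tangent space of `{ρ = 0}` at `q`. -/
def InCplxTangent {n : ℕ} (ρ : En n → ℝ) (q ξ : En n) : Prop :=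
  fderiv ℝ ρ q ξ = 0 ∧ fderiv ℝ ρ q (I • ξ) = 0

/-- `ρ` is a `C^m` defining function for `Ω`. -/
def IsDefiningFunction {n : ℕ} (Ω : Set (En n)) (m : ℕ∞) (ρ : En n → ℝ) : Prop :=
  ContDiff ℝ m ρ ∧ Ω = {z | ρ z < 0} ∧ frontier Ω = {z | ρ z = 0} ∧
    ∀ q ∈ frontier Ω, fderiv ℝ ρ q ≠ 0

/-- `q` is a strongly pseudoconvex point with respect to `ρ`. -/
def StronglyPcxAt {n : ℕ} (ρ : En n → ℝ) (q : En n) : Prop :=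
  ∀ ξ : En n, ξ ≠ 0 → InCplxTangent ρ q ξ → 0 < LeviForm ρ q ξ

/-- `Ω` is pseudoconvex with `C^∞` boundary, witnessed by the defining function `ρ`. -/
def IsPcxCinfBoundary {n : ℕ} (Ω : Set (En n)) (ρ : En n → ℝ) : Prop :=
  IsDefiningFunction Ω ⊤ ρ ∧
    ∀ q ∈ frontier Ω, ∀ ξ : En n, InCplxTangent ρ q ξ → 0 ≤ LeviForm ρ q ξ

/-- `F z = z + o(‖z - p‖^k)` as `z → p` within `Ω`. -/
def LittleOh {n : ℕ} (Ω : Set (En n)) (F : En n → En n) (p : En n) (k : ℕ) : Prop :=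
  Tendsto (fun z => ‖F z - z‖ / ‖z - p‖ ^ k) (𝓝[Ω] p) (𝓝 0)

/-- `F` is an automorphism of `Ω`: a holomorphic bijection with holomorphic inverse. -/
def IsAutomorphismOf {n : ℕ} (F : En n → En n) (Ω : Set (En n)) : Prop :=
  DifferentiableOn ℂ F Ω ∧ MapsTo F Ω Ω ∧
    ∃ G : En n → En n, DifferentiableOn ℂ G Ω ∧ MapsTo G Ω Ω ∧
      (∀ z ∈ Ω, G (F z) = z) ∧ (∀ z ∈ Ω, F (G z) = z)

/-!
Suppose `F` is tangent to the identity to second order at `p`. A bounded two-sided family of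
holomorphic maps `a m` with `a m ∘ F = a (m + 1)` is then constant in `m`. Indeed, convolving `a`
with the Fourier coefficients of `(cos r - cos θ)² (e^{iθ} - 1)⁻ᵏ` on `[r, 2π - r]` gives a tower
`b k` with `b (k + 1) ∘ F - b (k + 1) = b k` whose bounds grow geometrically in `k`. As `F - id` is
so small near `p`, Cauchy estimates turn the tower into decay of `b 0` along `y ↦ p + y⁻¹ • a` that
is faster than exponential, so `b 0 = 0`; letting `r → 0`, the fourth differences of `a` vanish, and
a bounded sequence with vanishing fourth differences is constant.

For an automorphism `F`, the family `F^m`, `m ∈ ℤ`, gives `F = id`. In general, every limit `g` of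
the iterates along an ultrafilter satisfies `g ∘ F = g`. A value of `g` in `Ω` is a fixed point of
`F`, at which either `g` is injective, so that `F = id`, or `|det F'| < 1`. In the second case a
Hopf-type lemma on a disc tangent to `∂Ω` at `p`, fed with an anisotropic boundary estimate of
Jacobian determinants, makes `det (F^m)'` at `p + t • a` small once `m * t` is large; this
contradicts the lower bound `1 / 2` which flatness gives as `t → 0` with `m * t` bounded. Hence `g`
takes a value in `∂Ω` near `p`, and the peak functions at strongly pseudoconvex boundary points
force `g` to be constant, equal to `p`.
-/

section SeveralVariables

variable {E G : Type*} [NormedAddCommGroup E] [NormedSpace ℂ E] [NormedAddCommGroup G]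
  [NormedSpace ℂ G]

theorem norm_sub_le_of_forall_norm_le {f : E → G} {x y : E} {R M : ℝ}
    (hf : DifferentiableOn ℂ f (ball x R)) (hM : ∀ z ∈ ball x R, ‖f z‖ ≤ M) (hy : y ∈ ball x R) :
    ‖f y - f x‖ ≤ 2 * M / R * ‖y - x‖ := by
  rw [← dist_eq_norm, ← dist_eq_norm]
  refine Complex.dist_le_div_mul_dist_of_mapsTo_ball hf (fun z hz => ?_) hy
  rw [mem_closedBall, dist_eq_norm]
  linarith [norm_sub_le (f z) (f x), hM z hz, hM x (mem_ball_self (pos_of_mem_ball hy))]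

theorem norm_fderiv_le_of_forall_norm_le {f : E → G} {x : E} {R M : ℝ} (hR : 0 < R)
    (hf : DifferentiableOn ℂ f (ball x R)) (hM : ∀ z ∈ ball x R, ‖f z‖ ≤ M) :
    ‖fderiv ℂ f x‖ ≤ 2 * M / R := by
  refine Complex.norm_fderiv_le_div_of_mapsTo_ball hf (fun z hz => ?_) hR
  rw [mem_closedBall, dist_eq_norm]
  linarith [norm_sub_le (f z) (f x), hM z hz, hM x (mem_ball_self hR)]

theorem norm_sub_le_of_forall_norm_le_of_mem {f : E → G} {x : E} {r M : ℝ}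
    (hf : DifferentiableOn ℂ f (ball x (3 * r))) (hM : ∀ z ∈ ball x (3 * r), ‖f z‖ ≤ M)
    {z w : E} (hz : z ∈ ball x r) (hw : w ∈ ball x r) :
    ‖f z - f w‖ ≤ M / r * ‖z - w‖ := by
  have hsub : ball w (2 * r) ⊆ ball x (3 * r) :=
    ball_subset_ball' (by linarith [mem_ball.1 hw])
  have hzw : z ∈ ball w (2 * r) := by
    rw [mem_ball] at *
    linarith [dist_triangle_right z w x]
  have h := norm_sub_le_of_forall_norm_le (hf.mono hsub) (fun y hy => hM y (hsub hy)) hzw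
  rwa [mul_div_mul_left _ _ two_ne_zero] at h

theorem eventually_differentiableOn_differenceQuotient {f : E → G} {x : E} {r M : ℝ} (hr : 0 < r)
    (hf : DifferentiableOn ℂ f (ball x (6 * r))) (hM : ∀ z ∈ ball x (6 * r), ‖f z‖ ≤ M) (v : E) :
    ∀ᶠ t : ℂ in 𝓝[≠] 0, DifferentiableOn ℂ (fun z => t⁻¹ • (f (z + t • v) - f z)) (ball x r) ∧
      ∀ z ∈ ball x r, ‖t⁻¹ • (f (z + t • v) - f z)‖ ≤ M / (2 * r) * ‖v‖ := by
  have hsmall : ∀ᶠ t : ℂ in 𝓝[≠] 0, ‖t • v‖ < r := by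
    have h : Tendsto (fun t : ℂ => ‖t • v‖) (𝓝 0) (𝓝 0) := by
      simpa only [zero_smul, norm_zero] using
        (by fun_prop : Continuous fun t : ℂ => ‖t • v‖).tendsto 0
    exact (h.mono_left nhdsWithin_le_nhds).eventually_lt_const hr
  filter_upwards [hsmall, self_mem_nhdsWithin] with t ht ht0
  have hshift : ∀ z ∈ ball x r, z + t • v ∈ ball x (2 * r) := fun z hz => by
    rw [mem_ball] at *
    linarith [dist_triangle (z + t • v) z x, dist_self_add_left (t • v) z]
  refine ⟨((hf.comp (by fun_prop) fun z hz => ?_).sub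
    (hf.mono (ball_subset_ball (by linarith)))).const_smul _, fun z hz => ?_⟩
  · exact ball_subset_ball (by linarith) (hshift z hz)
  · have hlip := norm_sub_le_of_forall_norm_le_of_mem (f := f) (x := x) (r := 2 * r) (M := M)
      (hf.mono (ball_subset_ball (by linarith)))
      (fun y hy => hM y (ball_subset_ball (by linarith) hy)) (hshift z hz)
      (ball_subset_ball (by linarith) hz)
    rw [norm_smul, norm_inv, inv_mul_le_iff₀ (norm_pos_iff.2 ht0)]
    refine hlip.trans_eq ?_
    rw [add_sub_cancel_left, norm_smul]
    ring

theorem norm_fderiv_sub_le_of_forall_norm_le {f : E → G} {x y : E} {r M : ℝ} (hr : 0 < r)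
    (hf : DifferentiableOn ℂ f (ball x (6 * r))) (hM : ∀ z ∈ ball x (6 * r), ‖f z‖ ≤ M)
    (hy : y ∈ ball x r) :
    ‖fderiv ℂ f y - fderiv ℂ f x‖ ≤ M / r ^ 2 * ‖y - x‖ := by
  have hM0 : 0 ≤ M := (norm_nonneg _).trans (hM x (mem_ball_self (by linarith)))
  have hslope : ∀ z ∈ ball x r, ∀ v, Tendsto (fun t : ℂ => t⁻¹ • (f (z + t • v) - f z)) (𝓝[≠] 0)
      (𝓝 (fderiv ℂ f z v)) := fun z hz v =>
    ((hf.differentiableAt (isOpen_ball.mem_nhds (ball_subset_ball (by linarith) hz))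
      ).hasFDerivAt.hasLineDerivAt v).tendsto_slope_zero
  refine ContinuousLinearMap.opNorm_le_bound _ (by positivity) fun v => ?_
  refine le_of_tendsto ((hslope y hy v).sub (hslope x (mem_ball_self hr) v)).norm ?_
  filter_upwards [eventually_differentiableOn_differenceQuotient hr hf hM v] with t ht
  refine (norm_sub_le_of_forall_norm_le ht.1 ht.2 hy).trans_eq ?_
  field

theorem norm_sub_sub_fderiv_le_of_forall_norm_le {f : E → G} {x : E} {r s M : ℝ} (hr : 0 < r)
    (hs : s ≤ r) (hf : DifferentiableOn ℂ f (ball x (6 * r)))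
    (hM : ∀ z ∈ ball x (6 * r), ‖f z‖ ≤ M) {z w : E} (hz : z ∈ ball x s) (hw : w ∈ ball x s) :
    ‖f z - f w - fderiv ℂ f x (z - w)‖ ≤ M / r ^ 2 * s * ‖z - w‖ := by
  have hM0 : 0 ≤ M := (norm_nonneg _).trans (hM x (mem_ball_self (by linarith)))
  let : NormedSpace ℝ E := NormedSpace.restrictScalars ℝ ℂ E
  refine (convex_ball x s).norm_image_sub_le_of_norm_fderiv_le' (𝕜 := ℂ) (fun y hy => ?_)
    (fun y hy => ?_) hw hz
  · exact hf.differentiableAt (isOpen_ball.mem_nhds (ball_subset_ball (by linarith) hy))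
  · refine (norm_fderiv_sub_le_of_forall_norm_le hr hf hM (ball_subset_ball hs hy)).trans ?_
    gcongr
    exact (mem_ball_iff_norm.1 hy).le

theorem hasStrictFDerivAt_of_norm_sub_sub_le {g : E → G} {A : E →L[ℂ] G} {x : E} {r C : ℝ}
    (hr : 0 < r) (h : ∀ s ≤ r, ∀ z ∈ ball x s, ∀ w ∈ ball x s,
      ‖g z - g w - A (z - w)‖ ≤ C * s * ‖z - w‖) : HasStrictFDerivAt g A x := by
  rw [hasStrictFDerivAt_iff_isLittleO, Asymptotics.isLittleO_iff]
  intro c hc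
  have hCs : Tendsto (fun s : ℝ => C * s) (𝓝[>] 0) (𝓝 0) := by
    simpa only [mul_zero] using ((continuous_const_mul C).tendsto 0).mono_left nhdsWithin_le_nhds
  obtain ⟨s, hsc, hs, hsr⟩ :=
    ((hCs.eventually_lt_const hc).and (Ioc_mem_nhdsGT hr)).exists
  filter_upwards [prod_mem_nhds (ball_mem_nhds x hs) (ball_mem_nhds x hs)] with q hq
  exact (h s hsr q.1 hq.1 q.2 hq.2).trans (by gcongr)

theorem hasStrictFDerivAt_of_tendsto {ι : Type*} {l : Filter ι} [l.NeBot] {f : ι → E → G}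
    {g : E → G} {A : E →L[ℂ] G} {x : E} {R M : ℝ} (hR : 0 < R)
    (hf : ∀ᶠ i in l, DifferentiableOn ℂ (f i) (ball x R))
    (hM : ∀ᶠ i in l, ∀ z ∈ ball x R, ‖f i z‖ ≤ M)
    (hlim : ∀ z ∈ ball x R, Tendsto (fun i => f i z) l (𝓝 (g z)))
    (hA : Tendsto (fun i => fderiv ℂ (f i) x) l (𝓝 A)) : HasStrictFDerivAt g A x := by
  obtain ⟨r, hr, rfl⟩ : ∃ r > 0, R = 6 * r := ⟨R / 6, by positivity, by ring⟩
  refine hasStrictFDerivAt_of_norm_sub_sub_le (C := M / r ^ 2) hr fun s hs z hz w hw => ?_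
  have hsub : ball x s ⊆ ball x (6 * r) := ball_subset_ball (by linarith)
  refine le_of_tendsto (((hlim z (hsub hz)).sub (hlim w (hsub hw))).sub
    (((ContinuousLinearMap.apply ℂ G (z - w)).continuous.tendsto A).comp hA)).norm ?_
  filter_upwards [hf, hM] with i hfi hMi
  exact norm_sub_sub_fderiv_le_of_forall_norm_le hr hs hfi hMi hz hw

theorem exists_tendsto_ultrafilter_of_norm_le {ι V : Type*} [NormedAddCommGroup V] [ProperSpace V]
    (u : Ultrafilter ι) {f : ι → V} {M : ℝ} (hM : ∀ᶠ i in (u : Filter ι), ‖f i‖ ≤ M) :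
    ∃ y, Tendsto f u (𝓝 y) := by
  have hu : (u.map f : Filter V) ≤ 𝓟 (closedBall 0 M) :=
    le_principal_iff.2 (hM.mono fun i hi => mem_closedBall_zero_iff.2 hi)
  obtain ⟨y, -, hy⟩ := (isCompact_closedBall (0 : V) M).ultrafilter_le_nhds (u.map f) hu
  exact ⟨y, hy⟩

theorem exists_ball_subset_forall_norm_le {X V : Type*} [PseudoMetricSpace X]
    [SeminormedAddCommGroup V] {f : X → V} {Ω : Set X} (hΩ : IsOpen Ω) (hf : ContinuousOn f Ω)
    {x : X} (hx : x ∈ Ω) :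
    ∃ R > 0, ∃ M, ball x R ⊆ Ω ∧ ∀ z ∈ ball x R, ‖f z‖ ≤ M := by
  have hbound : ∀ᶠ z in 𝓝 x, ‖f z‖ < ‖f x‖ + 1 :=
    (hf.continuousAt (hΩ.mem_nhds hx)).norm.eventually_lt_const (lt_add_one _)
  obtain ⟨R, hR, h⟩ := Metric.eventually_nhds_iff_ball.1 (hbound.and (hΩ.mem_nhds hx))
  exact ⟨R, hR, ‖f x‖ + 1, fun z hz => (h z hz).2, fun z hz => (h z hz).1.le⟩

theorem eqOn_ball_of_eventuallyEq [CompleteSpace G] {f g : E → G} {x w : E} {r : ℝ}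
    (hf : DifferentiableOn ℂ f (ball x r)) (hg : DifferentiableOn ℂ g (ball x r))
    (hw : w ∈ ball x r) (hfg : f =ᶠ[𝓝 w] g) : EqOn f g (ball x r) := by
  intro y hy
  let : NormedSpace ℝ E := NormedSpace.restrictScalars ℝ ℂ E
  let γ : ℂ → E := fun t => w + t • (y - w)
  have hγ : Differentiable ℂ γ := by fun_prop
  have hγ0 : γ 0 = w := by simp only [γ, zero_smul, add_zero]
  have hγ1 : γ 1 = y := by simp only [γ, one_smul, add_sub_cancel]
  have hU : IsOpen (γ ⁻¹' ball x r) := isOpen_ball.preimage hγ.continuous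
  have hUconv : Convex ℝ (γ ⁻¹' ball x r) :=
    ((convex_ball x r).translate_preimage_right w).linear_preimage
      ((LinearMap.toSpanSingleton ℂ E (y - w)).restrictScalars ℝ)
  have hanalytic : ∀ {h : E → G}, DifferentiableOn ℂ h (ball x r) →
      AnalyticOnNhd ℂ (h ∘ γ) (γ ⁻¹' ball x r) := fun hh =>
    (hh.comp hγ.differentiableOn (mapsTo_preimage γ _)).analyticOnNhd hU
  have hγw : Tendsto γ (𝓝 0) (𝓝 w) := hγ0 ▸ hγ.continuous.tendsto 0
  have hline := (hanalytic hf).eqOn_of_preconnected_of_eventuallyEq (hanalytic hg)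
    hUconv.isPreconnected (show γ 0 ∈ ball x r by rwa [hγ0]) (hγw.eventually hfg)
    (show γ 1 ∈ ball x r by rwa [hγ1])
  simpa only [comp_apply, hγ1] using hline

theorem eqOn_of_eventuallyEq_of_isPreconnected [CompleteSpace G] {f g : E → G} {Ω : Set E}
    (hΩ : IsOpen Ω) (hc : IsPreconnected Ω) (hf : DifferentiableOn ℂ f Ω)
    (hg : DifferentiableOn ℂ g Ω) {x : E} (hx : x ∈ Ω) (hfg : f =ᶠ[𝓝 x] g) : EqOn f g Ω := by
  have hsub : Ω ⊆ {z | f =ᶠ[𝓝 z] g} := by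
    refine hc.subset_of_closure_inter_subset isOpen_setOfPred_eventually_nhds ⟨x, hx, hfg⟩ ?_
    rintro z ⟨hz, hzΩ⟩
    obtain ⟨r, hr, hball⟩ := Metric.isOpen_iff.1 hΩ z hzΩ
    obtain ⟨w, hw, hwz⟩ := Metric.mem_closure_iff.1 hz r hr
    exact (eqOn_ball_of_eventuallyEq (hf.mono hball) (hg.mono hball) (mem_ball'.2 hwz)
      hw).eventuallyEq_of_mem (ball_mem_nhds z hr)
  exact fun z hz => (hsub hz).self_of_nhds

theorem differentiableOn_of_forall_clm_apply [FiniteDimensional ℂ E] {f : E → E →L[ℂ] G}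
    {s : Set E} (h : ∀ v, DifferentiableOn ℂ (fun x => f x v) s) : DifferentiableOn ℂ f s := by
  let d := Module.finrank ℂ E
  have hd : d = Module.finrank ℂ (Fin d → ℂ) := (Module.finrank_fin_fun ℂ).symm
  let e₁ := ContinuousLinearEquiv.ofFinrankEq hd
  let e₂ := (e₁.arrowCongr (1 : G ≃L[ℂ] G)).trans (ContinuousLinearEquiv.piRing (Fin d))
  rw [← id_comp f, ← e₂.symm_comp_self]
  exact e₂.symm.differentiable.comp_differentiableOn (differentiableOn_pi.2 fun i => h _)

variable [FiniteDimensional ℂ E] [FiniteDimensional ℂ G]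

theorem differentiableAt_of_tendsto {ι : Type*} {l : Filter ι} [l.NeBot] {f : ι → E → G}
    {g : E → G} {x : E} {R M : ℝ} (hR : 0 < R)
    (hf : ∀ᶠ i in l, DifferentiableOn ℂ (f i) (ball x R))
    (hM : ∀ᶠ i in l, ∀ z ∈ ball x R, ‖f i z‖ ≤ M)
    (hlim : ∀ z ∈ ball x R, Tendsto (fun i => f i z) l (𝓝 (g z))) : DifferentiableAt ℂ g x := by
  have hle : (Ultrafilter.of l : Filter ι) ≤ l := Ultrafilter.of_le l
  have : ProperSpace (E →L[ℂ] G) := FiniteDimensional.proper ℂ _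
  obtain ⟨A, hA⟩ := exists_tendsto_ultrafilter_of_norm_le (Ultrafilter.of l)
    (f := fun i => fderiv ℂ (f i) x) (M := 2 * M / R) (by
      filter_upwards [hle hf, hle hM] with i hfi hMi
      exact norm_fderiv_le_of_forall_norm_le hR hfi hMi)
  exact (hasStrictFDerivAt_of_tendsto hR (hle hf) (hle hM)
    (fun z hz => (hlim z hz).mono_left hle) hA).hasFDerivAt.differentiableAt

theorem differentiableOn_of_tendsto {ι : Type*} {l : Filter ι} [l.NeBot] {f : ι → E → G}
    {g : E → G} {Ω : Set E} {M : ℝ} (hΩ : IsOpen Ω)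
    (hf : ∀ i, DifferentiableOn ℂ (f i) Ω) (hM : ∀ i, ∀ z ∈ Ω, ‖f i z‖ ≤ M)
    (hlim : ∀ z ∈ Ω, Tendsto (fun i => f i z) l (𝓝 (g z))) : DifferentiableOn ℂ g Ω := by
  intro x hx
  obtain ⟨R, hR, hsub⟩ := Metric.isOpen_iff.1 hΩ x hx
  exact (differentiableAt_of_tendsto hR (.of_forall fun i => (hf i).mono hsub)
    (.of_forall fun i z hz => hM i z (hsub hz))
    (fun z hz => hlim z (hsub hz))).differentiableWithinAt

theorem differentiableOn_fderiv_of_isOpen {f : E → G} {Ω : Set E} (hΩ : IsOpen Ω)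
    (hf : DifferentiableOn ℂ f Ω) : DifferentiableOn ℂ (fderiv ℂ f) Ω := by
  refine differentiableOn_of_forall_clm_apply fun v x hx => ?_
  obtain ⟨R, hR, M, hsub, hM⟩ := exists_ball_subset_forall_norm_le hΩ hf.continuousOn hx
  obtain ⟨r, hr, rfl⟩ : ∃ r > 0, R = 6 * r := ⟨R / 6, by positivity, by ring⟩
  have hquot := eventually_differentiableOn_differenceQuotient hr (hf.mono hsub) hM v
  refine (differentiableAt_of_tendsto (l := 𝓝[≠] (0 : ℂ)) hr (hquot.mono fun _ h => h.1)
    (hquot.mono fun _ h => h.2) fun z hz => ?_).differentiableWithinAt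
  have hzΩ : z ∈ Ω := hsub (ball_subset_ball (by linarith) hz)
  exact ((hf.differentiableAt (hΩ.mem_nhds hzΩ)).hasFDerivAt.hasLineDerivAt v).tendsto_slope_zero

end SeveralVariables

section FourierKernel

theorem hasDerivAt_exp_ofReal_mul_I (θ : ℝ) :
    HasDerivAt (fun θ : ℝ => exp (θ * I)) (exp (θ * I) * I) θ := by
  simpa using (ofRealCLM.hasDerivAt.mul_const I).cexp (x := θ)

theorem hasDerivAt_exp_neg_int_mul_I (l : ℤ) (θ : ℝ) :
    HasDerivAt (fun θ : ℝ => exp (-(l * θ * I))) (exp (-(l * θ * I)) * -(l * I)) θ := by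
  simpa using ((ofRealCLM.hasDerivAt.const_mul (l : ℂ)).mul_const I).neg.cexp (x := θ)

theorem norm_exp_neg_int_mul_mul_I (l : ℤ) (θ : ℝ) : ‖exp (-(l * θ * I))‖ = 1 := by
  simpa using norm_exp_ofReal_mul_I (-(l * θ))

variable {g g₁ g₂ : ℝ → ℂ} {α β M : ℝ}

theorem norm_integral_mul_exp_le (hαβ : α ≤ β) (hM : ∀ θ ∈ Icc α β, ‖g θ‖ ≤ M) (l : ℤ) :
    ‖∫ θ in α..β, g θ * exp (-(l * θ * I))‖ ≤ M * (β - α) := by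
  have h : ∀ θ ∈ uIoc α β, ‖g θ * exp (-(l * θ * I))‖ ≤ M := by
    intro θ hθ
    rw [uIoc_of_le hαβ] at hθ
    rw [norm_mul, norm_exp_neg_int_mul_mul_I, mul_one]
    exact hM θ (Ioc_subset_Icc_self hθ)
  simpa only [abs_of_nonneg (sub_nonneg.2 hαβ)] using
    intervalIntegral.norm_integral_le_of_norm_le_const h

theorem int_mul_I_mul_integral_mul_exp (hαβ : α ≤ β) (hg : ∀ θ ∈ Icc α β, HasDerivAt g (g₁ θ) θ)
    (hg₁ : ContinuousOn g₁ (Icc α β)) (hα : g α = 0) (hβ : g β = 0) (l : ℤ) :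
    l * I * ∫ θ in α..β, g θ * exp (-(l * θ * I)) = ∫ θ in α..β, g₁ θ * exp (-(l * θ * I)) := by
  rw [← uIcc_of_le hαβ] at hg hg₁
  have hgc : ContinuousOn g (uIcc α β) := HasDerivAt.continuousOn hg
  have hi : IntervalIntegrable (fun θ => g θ * exp (-(l * θ * I))) MeasureTheory.volume α β :=
    ContinuousOn.intervalIntegrable (by fun_prop)
  have hi₁ : IntervalIntegrable (fun θ => g₁ θ * exp (-(l * θ * I))) MeasureTheory.volume α β :=
    ContinuousOn.intervalIntegrable (by fun_prop)
  have hFTC := intervalIntegral.integral_eq_sub_of_hasDerivAt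
    (f := fun θ => g θ * exp (-(l * θ * I)))
    (f' := fun θ => g₁ θ * exp (-(l * θ * I)) - l * I * (g θ * exp (-(l * θ * I))))
    (fun θ hθ => ((hg θ hθ).fun_mul (hasDerivAt_exp_neg_int_mul_I l θ)).congr_deriv (by ring))
    (hi₁.sub (hi.const_mul _))
  rw [intervalIntegral.integral_sub hi₁ (hi.const_mul _), intervalIntegral.integral_const_mul,
    hα, hβ, zero_mul, zero_mul, sub_zero] at hFTC
  exact (sub_eq_zero.1 hFTC).symm

theorem norm_integral_mul_exp_le_div_sq (hαβ : α ≤ β)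
    (hg : ∀ θ ∈ Icc α β, HasDerivAt g (g₁ θ) θ) (hg₁ : ∀ θ ∈ Icc α β, HasDerivAt g₁ (g₂ θ) θ)
    (hg₂ : ContinuousOn g₂ (Icc α β)) (hα : g α = 0) (hβ : g β = 0) (hα₁ : g₁ α = 0)
    (hβ₁ : g₁ β = 0) (hM : ∀ θ ∈ Icc α β, ‖g θ‖ ≤ M) (hM₂ : ∀ θ ∈ Icc α β, ‖g₂ θ‖ ≤ M) (l : ℤ) :
    ‖∫ θ in α..β, g θ * exp (-(l * θ * I))‖ ≤ 2 * M * (β - α) / (1 + (l : ℝ) ^ 2) := by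
  have htwice : l * I * (l * I * ∫ θ in α..β, g θ * exp (-(l * θ * I))) =
      ∫ θ in α..β, g₂ θ * exp (-(l * θ * I)) := by
    rw [int_mul_I_mul_integral_mul_exp hαβ hg (HasDerivAt.continuousOn hg₁) hα hβ,
      int_mul_I_mul_integral_mul_exp hαβ hg₁ hg₂ hα₁ hβ₁]
  have hsq : (l : ℝ) ^ 2 * ‖∫ θ in α..β, g θ * exp (-(l * θ * I))‖ ≤ M * (β - α) := by
    refine le_of_eq_of_le ?_ (norm_integral_mul_exp_le hαβ hM₂ l)
    have hl : ‖l * I * (l * I)‖ = (l : ℝ) ^ 2 := by simp [sq]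
    rw [← htwice, ← mul_assoc, norm_mul, hl]
  rw [le_div_iff₀ (by positivity)]
  linarith [norm_integral_mul_exp_le hαβ hM l]

theorem summable_one_div_one_add_int_sq : Summable fun l : ℤ => 1 / (1 + (l : ℝ) ^ 2) := by
  refine (Real.summable_one_div_int_pow.2 one_lt_two).of_norm_bounded_eventually ?_
  filter_upwards [(finite_singleton (0 : ℤ)).compl_mem_cofinite] with l hl
  have hl : (0 : ℝ) < (l : ℝ) ^ 2 := by
    have : (l : ℝ) ≠ 0 := by exact_mod_cast hl
    positivity
  rw [Real.norm_of_nonneg (by positivity)]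
  gcongr
  linarith

theorem exp_mul_I_sub_one_ne_zero {θ : ℝ} (h₀ : 0 < θ) (h₁ : θ < 2 * Real.pi) :
    exp (θ * I) - 1 ≠ 0 := by
  intro h
  obtain ⟨n, hn⟩ := exp_eq_one_iff.1 (sub_eq_zero.1 h)
  have hθ : θ = n * (2 * Real.pi) := by
    have : (θ : ℂ) = n * (2 * Real.pi) := mul_right_cancel₀ I_ne_zero (by rw [hn]; ring)
    exact_mod_cast this
  have hn₀ : (0 : ℝ) < n := pos_of_mul_pos_left (hθ ▸ h₀) (by positivity)
  have hn₁ : (n : ℝ) < 1 := by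
    rw [hθ] at h₁
    exact lt_of_mul_lt_mul_right (by simpa using h₁) Real.two_pi_pos.le
  norm_cast at hn₀ hn₁
  omega

theorem hasDerivAt_inv_exp_sub_one_pow {θ : ℝ} (h₀ : exp (θ * I) - 1 ≠ 0) (k : ℕ) :
    HasDerivAt (fun θ : ℝ => (exp (θ * I) - 1)⁻¹ ^ k)
      (-I * k * ((exp (θ * I) - 1)⁻¹ ^ k + (exp (θ * I) - 1)⁻¹ ^ (k + 1))) θ := by
  refine ((((hasDerivAt_exp_ofReal_mul_I θ).sub_const 1).fun_inv h₀).fun_pow k).congr_deriv ?_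
  rcases k with _ | k
  · simp
  · obtain ⟨w, hw⟩ : ∃ w, exp (θ * I) = w + 1 := ⟨_, (sub_add_cancel _ _).symm⟩
    rw [hw, add_sub_cancel_right] at h₀ ⊢
    simp only [Nat.add_sub_cancel, inv_pow]
    field_simp
    ring

/-- The symbol `(cos r - cos θ)² (e^{iθ} - 1)⁻ᵏ` of the Fourier multipliers. The weight makes it
vanish to second order at the endpoints of `[r, 2π - r]`, so its Fourier coefficients are summable;
dividing by `e^{iθ} - 1` inverts the difference operator. -/
def kernelSymbol (r : ℝ) (k : ℕ) (θ : ℝ) : ℂ :=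
  ((Real.cos r - Real.cos θ) ^ 2 : ℝ) * (exp (θ * I) - 1)⁻¹ ^ k

/-- The Fourier coefficients of `kernelSymbol r k` cut off to `[r, 2π - r]`, without the factor
`1 / (2π)`. -/
def kernelCoeff (r : ℝ) (k : ℕ) (l : ℤ) : ℂ :=
  ∫ θ in r..(2 * Real.pi - r), kernelSymbol r k θ * exp (-(l * θ * I))

section Weight

theorem hasDerivAt_cos_sub_cos_sq (r θ : ℝ) :
    HasDerivAt (fun θ => (Real.cos r - Real.cos θ) ^ 2)
      (2 * (Real.cos r - Real.cos θ) * Real.sin θ) θ :=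
  (((Real.hasDerivAt_cos θ).const_sub (Real.cos r)).fun_pow 2).congr_deriv (by simp)

theorem hasDerivAt_cos_sub_cos_mul_sin (r θ : ℝ) :
    HasDerivAt (fun θ => 2 * (Real.cos r - Real.cos θ) * Real.sin θ)
      (2 * Real.sin θ ^ 2 + 2 * (Real.cos r - Real.cos θ) * Real.cos θ) θ :=
  ((((Real.hasDerivAt_cos θ).const_sub (Real.cos r)).const_mul 2).fun_mul
    (Real.hasDerivAt_sin θ)).congr_deriv (by ring)

theorem abs_cos_sub_cos_le_two (r θ : ℝ) : |Real.cos r - Real.cos θ| ≤ 2 := by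
  linarith [abs_sub (Real.cos r) (Real.cos θ), Real.abs_cos_le_one r, Real.abs_cos_le_one θ]

theorem abs_cos_sub_cos_sq_le (r θ : ℝ) : |(Real.cos r - Real.cos θ) ^ 2| ≤ 4 := by
  rw [abs_pow]
  nlinarith [abs_cos_sub_cos_le_two r θ, abs_nonneg (Real.cos r - Real.cos θ)]

theorem abs_cos_sub_cos_mul_sin_le (r θ : ℝ) :
    |2 * (Real.cos r - Real.cos θ) * Real.sin θ| ≤ 4 := by
  rw [abs_mul, abs_mul, abs_two]
  nlinarith [mul_le_mul (abs_cos_sub_cos_le_two r θ) (Real.abs_sin_le_one θ) (abs_nonneg _)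
    zero_le_two]

theorem abs_sin_sq_add_cos_sub_cos_mul_cos_le (r θ : ℝ) :
    |2 * Real.sin θ ^ 2 + 2 * (Real.cos r - Real.cos θ) * Real.cos θ| ≤ 6 := by
  have hcos : |2 * (Real.cos r - Real.cos θ) * Real.cos θ| ≤ 4 := by
    rw [abs_mul, abs_mul, abs_two]
    nlinarith [mul_le_mul (abs_cos_sub_cos_le_two r θ) (Real.abs_cos_le_one θ) (abs_nonneg _)
      zero_le_two]
  have hsin : |2 * Real.sin θ ^ 2| ≤ 2 := by
    rw [abs_of_nonneg (by positivity)]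
    linarith [Real.sin_sq_le_one θ]
  linarith [abs_add_le (2 * Real.sin θ ^ 2) (2 * (Real.cos r - Real.cos θ) * Real.cos θ)]

end Weight

section Bounds

variable {r U : ℝ}

theorem exp_mul_I_sub_one_ne_zero_of_mem_Icc (hr : 0 < r) {θ : ℝ}
    (hθ : θ ∈ Icc r (2 * Real.pi - r)) : exp (θ * I) - 1 ≠ 0 :=
  exp_mul_I_sub_one_ne_zero (hr.trans_le hθ.1) (by linarith [hθ.2])

theorem continuousOn_inv_exp_sub_one (hr : 0 < r) :
    ContinuousOn (fun θ : ℝ => (exp (θ * I) - 1)⁻¹) (Icc r (2 * Real.pi - r)) :=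
  ContinuousOn.inv₀ (by fun_prop) fun _ => exp_mul_I_sub_one_ne_zero_of_mem_Icc hr

theorem norm_natCast_mul_pow_add_pow_le {u : ℂ} (hU : 1 ≤ U) (hu : ‖u‖ ≤ U) (k : ℕ) :
    ‖-I * k * (u ^ k + u ^ (k + 1))‖ ≤ 2 * k * U ^ (k + 1) := by
  have hpow : ∀ j ≤ k + 1, ‖u ^ j‖ ≤ U ^ (k + 1) := fun j hj => by
    rw [norm_pow]
    exact (pow_le_pow_left₀ (norm_nonneg _) hu j).trans (pow_le_pow_right₀ hU hj)
  have hadd : ‖u ^ k + u ^ (k + 1)‖ ≤ 2 * U ^ (k + 1) := by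
    linarith [norm_add_le (u ^ k) (u ^ (k + 1)), hpow k k.le_succ, hpow (k + 1) le_rfl]
  calc ‖-I * k * (u ^ k + u ^ (k + 1))‖ = k * ‖u ^ k + u ^ (k + 1)‖ := by simp
    _ ≤ k * (2 * U ^ (k + 1)) := by gcongr
    _ = 2 * k * U ^ (k + 1) := by ring

theorem norm_mul_pow_second_deriv_le {W W₁ W₂ u v : ℂ} {k : ℕ} (hU : 1 ≤ U) (hW : ‖W‖ ≤ 4)
    (hW₁ : ‖W₁‖ ≤ 4) (hW₂ : ‖W₂‖ ≤ 6) (hu : ‖u‖ ≤ U) (hv : v = -I * k * (u ^ k + u ^ (k + 1))) :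
    ‖(W₂ * u ^ k + W₁ * v) + (W₁ * v + W * (-I * k * (v + -I * ↑(k + 1) *
      (u ^ (k + 1) + u ^ (k + 1 + 1)))))‖ ≤ 6 * U ^ k + 16 * k * U ^ (k + 1) +
      16 * k * (k + 1) * U ^ (k + 2) := by
  set v' : ℂ := -I * ↑(k + 1) * (u ^ (k + 1) + u ^ (k + 1 + 1))
  have hvn : ‖v‖ ≤ 2 * k * U ^ (k + 1) := hv ▸ norm_natCast_mul_pow_add_pow_le hU hu k
  have hvn' : ‖v'‖ ≤ 2 * (k + 1) * U ^ (k + 2) := by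
    exact_mod_cast norm_natCast_mul_pow_add_pow_le hU hu (k + 1)
  have hvv : ‖v + v'‖ ≤ 4 * (k + 1) * U ^ (k + 2) := by
    have : 2 * (k : ℝ) * U ^ (k + 1) ≤ 2 * (k + 1) * U ^ (k + 2) := by
      have := pow_le_pow_right₀ hU (Nat.le_succ (k + 1))
      gcongr
      linarith
    linarith [norm_add_le v v']
  have h₂ : ‖W₂ * u ^ k‖ ≤ 6 * U ^ k := by
    rw [norm_mul, norm_pow]
    gcongr
  have h₁ : ‖W₁ * v‖ ≤ 4 * (2 * k * U ^ (k + 1)) := by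
    rw [norm_mul]
    gcongr
  have h₀ : ‖W * (-I * k * (v + v'))‖ ≤ 4 * (k * (4 * (k + 1) * U ^ (k + 2))) := by
    simp only [norm_mul, norm_neg, norm_I, one_mul, Complex.norm_natCast]
    gcongr
  linarith [norm_add₄_le (a := W₂ * u ^ k) (b := W₁ * v) (c := W₁ * v)
    (d := W * (-I * k * (v + v'))), congrArg norm (add_assoc (W₂ * u ^ k + W₁ * v) (W₁ * v)
      (W * (-I * k * (v + v'))))]

theorem norm_kernelCoeff_le_of_norm_inv_le (hr : 0 < r) (hrπ : r ≤ Real.pi) (hU₁ : 1 ≤ U)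
    (hU : ∀ θ ∈ Icc r (2 * Real.pi - r), ‖(exp (θ * I) - 1)⁻¹‖ ≤ U) (k : ℕ) (l : ℤ) :
    ‖kernelCoeff r k l‖ ≤ 4 * Real.pi * (6 * U ^ k + 16 * k * U ^ (k + 1) +
      16 * k * (k + 1) * U ^ (k + 2)) * (1 / (1 + (l : ℝ) ^ 2)) := by
  set M := 6 * U ^ k + 16 * k * U ^ (k + 1) + 16 * k * (k + 1) * U ^ (k + 2) with hM
  have : 0 < U := one_pos.trans_le hU₁
  have hu := continuousOn_inv_exp_sub_one hr
  have hpow : ∀ k : ℕ, ∀ θ ∈ Icc r (2 * Real.pi - r), HasDerivAt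
      (fun θ : ℝ => (exp (θ * I) - 1)⁻¹ ^ k) (-I * k * ((exp (θ * I) - 1)⁻¹ ^ k +
        (exp (θ * I) - 1)⁻¹ ^ (k + 1))) θ := fun k θ hθ =>
    hasDerivAt_inv_exp_sub_one_pow (exp_mul_I_sub_one_ne_zero_of_mem_Icc hr hθ) k
  have hW := fun θ => (hasDerivAt_cos_sub_cos_sq r θ).ofReal_comp
  have hW₁ := fun θ => (hasDerivAt_cos_sub_cos_mul_sin r θ).ofReal_comp
  have hdecay := norm_integral_mul_exp_le_div_sq (M := M) (by linarith)
    (fun θ hθ => (hW θ).fun_mul (hpow k θ hθ))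
    (fun θ hθ => ((hW₁ θ).fun_mul (hpow k θ hθ)).fun_add
      ((hW θ).fun_mul (((hpow k θ hθ).fun_add (hpow (k + 1) θ hθ)).const_mul (-I * k))))
    (by fun_prop) (by simp) (by simp) (by simp) (by simp) (fun θ hθ => ?_)
    (fun θ hθ => norm_mul_pow_second_deriv_le hU₁
      ((norm_real _).trans_le (abs_cos_sub_cos_sq_le r θ))
      ((norm_real _).trans_le (abs_cos_sub_cos_mul_sin_le r θ))
      ((norm_real _).trans_le (abs_sin_sq_add_cos_sub_cos_mul_cos_le r θ))
      (hU θ hθ) rfl) l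
  · refine hdecay.trans ?_
    rw [mul_one_div]
    have hM₀ : 0 ≤ M := by positivity
    exact div_le_div_of_nonneg_right (by nlinarith) (by positivity)
  · calc _ ≤ 4 * U ^ k := by
          rw [norm_mul, norm_pow]
          gcongr
          exacts [(norm_real _).trans_le (abs_cos_sub_cos_sq_le r θ), hU θ hθ]
      _ ≤ M := by
          rw [hM, add_assoc]
          exact le_add_of_le_of_nonneg (by gcongr; norm_num) (by positivity)

theorem exists_norm_inv_exp_sub_one_le (hr : 0 < r) :
    ∃ U : ℝ, 1 ≤ U ∧ ∀ θ ∈ Icc r (2 * Real.pi - r), ‖(exp (θ * I) - 1)⁻¹‖ ≤ U := by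
  obtain ⟨U, hU⟩ := isCompact_Icc.exists_bound_of_continuousOn (continuousOn_inv_exp_sub_one hr)
  exact ⟨max 1 U, le_max_left _ _, fun θ hθ => (hU θ hθ).trans (le_max_right _ _)⟩

theorem exists_norm_kernelCoeff_le_mul_pow (hr : 0 < r) (hrπ : r ≤ Real.pi) :
    ∃ C U : ℝ, 0 < C ∧ 1 ≤ U ∧
      ∀ k l, ‖kernelCoeff r k l‖ ≤ C * U ^ k * (1 / (1 + (l : ℝ) ^ 2)) := by
  obtain ⟨U, hU₁, hU⟩ := exists_norm_inv_exp_sub_one_le hr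
  have : 0 < U := one_pos.trans_le hU₁
  refine ⟨4 * Real.pi * (38 * U ^ 2), 4 * U, by positivity, by linarith, fun k l => ?_⟩
  refine (norm_kernelCoeff_le_of_norm_inv_le hr hrπ hU₁ hU k l).trans ?_
  refine mul_le_mul_of_nonneg_right ?_ (by positivity)
  rw [mul_assoc (4 * Real.pi)]
  gcongr 4 * Real.pi * ?_
  have hk : ((k : ℝ) + 1) ^ 2 ≤ 4 ^ k := by
    have : (k : ℝ) + 1 ≤ 2 ^ k := by exact_mod_cast k.lt_two_pow_self
    calc ((k : ℝ) + 1) ^ 2 ≤ (2 ^ k) ^ 2 := by gcongr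
      _ = 4 ^ k := by rw [← pow_mul, mul_comm, pow_mul]; norm_num
  calc 6 * U ^ k + 16 * k * U ^ (k + 1) + 16 * k * (k + 1) * U ^ (k + 2)
      ≤ 6 * U ^ (k + 2) + 16 * k * U ^ (k + 2) + 16 * k * (k + 1) * U ^ (k + 2) := by
        gcongr <;> first | exact hU₁ | omega
    _ ≤ 38 * ((k : ℝ) + 1) ^ 2 * U ^ (k + 2) := by
        nlinarith [show 0 ≤ (32 + 44 * (k : ℝ) + 22 * k ^ 2) * U ^ (k + 2) by positivity]
    _ ≤ 38 * 4 ^ k * U ^ (k + 2) := by gcongr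
    _ = 38 * U ^ 2 * (4 * U) ^ k := by rw [mul_pow]; ring

theorem norm_kernelCoeff_zero_le (hr : 0 < r) (hrπ : r ≤ Real.pi) (l : ℤ) :
    ‖kernelCoeff r 0 l‖ ≤ 24 * Real.pi * (1 / (1 + (l : ℝ) ^ 2)) := by
  obtain ⟨U, hU₁, hU⟩ := exists_norm_inv_exp_sub_one_le hr
  exact (norm_kernelCoeff_le_of_norm_inv_le hr hrπ hU₁ hU 0 l).trans_eq
    (by rw [pow_zero, Nat.cast_zero]; ring)

theorem kernelCoeff_succ_sub (hr : 0 < r) (hrπ : r ≤ Real.pi) (k : ℕ) (l : ℤ) :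
    kernelCoeff r (k + 1) (l - 1) - kernelCoeff r (k + 1) l = kernelCoeff r k l := by
  have hIcc : uIcc r (2 * Real.pi - r) = Icc r (2 * Real.pi - r) := uIcc_of_le (by linarith)
  have hu := continuousOn_inv_exp_sub_one hr
  rw [← hIcc] at hu
  unfold kernelCoeff kernelSymbol
  rw [← intervalIntegral.integral_sub (ContinuousOn.intervalIntegrable (by fun_prop))
    (ContinuousOn.intervalIntegrable (by fun_prop))]
  refine intervalIntegral.integral_congr fun θ hθ => ?_
  have hinv := inv_mul_cancel₀ (exp_mul_I_sub_one_ne_zero_of_mem_Icc hr (hIcc ▸ hθ))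
  have hshift : exp (-(((l - 1 : ℤ) : ℂ) * θ * I)) = exp (-(l * θ * I)) * exp (θ * I) := by
    rw [← exp_add]
    congr 1
    push_cast
    ring
  simp only [hshift, pow_succ _ k]
  linear_combination (((Real.cos r - Real.cos θ) ^ 2 : ℝ) : ℂ) * (exp (θ * I) - 1)⁻¹ ^ k *
    exp (-(l * θ * I)) * hinv

end Bounds

section Zero

theorem tendsto_kernelCoeff_zero (l : ℤ) :
    Tendsto (fun r => kernelCoeff r 0 l) (𝓝[>] 0) (𝓝 (kernelCoeff 0 0 l)) := by
  let f : ℝ → ℝ → ℂ := fun r θ =>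
    (((Real.cos r - Real.cos θ) ^ 2 : ℝ) : ℂ) * exp (-(l * θ * I))
  have hf : Continuous (uncurry f) := by
    simp only [uncurry_def, f]
    fun_prop
  have hi : ∀ r a b, IntervalIntegrable (f r) MeasureTheory.volume a b := fun r a b =>
    (hf.comp (Continuous.prodMk_right r)).intervalIntegrable a b
  have hprim {s : ℝ → ℝ} (hs : Continuous s) : Continuous fun r => ∫ θ in 0..s r, f r θ :=
    intervalIntegral.continuous_parametric_intervalIntegral_of_continuous hf hs
  have h : Continuous fun r => kernelCoeff r 0 l := by
    refine ((hprim (s := fun r => 2 * Real.pi - r) (by fun_prop)).sub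
      (hprim continuous_id)).congr fun r => ?_
    simp only [Pi.sub_apply]
    rw [intervalIntegral.integral_interval_sub_left (hi _ _ _) (hi _ _ _)]
    simp [kernelCoeff, kernelSymbol, f]
  exact (h.tendsto 0).mono_left nhdsWithin_le_nhds

theorem integral_exp_int_mul_I (j : ℤ) :
    ∫ θ in (0 : ℝ)..(2 * Real.pi), exp (j * I * θ) = if j = 0 then (2 * Real.pi : ℂ) else 0 := by
  split_ifs with hj
  · simp [hj]
  · have hc : (j : ℂ) * I ≠ 0 := mul_ne_zero (by exact_mod_cast hj) I_ne_zero
    have hperiod : exp (j * I * ((2 * Real.pi : ℝ) : ℂ)) = 1 :=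
      exp_eq_one_iff.2 ⟨j, by push_cast; ring⟩
    rw [integral_exp_mul_complex hc, hperiod]
    simp

theorem cos_sub_one_sq_eq (θ : ℝ) :
    ((1 - Real.cos θ : ℝ) : ℂ) ^ 2 = exp (-(2 * θ * I)) * (exp (θ * I) - 1) ^ 4 / 4 := by
  have hcos : Complex.cos θ = (exp (θ * I) + (exp (θ * I))⁻¹) / 2 := by
    rw [← exp_neg, Complex.cos, neg_mul]
  have hexp : exp (-(2 * θ * I)) = (exp (θ * I))⁻¹ ^ 2 := by
    rw [← exp_neg, ← exp_nat_mul]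
    congr 1
    push_cast
    ring
  have hne : exp (θ * I) ≠ 0 := exp_ne_zero _
  push_cast
  rw [hcos, hexp]
  field_simp
  ring

theorem kernelCoeff_zero_zero (l : ℤ) :
    kernelCoeff 0 0 l = Real.pi / 2 * ∑ j ∈ Finset.range 5,
      (((-1) ^ (4 - j) * (4 : ℕ).choose j : ℤ) : ℂ) * if (j : ℤ) - 2 = l then 1 else 0 := by
  have hsymbol : ∀ θ : ℝ, kernelSymbol 0 0 θ * exp (-(l * θ * I)) = 1 / 4 *
      ∑ j ∈ Finset.range 5, (((-1) ^ (4 - j) * (4 : ℕ).choose j : ℤ) : ℂ) *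
        exp ((j - 2 - l : ℤ) * I * θ) := by
    intro θ
    simp only [kernelSymbol, pow_zero, mul_one, Real.cos_zero, ofReal_pow, cos_sub_one_sq_eq]
    rw [sub_eq_add_neg, add_pow, Finset.mul_sum, Finset.sum_div, Finset.sum_mul, Finset.mul_sum]
    refine Finset.sum_congr rfl fun j _ => ?_
    have hexp : exp ((j - 2 - l : ℤ) * I * θ) =
        exp (-(2 * θ * I)) * exp (θ * I) ^ j * exp (-(l * θ * I)) := by
      rw [← exp_nat_mul, ← exp_add, ← exp_add]
      congr 1
      push_cast
      ring
    rw [hexp]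
    push_cast
    ring
  simp only [kernelCoeff, hsymbol, sub_zero]
  rw [intervalIntegral.integral_const_mul, intervalIntegral.integral_finsetSum fun j _ =>
    Continuous.intervalIntegrable (by fun_prop) _ _, Finset.mul_sum, Finset.mul_sum]
  refine Finset.sum_congr rfl fun j _ => ?_
  rw [intervalIntegral.integral_const_mul, integral_exp_int_mul_I]
  simp only [sub_eq_zero]
  split_ifs <;> ring

end Zero

end FourierKernel

section InnerRegion

variable {E : Type*} [NormedAddCommGroup E] [NormedSpace ℂ E] {p a : E} {ℓ : E →L[ℂ] ℂ} {C : ℝ}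

/-- The region `C‖z - p‖² < -Re ℓ(z - p)`, internally tangent at `p` to the real hyperplane
`Re ℓ(z - p) = 0`. For `ℓ a = -1` the half-planes `y ↦ p + y⁻¹a`, `Re y > C‖a‖²`, fill it. -/
def innerRegion (p : E) (ℓ : E →L[ℂ] ℂ) (C : ℝ) : Set E :=
  {z | C * ‖z - p‖ ^ 2 < (-ℓ (z - p)).re}

theorem isOpen_innerRegion (p : E) (ℓ : E →L[ℂ] ℂ) (C : ℝ) : IsOpen (innerRegion p ℓ C) :=
  isOpen_lt (by fun_prop) (by fun_prop)

theorem add_inv_smul_mem_innerRegion (hC : 0 ≤ C) (ha : ℓ a = -1) {y : ℂ}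
    (hy : C * ‖a‖ ^ 2 < y.re) : p + y⁻¹ • a ∈ innerRegion p ℓ C := by
  have hy₀ : 0 < y.re := lt_of_le_of_lt (by positivity) hy
  have hn : 0 < normSq y := normSq_pos.2 fun h => by simp [h] at hy₀
  simp only [innerRegion, mem_ofPred_eq, add_sub_cancel_left, map_smul, ha, smul_eq_mul, mul_neg,
    mul_one, neg_neg, inv_re, norm_smul, norm_inv, mul_pow, inv_pow, ← normSq_eq_norm_sq]
  rw [lt_div_iff₀ hn]
  calc C * ((normSq y)⁻¹ * ‖a‖ ^ 2) * normSq y = C * ‖a‖ ^ 2 := by field_simp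
    _ < y.re := hy

theorem exists_eq_add_inv_smul_of_mem_innerRegion (hC : 0 ≤ C) {z : E}
    (hz : z ∈ innerRegion p ℓ C) :
    ∃ (a : E) (y : ℂ), ℓ a = -1 ∧ C * ‖a‖ ^ 2 < y.re ∧ y⁻¹ = -ℓ (z - p) ∧ z = p + y⁻¹ • a := by
  have hz' : C * ‖z - p‖ ^ 2 < (-ℓ (z - p)).re := hz
  set x := -ℓ (z - p) with hx
  have hx₀ : 0 < x.re := lt_of_le_of_lt (by positivity) hz'
  have hxne : x ≠ 0 := fun h => by simp [h] at hx₀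
  have hn : 0 < normSq x := normSq_pos.2 hxne
  refine ⟨x⁻¹ • (z - p), x⁻¹, ?_, ?_, inv_inv x, ?_⟩
  · rw [map_smul, ← neg_neg (ℓ (z - p)), ← hx, smul_eq_mul, mul_neg, inv_mul_cancel₀ hxne]
  · rw [norm_smul, norm_inv, mul_pow, inv_pow, ← normSq_eq_norm_sq, inv_re, lt_div_iff₀ hn]
    calc C * ((normSq x)⁻¹ * ‖z - p‖ ^ 2) * normSq x = C * ‖z - p‖ ^ 2 := by field_simp
      _ < x.re := hz'
  · rw [inv_inv, smul_smul, mul_inv_cancel₀ hxne, one_smul, add_sub_cancel]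

theorem exists_ball_subset_innerRegion (p : E) (hC : 0 ≤ C) (ha : ℓ a = -1) :
    ∃ c > 0, ∃ t₀ > 0, ∀ t : ℝ, 0 < t → t < t₀ →
      ball (p + (t : ℂ) • a) (c * t) ⊆ innerRegion p ℓ C := by
  set c : ℝ := 1 / (2 * (‖ℓ‖ + 1)) with hc
  have hc₀ : 0 < c := by positivity
  refine ⟨c, hc₀, 1 / (2 * (C + 1) * (‖a‖ + c) ^ 2), by positivity, fun t ht ht₀ z hz => ?_⟩
  obtain ⟨h, rfl⟩ : ∃ h, z = p + ((t : ℂ) • a + h) := ⟨z - p - (t : ℂ) • a, by abel⟩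
  have hh : ‖h‖ < c * t := by
    rwa [mem_ball, dist_eq_norm,
      show p + ((t : ℂ) • a + h) - (p + (t : ℂ) • a) = h by abel] at hz
  have hℓ : (ℓ h).re ≤ t / 2 :=
    calc (ℓ h).re ≤ ‖ℓ h‖ := re_le_norm _
      _ ≤ ‖ℓ‖ * ‖h‖ := ℓ.le_opNorm h
      _ ≤ (‖ℓ‖ + 1) * (c * t) := by gcongr; linarith
      _ = t / 2 := by rw [hc]; field_simp
  have hnorm : ‖(t : ℂ) • a + h‖ ≤ (‖a‖ + c) * t := by
    refine (norm_add_le _ _).trans ?_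
    rw [norm_smul, Complex.norm_real, Real.norm_of_nonneg ht.le]
    linarith
  have hquad : C * ‖(t : ℂ) • a + h‖ ^ 2 < t / 2 :=
    calc C * ‖(t : ℂ) • a + h‖ ^ 2 ≤ (C + 1) * ((‖a‖ + c) * t) ^ 2 := by gcongr; linarith
      _ = (C + 1) * (‖a‖ + c) ^ 2 * t * t := by ring
      _ < t / 2 := by
        rw [lt_div_iff₀ (by positivity)] at ht₀
        nlinarith
  simp only [innerRegion, mem_ofPred_eq, add_sub_cancel_left, map_add, map_smul, ha, smul_eq_mul,
    mul_neg, mul_one, neg_add, neg_neg, add_re, neg_re, ofReal_re]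
  linarith

end InnerRegion

section Decay

theorem eqOn_zero_of_forall_isBigO_exp_neg {G : Type*} [NormedAddCommGroup G] [NormedSpace ℂ G]
    [CompleteSpace G] {f : ℂ → G} {K : ℝ} (hf : DiffContOnCl ℂ f {z | 0 < z.re})
    (hK : ∀ z : ℂ, 0 ≤ z.re → ‖f z‖ ≤ K)
    (hdecay : ∀ n : ℕ, (fun x : ℝ => f x) =O[atTop] fun x : ℝ => Real.exp (-(n * x))) :
    EqOn f 0 {z | 0 ≤ z.re} := by
  refine PhragmenLindelof.eq_zero_on_right_half_plane_of_superexponential_decay hf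
    ⟨1, one_lt_two, 0, ?_⟩ (fun n => ?_) ⟨K, fun x => hK _ (by simp)⟩
  · refine Asymptotics.IsBigO.of_bound K (eventually_inf_principal.2 (.of_forall fun z hz => ?_))
    simpa using hK z (le_of_lt hz)
  · obtain ⟨M, hM⟩ := (hdecay (n + 1)).bound
    have hlim : Tendsto (fun x => M * Real.exp (-x)) atTop (𝓝 0) := by
      simpa using Real.tendsto_exp_neg_atTop_nhds_zero.const_mul M
    refine squeeze_zero' (.of_forall fun x => by positivity) ?_ hlim
    filter_upwards [hM] with x hx
    rw [Real.norm_of_nonneg (Real.exp_pos _).le] at hx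
    calc Real.exp x ^ n * ‖f x‖ ≤ Real.exp x ^ n * (M * Real.exp (-(↑(n + 1) * x))) := by gcongr
      _ = M * (Real.exp (n * x) * Real.exp (-(↑(n + 1) * x))) := by rw [Real.exp_nat_mul]; ring
      _ = M * Real.exp (-x) := by rw [← Real.exp_add]; push_cast; ring_nf

variable {E G : Type*} [NormedAddCommGroup E] [NormedSpace ℂ E] [NormedAddCommGroup G]
  [NormedSpace ℂ G] {B : ℕ → E → G} {F : E → E}

theorem norm_le_of_difference_tower {w : E} {r δ : ℝ} (hr : 0 < r) (hδ : δ < r) (k : ℕ) {M : ℝ}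
    (hB : ∀ j, DifferentiableOn ℂ (B j) (ball w ((k + 1) * r)))
    (hdiff : ∀ j, ∀ z ∈ ball w ((k + 1) * r), B (j + 1) (F z) - B (j + 1) z = B j z)
    (hF : ∀ z ∈ ball w ((k + 1) * r), ‖F z - z‖ ≤ δ)
    (hM : ∀ z ∈ ball w ((k + 1) * r), ‖B k z‖ ≤ M) :
    ‖B 0 w‖ ≤ M * (2 * δ / r) ^ k := by
  induction k generalizing M with
  | zero => simpa using hM w (mem_ball_self (by simpa using hr))
  | succ k ih =>
    push_cast at hB hdiff hF hM
    have hsub : ball w ((k + 1) * r) ⊆ ball w ((k + 1 + 1) * r) :=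
      ball_subset_ball (by linarith)
    refine (ih (M := M * (2 * δ / r)) (fun j => (hB j).mono hsub)
      (fun j z hz => hdiff j z (hsub hz)) (fun z hz => hF z (hsub hz)) fun z hz => ?_).trans_eq
      (by ring)
    have hzr : ball z r ⊆ ball w ((k + 1 + 1) * r) :=
      ball_subset_ball' (by linarith [mem_ball.1 hz])
    have hFz : F z ∈ ball z r := mem_ball_iff_norm.2 ((hF z (hsub hz)).trans_lt hδ)
    have hM₀ : 0 ≤ M := (norm_nonneg _).trans (hM z (hsub hz))
    calc ‖B k z‖ = ‖B (k + 1) (F z) - B (k + 1) z‖ := by rw [hdiff k z (hsub hz)]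
      _ ≤ 2 * M / r * ‖F z - z‖ := norm_sub_le_of_forall_norm_le ((hB _).mono hzr)
          (fun y hy => hM y (hzr hy)) hFz
      _ ≤ 2 * M / r * δ := by gcongr; exact hF z (hsub hz)
      _ = M * (2 * δ / r) := by ring

theorem norm_le_mul_exp_of_difference_tower {w : E} {R δ K U : ℝ} {k : ℕ} (hR : 0 < R)
    (hδ : 0 ≤ δ) (hU : 1 ≤ U) (hk : 2 * (k + 1) * δ * U ≤ Real.exp (-1) * R)
    (hB : ∀ j, DifferentiableOn ℂ (B j) (ball w R))
    (hdiff : ∀ j, ∀ z ∈ ball w R, B (j + 1) (F z) - B (j + 1) z = B j z)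
    (hF : ∀ z ∈ ball w R, ‖F z - z‖ ≤ δ) (hK : ∀ j, ∀ z ∈ ball w R, ‖B j z‖ ≤ K * U ^ j) :
    ‖B 0 w‖ ≤ K * Real.exp (-k) := by
  have hK₀ : 0 ≤ K := by simpa using (norm_nonneg _).trans (hK 0 w (mem_ball_self hR))
  have hR' : ((k : ℝ) + 1) * (R / (k + 1)) = R := by field_simp
  have hδR : δ < R / (k + 1) := by
    have : 2 * (k + 1) * δ ≤ 2 * (k + 1) * δ * U := le_mul_of_one_le_right (by positivity) hU
    have : Real.exp (-1) * R < R := mul_lt_of_lt_one_left hR (by simp)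
    rw [lt_div_iff₀ (by positivity)]
    nlinarith [show 0 ≤ δ * ((k : ℝ) + 1) by positivity]
  have hq : U * (2 * δ / (R / (k + 1))) ≤ Real.exp (-1) := by
    rw [div_div_eq_mul_div, mul_div_assoc', div_le_iff₀ hR]
    linarith
  have htower := norm_le_of_difference_tower (M := K * U ^ k) (w := w) (by positivity) hδR k
    (by rwa [hR']) (by rwa [hR']) (by rwa [hR']) (by rw [hR']; exact hK k)
  calc ‖B 0 w‖ ≤ K * U ^ k * (2 * δ / (R / (k + 1))) ^ k := htower
    _ = K * (U * (2 * δ / (R / (k + 1)))) ^ k := by rw [mul_pow U, mul_assoc]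
    _ ≤ K * Real.exp (-1) ^ k := by gcongr
    _ = K * Real.exp (-k) := by rw [← Real.exp_nat_mul]; ring_nf

variable {Ω : Set E} {p : E} {ℓ : E →L[ℂ] ℂ} {C K U : ℝ}

theorem isBigO_exp_neg_div_of_difference_tower (hC : 0 ≤ C) (hV : innerRegion p ℓ C ⊆ Ω)
    {a : E} (ha : ℓ a = -1) (hflat : (fun z => F z - z) =o[𝓝[Ω] p] fun z => ‖z - p‖ ^ 2)
    (hB : ∀ j, DifferentiableOn ℂ (B j) Ω)
    (hdiff : ∀ j, ∀ z ∈ Ω, B (j + 1) (F z) - B (j + 1) z = B j z) (hU : 1 ≤ U)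
    (hK : ∀ j, ∀ z ∈ Ω, ‖B j z‖ ≤ K * U ^ j) {L : ℝ} (hL : 0 < L) :
    (fun t : ℝ => B 0 (p + (t : ℂ) • a)) =O[𝓝[>] 0] fun t => Real.exp (-(L / t)) := by
  obtain ⟨c, hc, t₀, ht₀, hball⟩ := exists_ball_subset_innerRegion p hC ha
  set A : ℝ := ‖a‖ + c
  have hA₀ : 0 < A := by positivity
  have : 0 < U := by linarith
  set ε : ℝ := Real.exp (-1) * c / (4 * L * A ^ 2 * U) with hε
  obtain ⟨δ, hδ, hFδ⟩ := Metric.mem_nhdsWithin_iff.1 (hflat.bound (show 0 < ε by positivity))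
  refine Asymptotics.IsBigO.of_bound (K * Real.exp 1) ?_
  filter_upwards [Ioo_mem_nhdsGT ht₀, Ioo_mem_nhdsGT (div_pos hδ hA₀), Ioo_mem_nhdsGT hL]
    with t ⟨ht, htt₀⟩ ⟨_, htδ⟩ ⟨_, htL⟩
  have hsub : ball (p + (t : ℂ) • a) (c * t) ⊆ Ω := (hball t ht htt₀).trans hV
  have hdist : ∀ z ∈ ball (p + (t : ℂ) • a) (c * t), ‖z - p‖ ≤ A * t := by
    intro z hz
    rw [mem_ball_iff_norm] at hz
    have hnorm := norm_add_le (z - (p + (t : ℂ) • a)) ((t : ℂ) • a)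
    rw [norm_smul, Complex.norm_real, Real.norm_of_nonneg ht.le,
      show z - (p + (t : ℂ) • a) + (t : ℂ) • a = z - p by abel] at hnorm
    linarith
  have hF : ∀ z ∈ ball (p + (t : ℂ) • a) (c * t), ‖F z - z‖ ≤ ε * (A * t) ^ 2 := by
    intro z hz
    have hzδ : z ∈ ball p δ :=
      mem_ball_iff_norm.2 ((hdist z hz).trans_lt (by rwa [← lt_div_iff₀' hA₀]))
    refine (hFδ ⟨hzδ, hsub hz⟩).trans ?_
    rw [norm_pow, norm_norm]
    gcongr
    exact hdist z hz
  have hfloor : (⌊L / t⌋₊ : ℝ) + 1 ≤ 2 * (L / t) := by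
    linarith [Nat.floor_le (show 0 ≤ L / t by positivity), (one_lt_div ht).2 htL]
  have hB₀ := norm_le_mul_exp_of_difference_tower (k := ⌊L / t⌋₊) (mul_pos hc ht) (by positivity)
    hU ?_ (fun j => (hB j).mono hsub) (fun j z hz => hdiff j z (hsub hz)) hF
    (fun j z hz => hK j z (hsub hz))
  · have hK₀ : 0 ≤ K := nonneg_of_mul_nonneg_left ((norm_nonneg _).trans hB₀) (Real.exp_pos _)
    rw [Real.norm_of_nonneg (Real.exp_pos _).le, mul_assoc, ← Real.exp_add]
    refine hB₀.trans ?_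
    gcongr
    linarith [Nat.lt_floor_add_one (L / t)]
  · calc 2 * (⌊L / t⌋₊ + 1) * (ε * (A * t) ^ 2) * U
        ≤ 2 * (2 * (L / t)) * (ε * (A * t) ^ 2) * U := by gcongr
      _ = Real.exp (-1) * (c * t) := by rw [hε]; field_simp; norm_num

theorem eqOn_zero_innerRegion_of_difference_tower [CompleteSpace G] (hC : 0 ≤ C)
    (hV : innerRegion p ℓ C ⊆ Ω) (hflat : (fun z => F z - z) =o[𝓝[Ω] p] fun z => ‖z - p‖ ^ 2)
    (hB : ∀ j, DifferentiableOn ℂ (B j) Ω)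
    (hdiff : ∀ j, ∀ z ∈ Ω, B (j + 1) (F z) - B (j + 1) z = B j z) (hU : 1 ≤ U)
    (hK : ∀ j, ∀ z ∈ Ω, ‖B j z‖ ≤ K * U ^ j) : EqOn (B 0) 0 (innerRegion p ℓ C) := by
  intro z hz
  obtain ⟨a, y, ha, hay, -, rfl⟩ := exists_eq_add_inv_smul_of_mem_innerRegion hC hz
  obtain ⟨Y, hYa, hYy⟩ := exists_between hay
  have hY : 0 < Y := lt_of_le_of_lt (by positivity) hYa
  have hmem : ∀ s : ℂ, 0 ≤ s.re → p + (s + Y)⁻¹ • a ∈ Ω := fun s hs =>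
    hV (add_inv_smul_mem_innerRegion hC ha (by simpa using by linarith))
  have hne : ∀ s : ℂ, 0 ≤ s.re → s + Y ≠ 0 := fun s hs h => by
    have : s.re + Y = 0 := by simpa using congrArg Complex.re h
    linarith
  have hdiffCont : DiffContOnCl ℂ (fun s : ℂ => B 0 (p + (s + Y)⁻¹ • a)) {s | 0 < s.re} := by
    refine DifferentiableOn.diffContOnCl ?_
    rw [Complex.closure_setOfPred_lt_re]
    refine (hB 0).comp (fun s hs => DifferentiableAt.differentiableWithinAt ?_) hmem
    have := hne s hs
    fun_prop (disch := assumption)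
  have htendsto : Tendsto (fun x : ℝ => (x + Y)⁻¹) atTop (𝓝[>] 0) :=
    tendsto_inv_atTop_nhdsGT_zero.comp (tendsto_atTop_add_const_right _ _ tendsto_id)
  have hzero := eqOn_zero_of_forall_isBigO_exp_neg (K := K) hdiffCont
    (fun s hs => by simpa using hK 0 _ (hmem s hs)) fun n => ?_
  · simpa using hzero (show (y - Y) ∈ {s : ℂ | 0 ≤ s.re} by simpa using hYy.le)
  · have hdecay := (isBigO_exp_neg_div_of_difference_tower hC hV ha hflat hB hdiff hU hK
      (L := n + 1) (by positivity)).comp_tendsto htendsto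
    refine (hdecay.trans (Asymptotics.IsBigO.of_norm_eventuallyLE ?_)).congr_left
      fun x => by simp only [comp_apply, ofReal_inv, ofReal_add]
    filter_upwards [eventually_ge_atTop 0] with x hx
    simp only [comp_apply, div_inv_eq_mul, Real.norm_eq_abs, Real.abs_exp]
    gcongr <;> linarith

end Decay

section TwoSided

section FwdDiff

variable {V : Type*} [NormedAddCommGroup V] {s : ℤ → V}

theorem apply_add_natCast_of_fwdDiff_eq {e : V} (h : ∀ m, fwdDiff 1 s m = e) (m : ℤ) (j : ℕ) :
    s (m + j) = s m + j • e := by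
  induction j with
  | zero => simp
  | succ j ih =>
    have := sub_eq_iff_eq_add'.1 (h (m + j))
    rw [Nat.cast_succ, ← add_assoc, this, ih, succ_nsmul, add_assoc]

variable [NormedSpace ℝ V] {B : ℝ}

theorem eq_zero_of_bounded_of_fwdDiff_eq {e : V} (hB : ∀ m, ‖s m‖ ≤ B)
    (h : ∀ m, fwdDiff 1 s m = e) : e = 0 := by
  by_contra he
  obtain ⟨j, hj⟩ := exists_nat_gt (2 * B / ‖e‖)
  rw [div_lt_iff₀ (norm_pos_iff.2 he)] at hj
  have hnorm := norm_smul (j : ℝ) e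
  rw [Nat.cast_smul_eq_nsmul, ← sub_eq_iff_eq_add'.2 (apply_add_natCast_of_fwdDiff_eq h 0 j),
    Real.norm_natCast] at hnorm
  linarith [norm_sub_le (s (0 + j)) (s 0), hB (0 + j), hB 0]

theorem fwdDiff_eq_zero_of_bounded_of_iterate (hB : ∀ m, ‖s m‖ ≤ B) (n : ℕ)
    (h : (fwdDiff 1)^[n + 1] s = 0) : fwdDiff 1 s = 0 := by
  induction n generalizing s B with
  | zero => exact h
  | succ n ih =>
    have hB' : ∀ m, ‖fwdDiff 1 s m‖ ≤ B + B := fun m => norm_sub_le_of_le (hB _) (hB _)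
    have hconst : ∀ m, fwdDiff 1 s m = fwdDiff 1 s 0 := by
      have hsecond : ∀ m, fwdDiff 1 (fwdDiff 1 s) m = 0 := congrFun (ih hB' h)
      intro m
      obtain ⟨j, rfl | rfl⟩ := m.eq_nat_or_neg
      · simpa using apply_add_natCast_of_fwdDiff_eq hsecond 0 j
      · simpa using (apply_add_natCast_of_fwdDiff_eq hsecond (-j) j).symm
    exact funext fun m => (hconst m).trans (eq_zero_of_bounded_of_fwdDiff_eq hB hconst)

end FwdDiff

variable {G : Type*} [NormedAddCommGroup G] [NormedSpace ℂ G]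

/-- The Fourier multiplier with symbol `kernelSymbol r k`, cut off to `[r, 2π - r]`, applied to the
two-sided sequence `b` and evaluated at the index `0`. -/
def kernelMultiplier (r : ℝ) (k : ℕ) (b : ℤ → G) : G :=
  ∑' l : ℤ, kernelCoeff r k l • b l

theorem norm_kernelCoeff_smul_le {r C B : ℝ} {k : ℕ} {l : ℤ} {b : G}
    (hC : ‖kernelCoeff r k l‖ ≤ C * (1 / (1 + (l : ℝ) ^ 2))) (hb : ‖b‖ ≤ B) :
    ‖kernelCoeff r k l • b‖ ≤ C * B * (1 / (1 + (l : ℝ) ^ 2)) := by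
  rw [norm_smul, mul_right_comm]
  exact mul_le_mul hC hb (norm_nonneg _) ((norm_nonneg _).trans hC)

theorem exists_norm_sum_kernelCoeff_smul_le {r : ℝ} (hr : 0 < r) (hrπ : r ≤ Real.pi) :
    ∃ C U : ℝ, 1 ≤ U ∧ ∀ (k : ℕ) (s : Finset ℤ) {b : ℤ → G} {B : ℝ}, (∀ l, ‖b l‖ ≤ B) →
      ‖∑ l ∈ s, kernelCoeff r k l • b l‖ ≤ C * B * U ^ k := by
  obtain ⟨C, U, hC, hU, hCU⟩ := exists_norm_kernelCoeff_le_mul_pow hr hrπ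
  refine ⟨C * ∑' l : ℤ, 1 / (1 + (l : ℝ) ^ 2), U, hU, fun k s b B hb => ?_⟩
  have hB : 0 ≤ B := (norm_nonneg _).trans (hb 0)
  calc ‖∑ l ∈ s, kernelCoeff r k l • b l‖
      ≤ ∑ l ∈ s, C * U ^ k * B * (1 / (1 + (l : ℝ) ^ 2)) :=
        norm_sum_le_of_le s fun l _ => norm_kernelCoeff_smul_le (hCU k l) (hb l)
    _ ≤ ∑' l : ℤ, C * U ^ k * B * (1 / (1 + (l : ℝ) ^ 2)) :=
        (summable_one_div_one_add_int_sq.mul_left _).sum_le_tsum _ fun l _ => by positivity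
    _ = C * (∑' l : ℤ, 1 / (1 + (l : ℝ) ^ 2)) * B * U ^ k := by rw [tsum_mul_left]; ring

theorem kernelMultiplier_zero_zero (b : ℤ → G) :
    kernelMultiplier 0 0 b = (Real.pi / 2 : ℂ) • (fwdDiff 1)^[4] b (-2) := by
  have hcoeff : ∀ l : ℤ, kernelCoeff 0 0 l • b l = ∑ j ∈ Finset.range 5,
      if l = (j : ℤ) - 2 then ((Real.pi / 2 : ℂ) *
        (((-1) ^ (4 - j) * (4 : ℕ).choose j : ℤ) : ℂ)) • b (j - 2) else 0 := by
    intro l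
    rw [kernelCoeff_zero_zero, Finset.mul_sum, Finset.sum_smul]
    refine Finset.sum_congr rfl fun j _ => ?_
    split_ifs with h₁ h₂ h₂
    · rw [mul_one, h₂]
    · exact absurd h₁.symm h₂
    · exact absurd h₂.symm h₁
    · simp
  rw [kernelMultiplier, tsum_congr hcoeff, Summable.tsum_finsetSum fun j _ =>
    (hasSum_ite_eq _ _).summable, fwdDiff_iter_eq_sum_shift, Finset.smul_sum]
  refine Finset.sum_congr rfl fun j _ => ?_
  rw [tsum_ite_eq, mul_smul, Int.cast_smul_eq_zsmul, nsmul_one, neg_add_eq_sub]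

section Complete

variable [CompleteSpace G] {r : ℝ} {b : ℤ → G} {B : ℝ}

theorem summable_kernelCoeff_smul (hr : 0 < r) (hrπ : r ≤ Real.pi) (k : ℕ)
    (hb : ∀ l, ‖b l‖ ≤ B) : Summable fun l => kernelCoeff r k l • b l := by
  obtain ⟨C, U, -, -, hCU⟩ := exists_norm_kernelCoeff_le_mul_pow hr hrπ
  exact Summable.of_norm_bounded (summable_one_div_one_add_int_sq.mul_left _)
    fun l => norm_kernelCoeff_smul_le (hCU k l) (hb l)

theorem kernelMultiplier_succ_shift_sub (hr : 0 < r) (hrπ : r ≤ Real.pi) (k : ℕ)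
    (hb : ∀ l, ‖b l‖ ≤ B) :
    kernelMultiplier r (k + 1) (fun l => b (l + 1)) - kernelMultiplier r (k + 1) b =
      kernelMultiplier r k b := by
  have hshift : HasSum (fun l => kernelCoeff r (k + 1) (l - 1) • b l)
      (kernelMultiplier r (k + 1) fun l => b (l + 1)) := by
    rw [← (Equiv.addRight (1 : ℤ)).hasSum_iff]
    simpa [comp_def, kernelMultiplier] using
      (summable_kernelCoeff_smul hr hrπ (k + 1) fun l => hb (l + 1)).hasSum
  refine ((hshift.sub (summable_kernelCoeff_smul hr hrπ (k + 1) hb).hasSum).tsum_eq.symm).trans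
    (tsum_congr fun l => ?_)
  rw [← sub_smul, kernelCoeff_succ_sub hr hrπ]

theorem tendsto_kernelMultiplier_zero (hb : ∀ l, ‖b l‖ ≤ B) :
    Tendsto (fun r => kernelMultiplier r 0 b) (𝓝[>] 0) (𝓝 (kernelMultiplier 0 0 b)) := by
  refine tendsto_tsum_of_dominated_convergence
    (summable_one_div_one_add_int_sq.mul_left (24 * Real.pi * B))
    (fun l => (tendsto_kernelCoeff_zero l).smul_const _) ?_
  filter_upwards [Ioc_mem_nhdsGT Real.pi_pos] with r hr l
  exact norm_kernelCoeff_smul_le (norm_kernelCoeff_zero_le hr.1 hr.2 l) (hb l)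

end Complete

section Family

variable {E : Type*} [NormedAddCommGroup E] [NormedSpace ℂ E] [FiniteDimensional ℂ E]
  [FiniteDimensional ℂ G] {Ω : Set E} {F : E → E} {p : E} {ℓ : E →L[ℂ] ℂ} {C B : ℝ}
  {a : ℤ → E → G}

theorem differentiableOn_kernelMultiplier {r : ℝ} (hr : 0 < r) (hrπ : r ≤ Real.pi) (k : ℕ)
    (hΩ : IsOpen Ω) (ha : ∀ m, DifferentiableOn ℂ (a m) Ω) (hB : ∀ m, ∀ z ∈ Ω, ‖a m z‖ ≤ B) :
    DifferentiableOn ℂ (fun z => kernelMultiplier r k fun l => a l z) Ω := by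
  have : CompleteSpace G := FiniteDimensional.complete ℂ G
  obtain ⟨C, U, -, hCU⟩ := exists_norm_sum_kernelCoeff_smul_le (G := G) hr hrπ
  exact differentiableOn_of_tendsto (l := (atTop : Filter (Finset ℤ))) hΩ
    (fun s => DifferentiableOn.fun_sum (u := s) fun l _ => (ha l).const_smul (kernelCoeff r k l))
    (fun s z hz => hCU k s fun l => hB l z hz)
    (fun z hz => (summable_kernelCoeff_smul hr hrπ k fun l => hB l z hz).hasSum)

theorem kernelMultiplier_eq_zero_of_shift {r : ℝ} (hr : 0 < r) (hrπ : r ≤ Real.pi)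
    (hΩ : IsOpen Ω) (hC : 0 ≤ C) (hV : innerRegion p ℓ C ⊆ Ω)
    (hflat : (fun z => F z - z) =o[𝓝[Ω] p] fun z => ‖z - p‖ ^ 2)
    (ha : ∀ m, DifferentiableOn ℂ (a m) Ω) (hB : ∀ m, ∀ z ∈ Ω, ‖a m z‖ ≤ B)
    (hshift : ∀ m, ∀ z ∈ Ω, a m (F z) = a (m + 1) z) {z : E} (hz : z ∈ innerRegion p ℓ C) :
    kernelMultiplier r 0 (fun l => a l z) = 0 := by
  have : CompleteSpace G := FiniteDimensional.complete ℂ G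
  obtain ⟨K, U, hU, hKU⟩ := exists_norm_sum_kernelCoeff_smul_le (G := G) hr hrπ
  refine eqOn_zero_innerRegion_of_difference_tower (F := F)
    (K := K * B) (B := fun k z => kernelMultiplier r k fun l => a l z) hC hV hflat
    (fun k => differentiableOn_kernelMultiplier hr hrπ k hΩ ha hB) (fun k z hz => ?_) hU
    (fun k z hz => ?_) hz
  · simp only [hshift _ z hz]
    exact kernelMultiplier_succ_shift_sub hr hrπ k fun l => hB l z hz
  · exact le_of_tendsto (summable_kernelCoeff_smul hr hrπ k fun l => hB l z hz).hasSum.norm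
      (.of_forall fun s => hKU k s fun l => hB l z hz)

theorem fwdDiff_iterate_four_eq_zero_of_shift (hΩ : IsOpen Ω) (hC : 0 ≤ C)
    (hV : innerRegion p ℓ C ⊆ Ω) (hflat : (fun z => F z - z) =o[𝓝[Ω] p] fun z => ‖z - p‖ ^ 2)
    (ha : ∀ m, DifferentiableOn ℂ (a m) Ω) (hB : ∀ m, ∀ z ∈ Ω, ‖a m z‖ ≤ B)
    (hshift : ∀ m, ∀ z ∈ Ω, a m (F z) = a (m + 1) z) {z : E} (hz : z ∈ innerRegion p ℓ C) :
    (fwdDiff 1)^[4] (fun m => a m z) (-2) = 0 := by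
  have : CompleteSpace G := FiniteDimensional.complete ℂ G
  have hlim := tendsto_kernelMultiplier_zero fun l => hB l z (hV hz)
  have hzero : kernelMultiplier 0 0 (fun m => a m z) = 0 := by
    refine tendsto_nhds_unique hlim (tendsto_const_nhds.congr' ?_)
    filter_upwards [Ioc_mem_nhdsGT Real.pi_pos] with r hr
    exact (kernelMultiplier_eq_zero_of_shift hr.1 hr.2 hΩ hC hV hflat ha hB hshift hz).symm
  rw [kernelMultiplier_zero_zero] at hzero
  exact (smul_eq_zero.1 hzero).resolve_left (by simp [Real.pi_ne_zero])

theorem eqOn_of_bounded_of_shift (hΩ : IsOpen Ω) (hc : IsPreconnected Ω) (hC : 0 ≤ C)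
    (hV : innerRegion p ℓ C ⊆ Ω) {v : E} (hv : ℓ v = -1)
    (hflat : (fun z => F z - z) =o[𝓝[Ω] p] fun z => ‖z - p‖ ^ 2)
    (ha : ∀ m, DifferentiableOn ℂ (a m) Ω) (hB : ∀ m, ∀ z ∈ Ω, ‖a m z‖ ≤ B)
    (hshift : ∀ m, ∀ z ∈ Ω, a m (F z) = a (m + 1) z) : EqOn (a 1) (a 0) Ω := by
  have hfourth : ∀ z ∈ innerRegion p ℓ C, (fwdDiff 1)^[4] (fun m => a m z) = 0 := by
    intro z hz
    funext m
    have h := fwdDiff_iterate_four_eq_zero_of_shift (a := fun l => a (l + (m + 2))) hΩ hC hV hflat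
      (fun l => ha _) (fun l => hB _)
      (fun l z hz => by rw [hshift _ z hz, add_right_comm]) hz
    rw [fwdDiff_iter_eq_sum_shift] at h ⊢
    rw [Pi.zero_apply, ← h]
    refine Finset.sum_congr rfl fun j _ => ?_
    rw [show -2 + j • (1 : ℤ) + (m + 2) = m + j • (1 : ℤ) by ring]
  have heq : ∀ z ∈ innerRegion p ℓ C, a 1 z = a 0 z := fun z hz => by
    have := congrFun (fwdDiff_eq_zero_of_bounded_of_iterate (fun m => hB m z (hV hz)) 3
      (hfourth z hz)) 0
    simpa [fwdDiff, sub_eq_zero] using this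
  obtain ⟨y, hy⟩ := exists_gt (C * ‖v‖ ^ 2)
  have hz : p + (y : ℂ)⁻¹ • v ∈ innerRegion p ℓ C :=
    add_inv_smul_mem_innerRegion hC hv (by simpa using hy)
  refine eqOn_of_eventuallyEq_of_isPreconnected hΩ hc (ha 1) (ha 0) (hV hz) ?_
  filter_upwards [(isOpen_innerRegion p ℓ C).mem_nhds hz] with z hz using heq z hz

end Family

end TwoSided

section Peak

theorem hasDerivAt_comp_add_smul_sub_taylor {E : Type*} [NormedAddCommGroup E] [NormedSpace ℝ E]
    {σ : E → ℝ} {D : E → E →L[ℝ] ℝ} (hσ : ∀ z, HasFDerivAt σ (D z) z) (H : E →L[ℝ] E →L[ℝ] ℝ)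
    (q v : E) (s : ℝ) :
    HasDerivAt (fun s : ℝ => σ (q + s • v) - s * D q v - s ^ 2 / 2 * H v v)
      ((D (q + s • v) - D q - H (s • v)) v) s := by
  have hline : HasDerivAt (fun s : ℝ => q + s • v) v s := by
    simpa using ((hasDerivAt_id s).smul_const v).const_add q
  have hlin := (hasDerivAt_id s).mul_const (D q v)
  have hquad := ((hasDerivAt_pow 2 s).div_const 2).mul_const (H v v)
  refine ((((hσ (q + s • v)).comp_hasDerivAt s hline).sub hlin).sub hquad).congr_deriv ?_
  simp

theorem exists_forall_abs_sub_taylor_le {E : Type*} [NormedAddCommGroup E] [NormedSpace ℝ E]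
    {σ : E → ℝ} {D : E → E →L[ℝ] ℝ} {H : E →L[ℝ] E →L[ℝ] ℝ}
    (hσ : ∀ z, HasFDerivAt σ (D z) z) {p : E} (hD : HasStrictFDerivAt D H p) {ε : ℝ} (hε : 0 < ε) :
    ∃ r > 0, ∀ q ∈ ball p r, ∀ z ∈ ball p r,
      |σ z - σ q - D q (z - q) - 1 / 2 * H (z - q) (z - q)| ≤ ε * ‖z - q‖ ^ 2 := by
  have hstrict := hD.isLittleO.def hε
  rw [nhds_prod_eq, eventually_prod_self_iff'] at hstrict
  obtain ⟨t, ht, hstrict⟩ := hstrict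
  obtain ⟨r, hr, hrt⟩ := Metric.mem_nhds_iff.1 ht
  refine ⟨r, hr, fun q hq z hz => ?_⟩
  set v := z - q with hv
  have hderiv : ∀ s ∈ Ico (0 : ℝ) 1, ‖(D (q + s • v) - D q - H (s • v)) v‖ ≤ ε * ‖v‖ ^ 2 := by
    intro s hs
    have hmem : q + s • v ∈ ball p r :=
      (convex_ball p r).add_smul_sub_mem hq hz ⟨hs.1, hs.2.le⟩
    have hs' := hstrict _ (hrt hmem) _ (hrt hq)
    rw [add_sub_cancel_left] at hs'
    calc ‖(D (q + s • v) - D q - H (s • v)) v‖ ≤ ε * ‖s • v‖ * ‖v‖ :=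
          ContinuousLinearMap.le_of_opNorm_le _ hs' v
      _ = ε * ‖v‖ ^ 2 * s := by rw [norm_smul, Real.norm_of_nonneg hs.1]; ring
      _ ≤ ε * ‖v‖ ^ 2 := mul_le_of_le_one_right (by positivity) hs.2.le
  have hmean := norm_image_sub_le_of_norm_deriv_le_segment_01'
    (fun s _ => (hasDerivAt_comp_add_smul_sub_taylor hσ H q v s).hasDerivWithinAt) hderiv
  simp only [one_smul, one_mul, one_pow, zero_smul, add_zero, zero_mul, ne_eq, OfNat.ofNat_ne_zero,
    not_false_eq_true, zero_pow, zero_div, sub_zero, Real.norm_eq_abs] at hmean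
  rw [hv, add_sub_cancel, ← hv] at hmean
  convert hmean using 2
  ring

theorem exists_pos_le_add_mul_of_isCompact {X : Type*} [TopologicalSpace X] {K : Set X}
    (hK : IsCompact K) {f g : X → ℝ} (hf : Continuous f) (hg : Continuous g) (hg0 : ∀ x, 0 ≤ g x)
    (h : ∀ x ∈ K, g x = 0 → 0 < f x) : ∃ A : ℝ, 0 ≤ A ∧ ∃ c > 0, ∀ x ∈ K, c ≤ f x + A * g x := by
  have hcover : K ⊆ ⋃ m : ℕ, {x | 0 < f x + m * g x} := fun x hx => by
    rw [mem_iUnion]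
    rcases (hg0 x).eq_or_lt with h0 | h0
    · exact ⟨0, by simpa using h x hx h0.symm⟩
    · obtain ⟨m, hm⟩ := exists_nat_gt (-f x / g x)
      rw [div_lt_iff₀ h0] at hm
      exact ⟨m, by simp only [mem_ofPred_eq]; linarith⟩
  have hmono : Monotone fun m : ℕ => {x | 0 < f x + m * g x} := fun m m' hmm x hx =>
    lt_of_lt_of_le (b := f x + m * g x) hx (by have := hg0 x; gcongr)
  obtain ⟨m, hm⟩ := hK.elim_directed_cover _
    (fun m => isOpen_lt continuous_const (by fun_prop)) hcover hmono.directed_le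
  refine ⟨m, by positivity, ?_⟩
  rcases K.eq_empty_or_nonempty with rfl | hne
  · exact ⟨1, one_pos, by simp⟩
  · obtain ⟨x₀, hx₀, hmin⟩ := hK.exists_isMinOn hne (f := fun x => f x + m * g x) (by fun_prop)
    exact ⟨_, hm hx₀, fun x hx => hmin hx⟩

/- The correction `ρ + (A/2)ρ²` leaves the zero set and the differential along it unchanged, and
changes the Hessian at `p` by `A • (dρ ⊗ dρ)`. -/
theorem exists_forall_abs_add_mul_sq_sub_taylor_le {E : Type*} [NormedAddCommGroup E]
    [NormedSpace ℝ E] {ρ : E → ℝ} {p : E} (hρ : ContDiff ℝ 2 ρ) (hp : ρ p = 0) (A : ℝ) {ε : ℝ}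
    (hε : 0 < ε) :
    ∃ r > 0, ∀ q ∈ ball p r, ρ q = 0 → ∀ z ∈ ball p r,
      |ρ z + A / 2 * ρ z ^ 2 - fderiv ℝ ρ q (z - q) - 1 / 2 *
        (fderiv ℝ (fderiv ℝ ρ) p (z - q) (z - q) + A * fderiv ℝ ρ p (z - q) ^ 2)|
        ≤ ε * ‖z - q‖ ^ 2 := by
  set D := fderiv ℝ ρ
  have hDp : HasStrictFDerivAt D (fderiv ℝ D p) p :=
    (hρ.fderiv_right (m := 1) (by norm_num)).hasStrictFDerivAt (by norm_num)
  have hρz : ∀ z, HasFDerivAt ρ (D z) z := fun z =>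
    (hρ.differentiable (by norm_num) z).hasFDerivAt
  have hσ : ∀ z, HasFDerivAt (fun z => ρ z + A / 2 * ρ z ^ 2) ((1 + A * ρ z) • D z) z := by
    intro z
    refine ((hρz z).add (((hρz z).pow 2).const_mul (A / 2))).congr_fderiv ?_
    ext v
    simp only [Nat.add_one_sub_one, pow_one, nsmul_eq_mul, Nat.cast_ofNat, add_apply, smul_apply,
      smul_eq_mul]
    ring
  have hρp : HasStrictFDerivAt ρ (D p) p := hρ.hasStrictFDerivAt (by norm_num)
  have hσ' : HasStrictFDerivAt (fun z => (1 + A * ρ z) • D z)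
      (fderiv ℝ D p + (A • D p).smulRight (D p)) p := by
    refine (((hρp.const_mul A).const_add 1).smul hDp).congr_fderiv ?_
    ext v w
    simp [hp]
  obtain ⟨r, hr, hT⟩ := exists_forall_abs_sub_taylor_le hσ hσ' hε
  refine ⟨r, hr, fun q hq hq0 z hz => ?_⟩
  convert hT q hq z hz using 2
  simp [hq0, pow_two, mul_assoc]

variable {E : Type*} [NormedAddCommGroup E] [NormedSpace ℂ E] [NormedSpace ℝ E]
  [IsScalarTower ℝ ℂ E] {ρ : E → ℝ} {p : E}

/-- Twice the complex linear part of a real linear map `T`, that is, `v ↦ T v - i T (i v)`. -/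
def complexLinearPart {W : Type*} [AddCommGroup W] [Module ℂ W] [Module ℝ W]
    [IsScalarTower ℝ ℂ W] (T : E →ₗ[ℝ] W) : E →ₗ[ℂ] W where
  toFun v := T v - I • T (I • v)
  map_add' v w := by simp only [smul_add, map_add]; abel
  map_smul' c v := by
    have hreal : ∀ (x : ℝ) (u : E), T ((x : ℂ) • u) = (x : ℂ) • T u := fun x u =>
      calc T ((x : ℂ) • u) = T (x • u) := congrArg T (algebraMap_smul ℂ x u)
        _ = x • T u := map_smul T x u
        _ = (x : ℂ) • T u := (algebraMap_smul ℂ x (T u)).symm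
    have hneg : ∀ u : E, T (I • I • u) = -T u := fun u => by
      rw [smul_smul, I_mul_I, neg_one_smul, map_neg]
    have hII : ∀ w : W, I • I • w = -w := fun w => by rw [smul_smul, I_mul_I, neg_one_smul]
    rw [← re_add_im c]
    simp only [add_smul, mul_smul, smul_add, map_add, hreal, RingHom.id_apply,
      smul_comm I ((_ : ℝ) : ℂ), hneg, smul_sub, smul_neg, hII]
    module

theorem exists_innerRegion_subset (hρ : ContDiff ℝ 2 ρ) (hp : ρ p = 0) : ∃ C : ℝ, 0 ≤ C ∧
    innerRegion p (StrongDual.extendRCLike (𝕜 := ℂ) (fderiv ℝ ρ p)) C ⊆ {z | ρ z < 0} := by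
  set D := fderiv ℝ ρ
  set H := fderiv ℝ D p
  have hDp : HasStrictFDerivAt D H p :=
    (hρ.fderiv_right (m := 1) (by norm_num)).hasStrictFDerivAt (by norm_num)
  obtain ⟨r, hr, htaylor⟩ := exists_forall_abs_sub_taylor_le
    (fun z => (hρ.differentiable (by norm_num) z).hasFDerivAt) hDp one_pos
  set ℓ : E →L[ℂ] ℂ := StrongDual.extendRCLike (𝕜 := ℂ) (D p) with hℓ
  refine ⟨‖H‖ + 1 + ‖ℓ‖ / r, by positivity, fun z hz => ?_⟩
  have hz' : (‖H‖ + 1 + ‖ℓ‖ / r) * ‖z - p‖ ^ 2 < -(D p (z - p)) := by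
    simpa [innerRegion, hℓ, StrongDual.extendRCLike_apply] using hz
  have hℓz : -(D p (z - p)) ≤ ‖ℓ‖ * ‖z - p‖ := by
    refine le_trans ?_ (ℓ.le_opNorm (z - p))
    simpa [hℓ, StrongDual.extendRCLike_apply] using
      (neg_le_abs _).trans (Complex.abs_re_le_norm (ℓ (z - p)))
  have hH₀ : 0 ≤ ‖H‖ * ‖z - p‖ ^ 2 := by positivity
  have hzr : z ∈ ball p r := by
    rw [mem_ball, dist_eq_norm]
    by_contra! hfar
    have hfar' : ‖ℓ‖ * ‖z - p‖ ≤ ‖ℓ‖ / r * ‖z - p‖ ^ 2 :=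
      calc ‖ℓ‖ * ‖z - p‖ ≤ ‖ℓ‖ * ‖z - p‖ * (‖z - p‖ / r) :=
            le_mul_of_one_le_right (by positivity) ((one_le_div hr).2 hfar)
        _ = ‖ℓ‖ / r * ‖z - p‖ ^ 2 := by ring
    linarith [sq_nonneg ‖z - p‖]
  have hupper := (abs_le.1 (htaylor p (mem_ball_self hr) z hzr)).2
  have hHz : H (z - p) (z - p) ≤ ‖H‖ * ‖z - p‖ ^ 2 :=
    (Real.le_norm_self _).trans ((H.le_opNorm₂ _ _).trans_eq (by ring))
  have hℓ₀ : 0 ≤ ‖ℓ‖ / r * ‖z - p‖ ^ 2 := by positivity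
  rw [hp] at hupper
  change ρ z < 0
  linarith

variable [FiniteDimensional ℂ E]

theorem exists_complex_bilinear_re_diag (H : E →L[ℝ] E →L[ℝ] ℝ) :
    ∃ B : E →L[ℂ] E →L[ℂ] ℂ, ∀ v, (B v v).re = H v v - H (I • v) (I • v) := by
  set T : E →ₗ[ℝ] (E →L[ℂ] ℂ) :=
    (StrongDual.extendRCLikeₗ (𝕜 := ℂ) (F := E)).toLinearMap ∘ₗ H.toLinearMap with hT
  refine ⟨LinearMap.toContinuousLinearMap (complexLinearPart T), fun v => ?_⟩
  simp [complexLinearPart, hT, StrongDual.extendRCLikeₗ_apply, StrongDual.extendRCLike_apply]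

/- Adding a large multiple of `D ⊗ D` makes a Levi form that is positive on the complex tangent
space positive in all directions. -/
theorem exists_levi_add_mul_sq_ge {D : E →L[ℝ] ℝ} {H : E →L[ℝ] E →L[ℝ] ℝ}
    (hpos : ∀ ξ, ξ ≠ 0 → D ξ = 0 → D (I • ξ) = 0 → 0 < H ξ ξ + H (I • ξ) (I • ξ)) :
    ∃ A c : ℝ, 0 < c ∧ ∀ v, c * ‖v‖ ^ 2 ≤
      H v v + H (I • v) (I • v) + A * (D v ^ 2 + D (I • v) ^ 2) := by
  have : FiniteDimensional ℝ E := FiniteDimensional.trans ℝ ℂ E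
  have : ProperSpace E := FiniteDimensional.proper_real E
  have : Continuous fun v : E => I • v := continuous_const_smul I
  obtain ⟨A, -, c, hc, hAc⟩ := exists_pos_le_add_mul_of_isCompact (isCompact_sphere (0 : E) 1)
    (f := fun v => H v v + H (I • v) (I • v)) (g := fun v => D v ^ 2 + D (I • v) ^ 2)
    (by fun_prop) (by fun_prop) (fun v => by positivity) (fun v hv h0 => by
      rw [add_eq_zero_iff_of_nonneg (sq_nonneg _) (sq_nonneg _), sq_eq_zero_iff,
        sq_eq_zero_iff] at h0
      exact hpos v (ne_of_mem_sphere hv one_ne_zero) h0.1 h0.2)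
  refine ⟨A, c, hc, fun v => ?_⟩
  rcases eq_or_ne v 0 with rfl | hv
  · simp
  have hn : 0 < ‖v‖ := norm_pos_iff.2 hv
  have hunit := hAc (‖v‖⁻¹ • v) (by simp [norm_smul, hn.ne'])
  rw [smul_comm I] at hunit
  simp only [map_smul, smul_apply, smul_eq_mul] at hunit
  refine (mul_le_mul_of_nonneg_right hunit (sq_nonneg ‖v‖)).trans_eq ?_
  field_simp

theorem exists_support_functions (hρ : ContDiff ℝ 2 ρ)
    (hp : ρ p = 0) (hpos : ∀ ξ : E, ξ ≠ 0 → fderiv ℝ ρ p ξ = 0 → fderiv ℝ ρ p (I • ξ) = 0 →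
      0 < fderiv ℝ (fderiv ℝ ρ) p ξ ξ + fderiv ℝ (fderiv ℝ ρ) p (I • ξ) (I • ξ)) :
    ∃ r > 0, ∃ c > 0, ∃ B : E →L[ℂ] E →L[ℂ] ℂ, ∀ q ∈ ball p r, ρ q = 0 →
      ∀ z ∈ ball p r, ρ z ≤ 0 →
        ((StrongDual.extendRCLike (𝕜 := ℂ) (fderiv ℝ ρ q) : E →L[ℂ] ℂ) (z - q)
          + B (z - q) (z - q)).re ≤ -c * ‖z - q‖ ^ 2 := by
  obtain ⟨A, c, hc, hlevi⟩ := exists_levi_add_mul_sq_ge hpos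
  set D := fderiv ℝ ρ
  set H := fderiv ℝ D p
  obtain ⟨B, hB⟩ := exists_complex_bilinear_re_diag (H + (A • D p).smulRight (D p))
  obtain ⟨r₁, hr₁, htaylor⟩ := exists_forall_abs_add_mul_sq_sub_taylor_le hρ hp A
    (show 0 < c / 8 by positivity)
  obtain ⟨r₂, hr₂, hsmall⟩ : ∃ r₂ > 0, ∀ z ∈ ball p r₂, -1 < A / 2 * ρ z := by
    refine Metric.eventually_nhds_iff_ball.1 (ContinuousAt.eventually_lt continuousAt_const
      (hρ.continuous.const_mul (A / 2)).continuousAt (by simp [hp]))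
  refine ⟨min r₁ r₂, lt_min hr₁ hr₂, c / 8, by positivity, (4⁻¹ : ℂ) • B,
    fun q hq hq0 z hz hz0 => ?_⟩
  have hlower := (abs_le.1 (htaylor q (ball_subset_ball (min_le_left _ _) hq) hq0 z
    (ball_subset_ball (min_le_left _ _) hz))).1
  have hnonpos : ρ z + A / 2 * ρ z ^ 2 ≤ 0 := by
    have := hsmall z (ball_subset_ball (min_le_right _ _) hz)
    calc ρ z + A / 2 * ρ z ^ 2 = ρ z * (1 + A / 2 * ρ z) := by ring
      _ ≤ 0 := mul_nonpos_of_nonpos_of_nonneg hz0 (by linarith)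
  have hre : ((StrongDual.extendRCLike (𝕜 := ℂ) (D q) : E →L[ℂ] ℂ) (z - q)
      + ((4⁻¹ : ℂ) • B) (z - q) (z - q)).re = D q (z - q) + 1 / 4 *
        (H (z - q) (z - q) + A * D p (z - q) ^ 2 -
          (H (I • (z - q)) (I • (z - q)) + A * D p (I • (z - q)) ^ 2)) := by
    have := hB (z - q)
    simp only [add_apply, ContinuousLinearMap.smulRight_apply, smul_apply, smul_eq_mul,
      mul_assoc, ← pow_two] at this
    rw [← this]
    simp [StrongDual.extendRCLike_apply]
  rw [hre]
  linarith [hlevi (z - q)]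

end Peak

section Disc

theorem norm_le_norm_of_forall_mem_frontier {Z : Set ℂ} (hZ : IsOpen Z) {h : ℂ → ℂ}
    (hh : DifferentiableOn ℂ h (ball 0 1)) (h0 : (0 : ℂ) ∉ closure Z)
    (hle : ∀ ξ ∈ closure Z ∩ ball 0 1, ‖h ξ‖ ≤ 1)
    (hfr : ∀ ξ ∈ frontier Z ∩ ball 0 1, ‖h ξ‖ ≤ ‖ξ‖) {ξ₀ : ℂ} (hξ₀ : ξ₀ ∈ Z ∩ ball 0 1) :
    ‖h ξ₀‖ ≤ ‖ξ₀‖ := by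
  have hpos : ∀ ξ ∈ closure Z, 0 < ‖ξ‖ := fun ξ hξ => norm_pos_iff.2 fun e => h0 (e ▸ hξ)
  have hξ₀Z := subset_closure hξ₀.1
  have hquot : ∀ R ∈ Ioo ‖ξ₀‖ 1, ‖h ξ₀‖ * R ≤ ‖ξ₀‖ := by
    intro R hR
    have hR₀ : 0 < R := (norm_nonneg _).trans_lt hR.1
    have hsub : closure (Z ∩ ball 0 R) ⊆ closure Z ∩ closedBall 0 R := fun ξ hξ =>
      ⟨closure_mono inter_subset_left hξ,
        closure_ball_subset_closedBall (closure_mono inter_subset_right hξ)⟩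
    have hball : closedBall (0 : ℂ) R ⊆ ball 0 1 := closedBall_subset_ball hR.2
    have hdiff : DiffContOnCl ℂ (fun ξ => h ξ / ξ) (Z ∩ ball 0 R) :=
      DifferentiableOn.diffContOnCl ((hh.mono fun ξ hξ => hball (hsub hξ).2).div
        differentiableOn_id fun ξ hξ => norm_pos_iff.1 (hpos ξ (hsub hξ).1))
    have hmax := Complex.norm_le_of_forall_mem_frontier_norm_le
      (isBounded_ball.subset inter_subset_right) hdiff (C := 1 / R) (fun ξ hξ => ?_)
      (subset_closure (⟨hξ₀.1, by simpa using hR.1⟩ : ξ₀ ∈ Z ∩ ball 0 R))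
    · rw [norm_div, div_le_div_iff₀ (hpos _ hξ₀Z) hR₀, one_mul] at hmax
      exact hmax
    · rw [(hZ.inter isOpen_ball).frontier_eq] at hξ
      obtain ⟨hξc, hξR⟩ := hsub hξ.1
      rw [norm_div]
      rcases (mem_closedBall_zero_iff.1 hξR).lt_or_eq with hlt | heq
      · have hξfr : ξ ∈ frontier Z := by
          rw [hZ.frontier_eq]
          exact ⟨hξc, fun hξZ => hξ.2 ⟨hξZ, by simpa using hlt⟩⟩
        calc ‖h ξ‖ / ‖ξ‖ ≤ 1 := div_le_one_of_le₀ (hfr ξ ⟨hξfr, hball hξR⟩) (norm_nonneg _)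
          _ ≤ 1 / R := one_le_one_div hR₀ hR.2.le
      · rw [heq]
        gcongr
        exact hle ξ ⟨hξc, hball hξR⟩
  have hlim : Tendsto (fun R => ‖h ξ₀‖ * R) (𝓝[<] 1) (𝓝 ‖h ξ₀‖) := by
    simpa using (continuous_const_mul ‖h ξ₀‖).continuousAt.tendsto.mono_left
      (nhdsWithin_le_nhds (s := Iio 1) (a := 1))
  exact le_of_tendsto hlim (eventually_of_mem (Ioo_mem_nhdsLT (by simpa using hξ₀.2)) hquot)

theorem norm_sub_sq_add_four_mul_re_mul_re (z a : ℂ) :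
    ‖z - a‖ ^ 2 + 4 * (z.re * a.re) = ‖z + (starRingEnd ℂ) a‖ ^ 2 := by
  simp only [← normSq_eq_norm_sq, normSq_apply, sub_re, sub_im, add_re, add_im, conj_re, conj_im]
  ring

theorem re_mul_one_sub_norm_le_of_re_pos {f : ℂ → ℂ} (hf : DifferentiableOn ℂ f (ball 0 1))
    (hpos : ∀ z ∈ ball (0 : ℂ) 1, 0 < (f z).re) {ξ : ℂ} (hξ : ξ ∈ ball (0 : ℂ) 1) :
    (f ξ).re * (1 - ‖ξ‖) ≤ (f 0).re * (1 + ‖ξ‖) := by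
  set a := f 0 with ha
  have ha₀ : 0 < a.re := hpos 0 (mem_ball_self one_pos)
  have hsq : ∀ z ∈ ball (0 : ℂ) 1, ‖f z - a‖ ≤ ‖f z + (starRingEnd ℂ) a‖ := fun z hz =>
    le_of_sq_le_sq (by
      linarith [norm_sub_sq_add_four_mul_re_mul_re (f z) a, mul_pos (hpos z hz) ha₀])
      (norm_nonneg _)
  have hden : ∀ z ∈ ball (0 : ℂ) 1, f z + (starRingEnd ℂ) a ≠ 0 := fun z hz h => by
    have : (f z).re + a.re = 0 := by simpa using congrArg re h
    linarith [hpos z hz]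
  have hschwarz := dist_le_div_mul_dist_of_mapsTo_ball (R₂ := 1)
    ((hf.sub_const a).div (hf.add_const ((starRingEnd ℂ) a)) hden) (fun z hz => ?_) hξ
  · simp only [Pi.div_apply, ← ha, sub_self, zero_div, dist_zero_right, norm_div, div_one,
      one_mul] at hschwarz
    rw [div_le_iff₀ (norm_pos_iff.2 (hden ξ hξ))] at hschwarz
    have hξ₁ : ‖ξ‖ < 1 := by simpa using hξ
    have hre := hpos ξ hξ
    have hprod := pow_le_pow_left₀ (norm_nonneg _) hschwarz 2
    simp only [mul_pow, ← normSq_eq_norm_sq (f ξ - a), ← normSq_eq_norm_sq (f ξ + _), normSq_apply,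
      sub_re, sub_im, add_re, add_im, conj_re, conj_im] at hprod
    have hsquare : ((f ξ).re - a.re) ^ 2 ≤ (‖ξ‖ * ((f ξ).re + a.re)) ^ 2 := by
      have : ‖ξ‖ ^ 2 ≤ 1 := pow_le_one₀ (norm_nonneg ξ) hξ₁.le
      nlinarith [mul_nonneg (sub_nonneg.2 this) (sq_nonneg ((f ξ).im - a.im))]
    linarith [(abs_le.1 (abs_le_of_sq_le_sq hsquare (by positivity))).2]
  · simp only [Pi.div_apply, ← ha, sub_self, zero_div, mem_closedBall_zero_iff, norm_div]
    exact div_le_one_of_le₀ (hsq z hz) (norm_nonneg _)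

theorem eventually_nhdsLT_one_ofReal_mem_ball :
    ∀ᶠ s : ℝ in 𝓝[<] 1, 0 < s ∧ s < 1 ∧ (s : ℂ) ∈ ball (0 : ℂ) 1 := by
  filter_upwards [Ioo_mem_nhdsLT (zero_lt_one' ℝ)] with s hs
  exact ⟨hs.1, hs.2, by simpa [abs_of_pos hs.1] using hs.2⟩

/- The radial case of Julia's lemma: the angular mass of `Re f` at the boundary point `1` is at most
its total mass `Re f(0)`. -/
theorem le_two_mul_re_of_tendsto_radial {f : ℂ → ℂ} (hf : DifferentiableOn ℂ f (ball 0 1))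
    (hpos : ∀ z ∈ ball (0 : ℂ) 1, 0 < (f z).re) {β : ℝ}
    (hlim : Tendsto (fun s : ℝ => ((1 - s : ℝ) : ℂ) * f s) (𝓝[<] 1) (𝓝 (β : ℂ))) :
    β ≤ 2 * (f 0).re := by
  refine le_of_tendsto ((continuous_re.tendsto _).comp hlim) ?_
  filter_upwards [eventually_nhdsLT_one_ofReal_mem_ball] with s ⟨hs₀, hs₁, hs⟩
  have hharnack := re_mul_one_sub_norm_le_of_re_pos hf hpos hs
  rw [Complex.norm_real, Real.norm_of_nonneg hs₀.le] at hharnack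
  have h0 : 0 < (f 0).re := hpos 0 (mem_ball_self one_pos)
  rw [comp_apply, re_ofReal_mul]
  nlinarith

end Disc

section HalfPlane

variable {R : ℝ} {w : ℂ}

/-- The conformal map of the unit disc onto the half-plane `Re y > R` that sends `0` to `w` and the
boundary point `1` to `∞`. -/
def discToHalfPlane (R : ℝ) (w ξ : ℂ) : ℂ :=
  R + w.im * I + (w.re - R) * (2 * (1 - ξ)⁻¹ - 1)

theorem discToHalfPlane_zero (R : ℝ) (w : ℂ) : discToHalfPlane R w 0 = w := by
  apply Complex.ext <;> simp [discToHalfPlane]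
  ring

theorem one_sub_ne_zero_of_mem_ball {ξ : ℂ} (hξ : ξ ∈ ball (0 : ℂ) 1) : 1 - ξ ≠ 0 :=
  sub_ne_zero.2 fun h => by simp [← h] at hξ

theorem differentiableOn_discToHalfPlane (R : ℝ) (w : ℂ) :
    DifferentiableOn ℂ (discToHalfPlane R w) (ball 0 1) := fun ξ hξ => by
  have := one_sub_ne_zero_of_mem_ball hξ
  unfold discToHalfPlane
  fun_prop (disch := assumption)

theorem lt_re_discToHalfPlane (hw : R < w.re) {ξ : ℂ} (hξ : ξ ∈ ball (0 : ℂ) 1) :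
    R < (discToHalfPlane R w ξ).re := by
  have hn : 0 < normSq (1 - ξ) := normSq_pos.2 (one_sub_ne_zero_of_mem_ball hξ)
  have hξ₁ : normSq ξ < 1 := by
    rw [normSq_eq_norm_sq]
    exact pow_lt_one₀ (norm_nonneg ξ) (by simpa using hξ) two_ne_zero
  have hpos : 0 < 2 * ((1 - ξ)⁻¹).re - 1 := by
    rw [inv_re, sub_pos, mul_div_assoc', lt_div_iff₀ hn]
    simp only [normSq_apply, sub_re, one_re, sub_im, one_im] at hξ₁ ⊢
    linarith
  have hre : (discToHalfPlane R w ξ).re = R + (w.re - R) * (2 * ((1 - ξ)⁻¹).re - 1) := by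
    simp [discToHalfPlane]
  rw [hre]
  linarith [mul_pos (sub_pos.2 hw) hpos]

theorem tendsto_one_sub_mul_discToHalfPlane (R : ℝ) (w : ℂ) :
    Tendsto (fun s : ℝ => ((1 - s : ℝ) : ℂ) * discToHalfPlane R w s) (𝓝[<] 1)
      (𝓝 ((2 * (w.re - R) : ℝ) : ℂ)) := by
  have hc : Continuous fun s : ℝ =>
      ((1 - s : ℝ) : ℂ) * (R + w.im * I - (w.re - R)) + 2 * (w.re - R) := by fun_prop
  have hlim := (hc.tendsto 1).mono_left (nhdsWithin_le_nhds (s := Iio 1))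
  simp only [sub_self, ofReal_zero, zero_mul, zero_add] at hlim
  push_cast
  refine hlim.congr' ?_
  filter_upwards [eventually_nhdsLT_one_ofReal_mem_ball] with s ⟨_, _, hs⟩
  have := one_sub_ne_zero_of_mem_ball hs
  simp only [discToHalfPlane, ofReal_sub, ofReal_one]
  field_simp
  ring

theorem tendsto_discToHalfPlane_cobounded (hw : R < w.re) :
    Tendsto (fun s : ℝ => discToHalfPlane R w s) (𝓝[<] 1)
      (Bornology.cobounded ℂ ⊓ 𝓟 {y | R < y.re}) := by
  refine tendsto_inf.2 ⟨?_, tendsto_principal.2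
    (eventually_nhdsLT_one_ofReal_mem_ball.mono fun s hs => lt_re_discToHalfPlane hw hs.2.2)⟩
  have hinv : Tendsto (fun s : ℝ => (1 - s)⁻¹) (𝓝[<] 1) atTop := by
    refine tendsto_inv_nhdsGT_zero.comp (tendsto_nhdsWithin_iff.2 ⟨?_, ?_⟩)
    · have : Continuous fun s : ℝ => 1 - s := by fun_prop
      simpa using (this.tendsto 1).mono_left (nhdsWithin_le_nhds (s := Iio 1))
    · filter_upwards [self_mem_nhdsWithin] with s hs using by simpa using hs
  rw [← tendsto_norm_atTop_iff_cobounded]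
  refine (hinv.atTop_mul_pos (norm_pos_iff.2 (ofReal_ne_zero.2 (by linarith)))
    (tendsto_one_sub_mul_discToHalfPlane R w).norm).congr' ?_
  filter_upwards [self_mem_nhdsWithin] with s hs
  have : 0 < 1 - s := sub_pos.2 hs
  rw [norm_mul, Complex.norm_real, Real.norm_of_nonneg this.le, inv_mul_cancel_left₀ this.ne']

theorem re_sub_le_re_of_tendsto_inv_mul {f : ℂ → ℂ} (hf : DifferentiableOn ℂ f {y | R < y.re})
    (hpos : ∀ y : ℂ, R < y.re → 0 < (f y).re)
    (hlim : Tendsto (fun y => y⁻¹ * f y) (Bornology.cobounded ℂ ⊓ 𝓟 {y | R < y.re}) (𝓝 1))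
    (hw : R < w.re) : w.re - R ≤ (f w).re := by
  have hlt : MapsTo (discToHalfPlane R w) (ball 0 1) {y | R < y.re} := fun ξ hξ =>
    lt_re_discToHalfPlane hw hξ
  have hcob := tendsto_discToHalfPlane_cobounded hw
  have hmass := le_two_mul_re_of_tendsto_radial (f := f ∘ discToHalfPlane R w)
    (β := 2 * (w.re - R)) (hf.comp (differentiableOn_discToHalfPlane R w) hlt)
    (fun ξ hξ => hpos _ (hlt hξ)) ?_
  · rw [comp_apply, discToHalfPlane_zero] at hmass
    linarith
  · have := (tendsto_one_sub_mul_discToHalfPlane R w).mul (hlim.comp hcob)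
    rw [mul_one] at this
    refine this.congr' ?_
    filter_upwards [hcob.eventually (mem_inf_of_left (Bornology.eventually_ne_cobounded 0))]
      with s hs
    rw [comp_apply, comp_apply, mul_assoc, mul_inv_cancel_left₀ hs]

end HalfPlane

section Barrier

variable {E : Type*} [NormedAddCommGroup E] {Ω : Set E} {p : E} {P : E → ℂ} {D r c s : ℝ}

theorem mem_closedBall_of_lt_re_of_peak (hc : 0 ≤ c) {z : E}
    (hpeak : (P z).re ≤ -c * ‖z - p‖ ^ 2) (hs : 0 ≤ s) (hlt : -(c * s ^ 2) < (P z).re) :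
    z ∈ closedBall p s := by
  rw [mem_closedBall, dist_eq_norm]
  refine (lt_of_pow_lt_pow_left₀ 2 hs (lt_of_mul_lt_mul_left ?_ hc)).le
  linarith

variable [NormedSpace ℂ E]

theorem half_le_mul_norm_of_disc {ψ : ℂ → E} (hψ : DifferentiableOn ℂ ψ (ball 0 1))
    (hD : ∀ z ∈ ball (0 : ℂ) 1, dist (ψ z) (ψ 0) ≤ D) (hs : s ≤ ‖ψ 0 - p‖) {ξ : ℂ}
    (hξ : ξ ∈ ball (0 : ℂ) 1) (hclose : ‖ψ ξ - p‖ ≤ s / 2) : s / 2 ≤ D * ‖ξ‖ := by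
  have hschwarz := dist_le_div_mul_dist_of_mapsTo_ball hψ hD hξ
  rw [dist_zero_right, div_one, dist_comm, dist_eq_norm] at hschwarz
  linarith [norm_sub_le_norm_sub_add_norm_sub (ψ 0) (ψ ξ) p]

theorem exp_mul_re_le_norm_of_disc (hP : Differentiable ℂ P) (hc : 0 ≤ c)
    (hpeak : ∀ z ∈ Ω, z ∈ ball p r → (P z).re ≤ -c * ‖z - p‖ ^ 2) (hs : 0 < s) (hsr : s ≤ r)
    (hD : 0 < D) (hΩ : ∀ z ∈ Ω, ∀ w ∈ Ω, dist z w ≤ D) {L : ℝ} (hL : 0 ≤ L)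
    (hLD : Real.exp (-(L * (c * (s / 2) ^ 2))) ≤ s / (2 * D)) {ψ : ℂ → E}
    (hψ : DifferentiableOn ℂ ψ (ball 0 1)) (hmaps : MapsTo ψ (ball 0 1) Ω) (hfar : s ≤ ‖ψ 0 - p‖)
    {ξ : ℂ} (hξ : ξ ∈ ball (0 : ℂ) 1) (hξr : ψ ξ ∈ ball p r)
    (hξP : -(c * (s / 2) ^ 2) < (P (ψ ξ)).re) : Real.exp (L * (P (ψ ξ)).re) ≤ ‖ξ‖ := by
  set Z : Set ℂ := ball 0 1 ∩ ψ ⁻¹' (ball p r ∩ {z | -(c * (s / 2) ^ 2) < (P z).re})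
  have hZo : IsOpen Z := hψ.continuousOn.isOpen_inter_preimage isOpen_ball
    (isOpen_ball.inter (isOpen_lt continuous_const (continuous_re.comp hP.continuous)))
  have hZclose : MapsTo ψ Z (closedBall p (s / 2)) := fun ζ hζ =>
    mem_closedBall_of_lt_re_of_peak hc (hpeak _ (hmaps hζ.1) hζ.2.1) (by positivity) hζ.2.2
  have hclose : ∀ ζ ∈ closure Z, ζ ∈ ball (0 : ℂ) 1 → ψ ζ ∈ closedBall p (s / 2) :=
    fun ζ hζ hζ₁ => by
      have hcont := (hψ.differentiableAt (isOpen_ball.mem_nhds hζ₁)).continuousAt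
      simpa using hcont.continuousWithinAt.mem_closure hζ hZclose
  have hnorm : ∀ ζ ∈ closure Z, ζ ∈ ball (0 : ℂ) 1 → s / (2 * D) ≤ ‖ζ‖ := fun ζ hζ hζ₁ => by
    have := half_le_mul_norm_of_disc hψ
      (fun z hz => hΩ _ (hmaps hz) _ (hmaps (mem_ball_self one_pos))) hfar hζ₁
      (by simpa [dist_eq_norm] using hclose ζ hζ hζ₁)
    rw [div_le_iff₀ (by positivity)]
    linarith
  have hball : closedBall p (s / 2) ⊆ ball p r := closedBall_subset_ball (by linarith)
  have hexp : ∀ ζ, ‖Complex.exp (L * P (ψ ζ))‖ = Real.exp (L * (P (ψ ζ)).re) := fun ζ => by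
    rw [Complex.norm_exp, re_ofReal_mul]
  rw [← hexp]
  refine norm_le_norm_of_forall_mem_frontier hZo
    (h := fun ζ => Complex.exp (L * P (ψ ζ)))
    (((hP.comp_differentiableOn hψ).const_mul (L : ℂ)).cexp) (fun h0 => ?_) (fun ζ hζ => ?_)
    (fun ζ hζ => ?_) ⟨⟨hξ, hξr, hξP⟩, hξ⟩
  · have := hnorm 0 h0 (mem_ball_self one_pos)
    rw [norm_zero] at this
    exact this.not_gt (by positivity)
  · rw [hexp, Real.exp_le_one_iff]
    refine mul_nonpos_of_nonneg_of_nonpos hL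
      ((hpeak _ (hmaps hζ.2) (hball (hclose ζ hζ.1 hζ.2))).trans ?_)
    rw [neg_mul, neg_nonpos]
    positivity
  · have hζc : ζ ∈ closure Z := frontier_subset_closure hζ.1
    have hPζ : (P (ψ ζ)).re ≤ -(c * (s / 2) ^ 2) := by
      by_contra! hlt
      rw [hZo.frontier_eq] at hζ
      exact hζ.1.2 ⟨hζ.2, hball (hclose ζ hζc hζ.2), hlt⟩
    rw [hexp]
    refine (Real.exp_le_exp.2 ?_).trans (hLD.trans (hnorm ζ hζc hζ.2))
    linarith [mul_le_mul_of_nonneg_left hPζ hL]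

theorem exists_barrier_constant_disc (hP : Differentiable ℂ P) (hΩ : Bornology.IsBounded Ω)
    (hc : 0 < c) (hpeak : ∀ z ∈ Ω, z ∈ ball p r → (P z).re ≤ -c * ‖z - p‖ ^ 2) (hs : 0 < s)
    (hsr : s ≤ r) :
    ∃ κ > 0, ∀ ψ : ℂ → E, DifferentiableOn ℂ ψ (ball 0 1) → MapsTo ψ (ball 0 1) Ω →
      ∀ ξ ∈ ball (0 : ℂ) 1, ψ ξ ∈ ball p r → -(P (ψ ξ)).re < κ * (1 - ‖ξ‖) → ‖ψ 0 - p‖ < s := by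
  obtain ⟨D₀, hD₀⟩ := Metric.isBounded_iff.1 hΩ
  obtain ⟨D, hD₀D, hD⟩ : ∃ D, D₀ ≤ D ∧ 0 < D := ⟨max D₀ 1, le_max_left _ _, by positivity⟩
  have hc₁ : 0 < c * (s / 2) ^ 2 := by positivity
  obtain ⟨L, hL, hLD⟩ : ∃ L : ℝ, 0 < L ∧ Real.exp (-(L * (c * (s / 2) ^ 2))) ≤ s / (2 * D) := by
    have hlim : Tendsto (fun L : ℝ => Real.exp (-(L * (c * (s / 2) ^ 2)))) atTop (𝓝 0) :=
      Real.tendsto_exp_neg_atTop_nhds_zero.comp (tendsto_id.atTop_mul_const hc₁)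
    exact ((eventually_gt_atTop 0).and
      (hlim.eventually (Iic_mem_nhds (show 0 < s / (2 * D) by positivity)))).exists
  refine ⟨min (1 / L) (c * (s / 2) ^ 2), by positivity, fun ψ hψ hmaps ξ hξ hξr hlt => ?_⟩
  by_contra! hfar
  have hξ₁ : ‖ξ‖ < 1 := by simpa using hξ
  have hmin₁ : min (1 / L) (c * (s / 2) ^ 2) * (1 - ‖ξ‖) ≤ 1 / L * (1 - ‖ξ‖) :=
    mul_le_mul_of_nonneg_right (min_le_left _ _) (by linarith)
  have hmin₂ : min (1 / L) (c * (s / 2) ^ 2) * (1 - ‖ξ‖) ≤ c * (s / 2) ^ 2 * 1 :=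
    mul_le_mul (min_le_right _ _) (by linarith [norm_nonneg ξ]) (by linarith) hc₁.le
  have hexp := exp_mul_re_le_norm_of_disc hP hc.le hpeak hs hsr hD
    (fun z hz w hw => (hD₀ hz hw).trans hD₀D) hL.le hLD hψ hmaps hfar hξ hξr (by linarith)
  have hlower : L * (-(P (ψ ξ)).re) < 1 - ‖ξ‖ := by
    calc L * (-(P (ψ ξ)).re) < L * (1 / L * (1 - ‖ξ‖)) := by gcongr; linarith
      _ = 1 - ‖ξ‖ := by field_simp
  linarith [Real.add_one_le_exp (L * (P (ψ ξ)).re)]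

theorem exists_barrier_constant_halfPlane (hP : Differentiable ℂ P) (hΩ : Bornology.IsBounded Ω)
    (hc : 0 < c) (hpeak : ∀ z ∈ Ω, z ∈ ball p r → (P z).re ≤ -c * ‖z - p‖ ^ 2) (hs : 0 < s)
    (hsr : s ≤ r) :
    ∃ K > 0, ∀ (R : ℝ) (ψ : ℂ → E), DifferentiableOn ℂ ψ {y | R < y.re} →
      MapsTo ψ {y | R < y.re} Ω →
      Tendsto ψ (Bornology.cobounded ℂ ⊓ 𝓟 {y | R < y.re}) (𝓝 p) →
      Tendsto (fun y => y * P (ψ y)) (Bornology.cobounded ℂ ⊓ 𝓟 {y | R < y.re}) (𝓝 (-1)) →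
      ∀ w : ℂ, R + K < w.re → ‖ψ w - p‖ < s := by
  obtain ⟨κ, hκ, hbarrier⟩ := exists_barrier_constant_disc hP hΩ hc hpeak hs hsr
  refine ⟨1 / κ, by positivity, fun R ψ hψ hmaps hψp hψP w hw => ?_⟩
  have hκw : 1 < (w.re - R) * κ := by rw [← div_lt_iff₀ hκ]; linarith
  have hRw : 0 < w.re - R := by nlinarith
  have hlt : MapsTo (discToHalfPlane R w) (ball 0 1) {y | R < y.re} := fun ξ hξ =>
    lt_re_discToHalfPlane (sub_pos.1 hRw) hξ
  have hcob := tendsto_discToHalfPlane_cobounded (sub_pos.1 hRw)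
  have hmul : Tendsto (fun t : ℝ => ‖P (ψ (discToHalfPlane R w t))‖ * (1 - t)⁻¹) (𝓝[<] 1)
      (𝓝 (1 / (2 * (w.re - R)))) := by
    have hquot := ((hψP.comp hcob).div (tendsto_one_sub_mul_discToHalfPlane R w)
      (ofReal_ne_zero.2 (by linarith))).norm
    rw [norm_div, norm_neg, norm_one, Complex.norm_real, Real.norm_of_nonneg (by linarith)]
      at hquot
    refine hquot.congr' ?_
    filter_upwards [hcob.eventually (mem_inf_of_left (Bornology.eventually_ne_cobounded 0)),
      self_mem_nhdsWithin] with t hne ht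
    have ht' : 0 < 1 - t := sub_pos.2 ht
    have hne' : ‖discToHalfPlane R w t‖ ≠ 0 := norm_ne_zero_iff.2 hne
    rw [Pi.div_apply, norm_div, comp_apply, norm_mul, norm_mul, Complex.norm_real,
      Real.norm_of_nonneg ht'.le]
    field_simp
  have hsmall : 1 / (2 * (w.re - R)) < κ := by
    rw [div_lt_iff₀ (by linarith)]
    nlinarith
  obtain ⟨t, ⟨ht₀, ht₁, ht⟩, htκ, htr⟩ := (eventually_nhdsLT_one_ofReal_mem_ball.and
    ((hmul.eventually (gt_mem_nhds hsmall)).and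
      ((hψp.comp hcob).eventually (ball_mem_nhds p (hs.trans_le hsr))))).exists
  have := hbarrier _ (hψ.comp (differentiableOn_discToHalfPlane R w) hlt)
    (fun ξ hξ => hmaps (hlt hξ)) t ht htr ?_
  · rwa [comp_apply, discToHalfPlane_zero] at this
  · rw [Complex.norm_real, Real.norm_of_nonneg ht₀.le]
    rw [← div_eq_mul_inv, div_lt_iff₀ (sub_pos.2 ht₁)] at htκ
    exact ((neg_le_abs _).trans (abs_re_le_norm _)).trans_lt htκ

end Barrier

section Flatness

variable {E : Type*} [NormedAddCommGroup E] {Ω : Set E} {p : E} {k l : ℕ} {F G : E → E}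

theorem tendsto_norm_sub_nhdsWithin_zero (Ω : Set E) (p : E) :
    Tendsto (fun z => ‖z - p‖) (𝓝[Ω] p) (𝓝 0) :=
  tendsto_iff_norm_sub_tendsto_zero.1 (tendsto_id.mono_left nhdsWithin_le_nhds)

theorem isLittleO_sub_self_of_le (hlk : l ≤ k)
    (hF : (fun z => F z - z) =o[𝓝[Ω] p] fun z => ‖z - p‖ ^ k) :
    (fun z => F z - z) =o[𝓝[Ω] p] fun z => ‖z - p‖ ^ l := by
  obtain rfl | hlt := hlk.eq_or_lt
  · exact hF
  · exact hF.trans ((Asymptotics.isLittleO_pow_pow hlt).comp_tendsto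
      (tendsto_norm_sub_nhdsWithin_zero Ω p))

theorem tendsto_nhdsWithin_of_isLittleO (hmaps : MapsTo G Ω Ω)
    (hG : (fun z => G z - z) =o[𝓝[Ω] p] fun z => ‖z - p‖ ^ 1) :
    Tendsto G (𝓝[Ω] p) (𝓝[Ω] p) := by
  have hpow := (tendsto_norm_sub_nhdsWithin_zero Ω p).pow 1
  rw [zero_pow one_ne_zero] at hpow
  refine tendsto_nhdsWithin_iff.2 ⟨?_, eventually_mem_nhdsWithin.mono fun z hz => hmaps hz⟩
  simpa using (hG.trans_tendsto hpow).add (tendsto_id.mono_left (nhdsWithin_le_nhds (s := Ω)))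

theorem isLittleO_comp_sub_self (hk : 1 ≤ k)
    (hF : (fun z => F z - z) =o[𝓝[Ω] p] fun z => ‖z - p‖ ^ k)
    (hG : (fun z => G z - z) =o[𝓝[Ω] p] fun z => ‖z - p‖ ^ k) (hmaps : MapsTo G Ω Ω) :
    (fun z => (F ∘ G) z - z) =o[𝓝[Ω] p] fun z => ‖z - p‖ ^ k := by
  have hG₁ := isLittleO_sub_self_of_le hk hG
  have hbig : (fun z => ‖G z - p‖) =O[𝓝[Ω] p] fun z => ‖z - p‖ := by
    simp only [pow_one, Asymptotics.isLittleO_norm_right] at hG₁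
    simpa using (hG₁.isBigO.add (Asymptotics.isBigO_refl (fun z => z - p) _)).norm_norm
  refine (((hF.comp_tendsto (tendsto_nhdsWithin_of_isLittleO hmaps hG₁)).trans_isBigO
    (hbig.pow k)).add hG).congr_left fun z => ?_
  simp only [comp_apply, sub_add_sub_cancel]

theorem isLittleO_iterate_sub_self (hk : 1 ≤ k)
    (hF : (fun z => F z - z) =o[𝓝[Ω] p] fun z => ‖z - p‖ ^ k) (hmaps : MapsTo F Ω Ω) (m : ℕ) :
    (fun z => F^[m] z - z) =o[𝓝[Ω] p] fun z => ‖z - p‖ ^ k := by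
  induction m with
  | zero => simp
  | succ m ih =>
    rw [iterate_succ']
    exact isLittleO_comp_sub_self hk hF ih (hmaps.iterate m)

variable [NormedSpace ℂ E]

theorem differentiableOn_iterate_of_mapsTo (hF : DifferentiableOn ℂ F Ω) (hmaps : MapsTo F Ω Ω)
    (m : ℕ) : DifferentiableOn ℂ F^[m] Ω := by
  induction m with
  | zero => exact differentiableOn_id
  | succ m ih =>
    rw [iterate_succ']
    exact hF.comp ih (hmaps.iterate m)

theorem tendsto_add_inv_smul_nhdsWithin (Ω : Set E) (p a : E) :
    Tendsto (fun y : ℂ => p + y⁻¹ • a) (Bornology.cobounded ℂ ⊓ 𝓟 {y | p + y⁻¹ • a ∈ Ω})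
      (𝓝[Ω] p) := by
  refine tendsto_inf.2 ⟨?_, tendsto_principal.2 (mem_inf_of_right (mem_principal_self _))⟩
  have := ((tendsto_inv₀_cobounded (α := ℂ)).smul_const a).const_add p
  rw [zero_smul, add_zero] at this
  exact this.mono_left inf_le_left

theorem tendsto_smul_apply_sub {a : E}
    (hG : (fun z => G z - z) =o[𝓝[Ω] p] fun z => ‖z - p‖ ^ 1) :
    Tendsto (fun y : ℂ => y • (G (p + y⁻¹ • a) - p))
      (Bornology.cobounded ℂ ⊓ 𝓟 {y | p + y⁻¹ • a ∈ Ω}) (𝓝 a) := by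
  have hne : ∀ᶠ y : ℂ in Bornology.cobounded ℂ ⊓ 𝓟 {y | p + y⁻¹ • a ∈ Ω}, y ≠ 0 :=
    mem_inf_of_left (Bornology.eventually_ne_cobounded 0)
  have hlittle := (Asymptotics.isBigO_refl (fun y : ℂ => y) _).norm_right.smul_isLittleO
    (hG.comp_tendsto (tendsto_add_inv_smul_nhdsWithin Ω p a)).norm_right
  have hbig : (fun y : ℂ => ‖y‖ • ‖‖p + y⁻¹ • a - p‖ ^ 1‖)
      =O[Bornology.cobounded ℂ ⊓ 𝓟 {y | p + y⁻¹ • a ∈ Ω}] fun _ => (1 : ℝ) := by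
    refine Asymptotics.IsBigO.of_bound ‖a‖ (hne.mono fun y hy => ?_)
    simp [norm_smul, mul_inv_cancel_left₀ (norm_ne_zero_iff.2 hy)]
  have hlim := (Asymptotics.isLittleO_one_iff ℝ).1 (hlittle.trans_isBigO hbig)
  have := hlim.add_const a
  rw [zero_add] at this
  refine this.congr' (hne.mono fun y hy => ?_)
  rw [comp_apply, ← sub_sub, smul_sub, smul_inv_smul₀ hy, sub_add_cancel]

end Flatness

section Support

variable {E : Type*} [NormedAddCommGroup E] [NormedSpace ℂ E]

/-- The polynomial `ℓ (z - p) + B (z - p) (z - p)` with linear part `ℓ` and quadratic part `B`,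
serving as a holomorphic support function of a domain at its boundary point `p`. -/
def quadPoly (p : E) (ℓ : E →L[ℂ] ℂ) (B : E →L[ℂ] E →L[ℂ] ℂ) (z : E) : ℂ :=
  ℓ (z - p) + B (z - p) (z - p)

theorem differentiable_quadPoly (p : E) (ℓ : E →L[ℂ] ℂ) (B : E →L[ℂ] E →L[ℂ] ℂ) :
    Differentiable ℂ (quadPoly p ℓ B) := by
  unfold quadPoly
  fun_prop

variable {Ω : Set E} {p a : E} {ℓ : E →L[ℂ] ℂ} {B : E →L[ℂ] E →L[ℂ] ℂ} {r c C : ℝ} {G : E → E}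

theorem tendsto_mul_quadPoly (hmaps : MapsTo G Ω Ω)
    (hG : (fun z => G z - z) =o[𝓝[Ω] p] fun z => ‖z - p‖ ^ 1) (ha : ℓ a = -1) :
    Tendsto (fun y : ℂ => y * quadPoly p ℓ B (G (p + y⁻¹ • a)))
      (Bornology.cobounded ℂ ⊓ 𝓟 {y | p + y⁻¹ • a ∈ Ω}) (𝓝 (-1)) := by
  have hsub := (tendsto_nhds_of_tendsto_nhdsWithin ((tendsto_nhdsWithin_of_isLittleO hmaps hG).comp
    (tendsto_add_inv_smul_nhdsWithin Ω p a))).sub_const p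
  rw [sub_self] at hsub
  have hcont : Continuous fun q : E × E => ℓ q.1 + B q.1 q.2 := by fun_prop
  have hlim := (hcont.tendsto (a, 0)).comp ((tendsto_smul_apply_sub (a := a) hG).prodMk_nhds hsub)
  simp only [map_zero, add_zero, ha] at hlim
  refine hlim.congr fun y => ?_
  simp [quadPoly, mul_add]

/-- Local holomorphic support data for a set `Ω` at a boundary point `p`: near `p` the quadratic
polynomial `quadPoly p ℓ B` peaks at `p` on the closure of `Ω`, while `Ω` contains the inner region
`innerRegion p ℓ C`. A strongly pseudoconvex boundary point has such data. -/
structure IsSupportAt (Ω : Set E) (p : E) (ℓ : E →L[ℂ] ℂ) (B : E →L[ℂ] E →L[ℂ] ℂ)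
    (r c C : ℝ) : Prop where
  notMem : p ∉ Ω
  radius_pos : 0 < r
  peak_pos : 0 < c
  nonneg : 0 ≤ C
  ne_zero : ℓ ≠ 0
  inner_subset : innerRegion p ℓ C ⊆ Ω
  peak : ∀ z ∈ closure Ω, z ∈ ball p r → (quadPoly p ℓ B z).re ≤ -c * ‖z - p‖ ^ 2

namespace IsSupportAt

theorem re_quadPoly_neg (h : IsSupportAt Ω p ℓ B r c C) {z : E} (hz : z ∈ Ω)
    (hzr : z ∈ ball p r) : (quadPoly p ℓ B z).re < 0 := by
  refine (h.peak z (subset_closure hz) hzr).trans_lt ?_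
  rw [neg_mul, neg_lt_zero]
  have : 0 < ‖z - p‖ := norm_pos_iff.2 (sub_ne_zero.2 fun e => h.notMem (e ▸ hz))
  exact mul_pos h.peak_pos (pow_pos this 2)

theorem add_inv_smul_mem (h : IsSupportAt Ω p ℓ B r c C) (ha : ℓ a = -1) {y : ℂ}
    (hy : C * ‖a‖ ^ 2 < y.re) : p + y⁻¹ • a ∈ Ω :=
  h.inner_subset (add_inv_smul_mem_innerRegion h.nonneg ha hy)

theorem cobounded_inf_principal_le (h : IsSupportAt Ω p ℓ B r c C) (ha : ℓ a = -1) :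
    Bornology.cobounded ℂ ⊓ 𝓟 {y : ℂ | C * ‖a‖ ^ 2 < y.re} ≤
      Bornology.cobounded ℂ ⊓ 𝓟 {y | p + y⁻¹ • a ∈ Ω} :=
  inf_le_inf_left _ (principal_mono.2 fun _ hy => h.add_inv_smul_mem ha hy)

theorem differentiableOn_comp_add_inv_smul (h : IsSupportAt Ω p ℓ B r c C) (ha : ℓ a = -1)
    (hG : DifferentiableOn ℂ G Ω) :
    DifferentiableOn ℂ (fun y : ℂ => G (p + y⁻¹ • a)) {y | C * ‖a‖ ^ 2 < y.re} := by
  refine hG.comp (((differentiableOn_id.inv fun y hy h0 => ?_).smul_const a).const_add p)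
    fun y hy => h.add_inv_smul_mem ha hy
  have hre : C * ‖a‖ ^ 2 < y.re := hy
  rw [show y = 0 from h0, zero_re] at hre
  exact hre.not_ge (mul_nonneg h.nonneg (sq_nonneg _))

theorem tendsto_inv_mul_neg_inv_quadPoly (h : IsSupportAt Ω p ℓ B r c C) (ha : ℓ a = -1)
    (hmaps : MapsTo G Ω Ω) (hG : (fun z => G z - z) =o[𝓝[Ω] p] fun z => ‖z - p‖ ^ 1) :
    Tendsto (fun y : ℂ => y⁻¹ * -(quadPoly p ℓ B (G (p + y⁻¹ • a)))⁻¹)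
      (Bornology.cobounded ℂ ⊓ 𝓟 {y | C * ‖a‖ ^ 2 < y.re}) (𝓝 1) := by
  have := (((tendsto_mul_quadPoly hmaps hG ha (B := B)).inv₀ (by norm_num)).neg).mono_left
    (h.cobounded_inf_principal_le ha)
  simpa [mul_comm] using this

/- Restricted to the discs `y ↦ p + y⁻¹ • a` attached to `p`, the barrier estimate keeps `G` close
to `p`, and Julia's lemma applied to `-1 / quadPoly ∘ G` gives the lower bound. -/
theorem exists_uniform_bound (h : IsSupportAt Ω p ℓ B r c C) (hΩ : Bornology.IsBounded Ω) :
    ∃ C₁ ≥ C, ∀ G : E → E, DifferentiableOn ℂ G Ω → MapsTo G Ω Ω →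
      ((fun z => G z - z) =o[𝓝[Ω] p] fun z => ‖z - p‖ ^ 1) →
      ∀ z ∈ innerRegion p ℓ C₁, ‖G z - p‖ < r / 2 ∧
        ((-ℓ (z - p))⁻¹).re / 2 ≤ (-(quadPoly p ℓ B (G z))⁻¹).re := by
  obtain ⟨K, hK, hbarrier⟩ := exists_barrier_constant_halfPlane (differentiable_quadPoly p ℓ B) hΩ
    h.peak_pos (fun z hz => h.peak z (subset_closure hz)) (half_pos h.radius_pos)
    (half_le_self h.radius_pos.le)
  have hC := h.nonneg
  refine ⟨2 * (C + K * ‖ℓ‖ ^ 2), by nlinarith [sq_nonneg ‖ℓ‖], fun G hG hmaps hflat z hz => ?_⟩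
  obtain ⟨a, w, ha, hw, hwz, rfl⟩ := exists_eq_add_inv_smul_of_mem_innerRegion (by positivity) hz
  have hℓa : 1 ≤ ‖ℓ‖ ^ 2 * ‖a‖ ^ 2 := by
    rw [← mul_pow]
    refine one_le_pow₀ ?_
    simpa [ha] using ℓ.le_opNorm a
  have hRw : 2 * (C * ‖a‖ ^ 2 + K) < w.re := by nlinarith
  have hR : 0 ≤ C * ‖a‖ ^ 2 := by positivity
  have hclose := hbarrier _ _ (h.differentiableOn_comp_add_inv_smul ha hG)
    (fun y hy => hmaps (h.add_inv_smul_mem ha hy))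
    ((tendsto_nhds_of_tendsto_nhdsWithin ((tendsto_nhdsWithin_of_isLittleO hmaps hflat).comp
      (tendsto_add_inv_smul_nhdsWithin Ω p a))).mono_left (h.cobounded_inf_principal_le ha))
    ((tendsto_mul_quadPoly hmaps hflat ha).mono_left (h.cobounded_inf_principal_le ha))
  refine ⟨hclose w (by linarith), ?_⟩
  have hsub : {y : ℂ | C * ‖a‖ ^ 2 + K < y.re} ⊆ {y | C * ‖a‖ ^ 2 < y.re} := fun y hy =>
    (lt_add_of_pos_right _ hK).trans hy
  have hneg : ∀ y : ℂ, C * ‖a‖ ^ 2 + K < y.re → (quadPoly p ℓ B (G (p + y⁻¹ • a))).re < 0 :=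
    fun y hy => h.re_quadPoly_neg (hmaps (h.add_inv_smul_mem ha (hsub hy))) <| by
      rw [mem_ball, dist_eq_norm]
      exact (hclose y hy).trans (half_lt_self h.radius_pos)
  have hne : ∀ y : ℂ, C * ‖a‖ ^ 2 + K < y.re → quadPoly p ℓ B (G (p + y⁻¹ • a)) ≠ 0 :=
    fun y hy h0 => (hneg y hy).ne (by rw [h0, zero_re])
  have hjulia := re_sub_le_re_of_tendsto_inv_mul (w := w)
    (f := fun y => -(quadPoly p ℓ B (G (p + y⁻¹ • a)))⁻¹)
    ((((differentiable_quadPoly p ℓ B).comp_differentiableOn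
      ((h.differentiableOn_comp_add_inv_smul ha hG).mono hsub)).inv hne).neg)
    (fun y hy => ?_) ((h.tendsto_inv_mul_neg_inv_quadPoly ha hmaps hflat).mono_left
      (inf_le_inf_left _ (principal_mono.2 hsub))) (by linarith)
  · rw [← hwz, inv_inv]
    linarith
  · rw [neg_re, inv_re, neg_pos]
    exact div_neg_of_neg_of_pos (hneg y hy) (normSq_pos.2 (hne y hy))

end IsSupportAt

end Support

section AnisotropicScaling

variable {E : Type*} [NormedAddCommGroup E] [NormedSpace ℂ E]

/-- The linear map which, when `ℓ a = -1`, scales `a` by `e ^ 2` and the hyperplane `ker ℓ` by `e`.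
Up to constants its image of the unit ball is the largest polydisc with this centre in a strongly
pseudoconvex domain, at a point of distance `e ^ 2` from the boundary. -/
def anisoScale (ℓ : E →L[ℂ] ℂ) (a : E) (e : ℂ) : E →L[ℂ] E :=
  -(e ^ 2) • ℓ.smulRight a + e • (ContinuousLinearMap.id ℂ E + ℓ.smulRight a)

theorem anisoScale_apply (ℓ : E →L[ℂ] ℂ) (a : E) (e : ℂ) (v : E) :
    anisoScale ℓ a e v = -(e ^ 2 * ℓ v) • a + e • (v + ℓ v • a) := by
  simp only [anisoScale, add_apply, smul_apply,
    ContinuousLinearMap.smulRight_apply, ContinuousLinearMap.id_apply]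
  module

variable {ℓ : E →L[ℂ] ℂ} {a : E}

theorem apply_anisoScale (ha : ℓ a = -1) (e : ℂ) (v : E) :
    ℓ (anisoScale ℓ a e v) = e ^ 2 * ℓ v := by
  simp [anisoScale_apply, ha]

theorem anisoScale_comp_anisoScale (ha : ℓ a = -1) (d e : ℂ) :
    (anisoScale ℓ a d).comp (anisoScale ℓ a e) = anisoScale ℓ a (d * e) := by
  ext v
  rw [ContinuousLinearMap.comp_apply, anisoScale_apply, apply_anisoScale ha, anisoScale_apply,
    anisoScale_apply]
  module

theorem anisoScale_one (ℓ : E →L[ℂ] ℂ) (a : E) :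
    anisoScale ℓ a 1 = ContinuousLinearMap.id ℂ E := by
  ext v
  rw [anisoScale_apply, ContinuousLinearMap.id_apply]
  module

theorem norm_anisoScale_apply_le (ℓ : E →L[ℂ] ℂ) (a : E) (e : ℂ) (v : E) :
    ‖anisoScale ℓ a e v‖ ≤ ‖e‖ ^ 2 * ‖ℓ v‖ * ‖a‖ + ‖e‖ * (‖v‖ + ‖ℓ‖ * ‖v‖ * ‖a‖) := by
  rw [anisoScale_apply]
  refine (norm_add_le _ _).trans ?_
  rw [norm_smul, norm_neg, norm_mul, norm_pow, norm_smul]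
  gcongr
  refine (norm_add_le _ _).trans ?_
  rw [norm_smul]
  gcongr
  exact ℓ.le_opNorm v

theorem norm_anisoScale_apply_le_of_norm_le_one (ℓ : E →L[ℂ] ℂ) (a : E) {e : ℂ} (he : ‖e‖ ≤ 1)
    {v : E} (hv : ‖v‖ ≤ 1) :
    ‖anisoScale ℓ a e v‖ ≤ ‖e‖ * (1 + 2 * (‖ℓ‖ * ‖a‖)) := by
  refine (norm_anisoScale_apply_le ℓ a e v).trans ?_
  calc ‖e‖ ^ 2 * ‖ℓ v‖ * ‖a‖ + ‖e‖ * (‖v‖ + ‖ℓ‖ * ‖v‖ * ‖a‖)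
      ≤ ‖e‖ * 1 * (‖ℓ‖ * 1) * ‖a‖ + ‖e‖ * (1 + ‖ℓ‖ * 1 * ‖a‖) := by
        rw [sq]
        gcongr
        exact ℓ.le_opNorm_of_le hv
    _ = _ := by ring

theorem norm_apply_smul_add_anisoScale_add_le (ha : ℓ a = -1) (x e : ℂ) {v : E} (hv : ‖v‖ ≤ 1) :
    ‖ℓ (x • a + anisoScale ℓ a e v) + x‖ ≤ ‖e‖ ^ 2 * ‖ℓ‖ := by
  have h : ℓ (x • a + anisoScale ℓ a e v) + x = e ^ 2 * ℓ v := by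
    rw [map_add, map_smul, ha, apply_anisoScale ha, smul_eq_mul]
    ring
  rw [h, norm_mul, norm_pow]
  gcongr
  exact ℓ.le_of_opNorm_le_of_le le_rfl hv |>.trans_eq (mul_one _)

theorem half_re_le_re_neg_apply (ha : ℓ a = -1) {x e : ℂ} (he : ‖e‖ ^ 2 * ‖ℓ‖ ≤ x.re / 2) {v : E}
    (hv : ‖v‖ ≤ 1) : x.re / 2 ≤ (-ℓ (x • a + anisoScale ℓ a e v)).re := by
  have h := ((re_le_norm _).trans (norm_apply_smul_add_anisoScale_add_le ha x e hv)).trans he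
  rw [add_re] at h
  rw [neg_re]
  linarith

theorem norm_apply_le_two_mul (ha : ℓ a = -1) {x e : ℂ} (he : ‖e‖ ^ 2 * ‖ℓ‖ ≤ x.re / 2) {v : E}
    (hv : ‖v‖ ≤ 1) : ‖-ℓ (x • a + anisoScale ℓ a e v)‖ ≤ 2 * ‖x‖ := by
  have h := norm_sub_le (ℓ (x • a + anisoScale ℓ a e v) + x) x
  rw [add_sub_cancel_right] at h
  rw [norm_neg]
  linarith [norm_apply_smul_add_anisoScale_add_le ha x e hv, re_le_norm x, norm_nonneg x]

theorem add_anisoScale_mem_innerRegion (p : E) {C : ℝ} (hC : 0 ≤ C) (ha : ℓ a = -1) {x e : ℂ}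
    (hx : 8 * C * (‖x‖ * ‖a‖) ^ 2 < x.re) (he : ‖e‖ ≤ 1) (heℓ : ‖e‖ ^ 2 * ‖ℓ‖ ≤ x.re / 2)
    (heC : 8 * C * (‖e‖ * (1 + 2 * (‖ℓ‖ * ‖a‖))) ^ 2 ≤ x.re) {v : E} (hv : ‖v‖ ≤ 1) :
    p + x • a + anisoScale ℓ a e v ∈ innerRegion p ℓ C := by
  rw [innerRegion, mem_ofPred_eq, add_assoc, add_sub_cancel_left]
  refine lt_of_lt_of_le ?_ (half_re_le_re_neg_apply ha heℓ hv)
  have hnorm : ‖x • a + anisoScale ℓ a e v‖ ≤ ‖x‖ * ‖a‖ + ‖e‖ * (1 + 2 * (‖ℓ‖ * ‖a‖)) :=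
    (norm_add_le _ _).trans
      (add_le_add (norm_smul_le _ _) (norm_anisoScale_apply_le_of_norm_le_one ℓ a he hv))
  calc C * ‖x • a + anisoScale ℓ a e v‖ ^ 2
      ≤ C * (2 * ((‖x‖ * ‖a‖) ^ 2 + (‖e‖ * (1 + 2 * (‖ℓ‖ * ‖a‖))) ^ 2)) := by
        gcongr
        exact (pow_le_pow_left₀ (norm_nonneg _) hnorm 2).trans add_sq_le
    _ < x.re / 2 := by linarith

theorem exists_anisotropic_radius (ℓ : E →L[ℂ] ℂ) (a : E) {C : ℝ} (hC : 0 ≤ C) :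
    ∃ K > 0, ∃ η > 0, η ≤ 1 ∧ ∀ x : ℂ, K * ‖x‖ ^ 2 < x.re →
      8 * C * (‖x‖ * ‖a‖) ^ 2 < x.re ∧ η * √x.re ≤ 1 ∧ (η * √x.re) ^ 2 * ‖ℓ‖ ≤ x.re / 2 ∧
        8 * C * (η * √x.re * (1 + 2 * (‖ℓ‖ * ‖a‖))) ^ 2 ≤ x.re := by
  set A := 1 + 2 * (‖ℓ‖ * ‖a‖)
  have hcont : Continuous fun η : ℝ => η ^ 2 * (‖ℓ‖ + 8 * C * A ^ 2) := by fun_prop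
  have hsmall : ∀ᶠ η in 𝓝[>] (0 : ℝ), η ^ 2 * (‖ℓ‖ + 8 * C * A ^ 2) < 1 / 2 :=
    (hcont.continuousAt.eventually_lt continuousAt_const (by norm_num)).filter_mono
      nhdsWithin_le_nhds
  obtain ⟨η, hη, hη₀, hη₁⟩ := (hsmall.and (Ioo_mem_nhdsGT (zero_lt_one' ℝ))).exists
  refine ⟨8 * C * ‖a‖ ^ 2 + 1, by positivity, η, hη₀, hη₁.le, fun x hx => ?_⟩
  have hCx : 0 ≤ 8 * C * ‖a‖ ^ 2 * ‖x‖ ^ 2 := by positivity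
  have hx₀ : 0 < x.re := by nlinarith [sq_nonneg ‖x‖]
  have hx₁ : x.re ≤ 1 := by nlinarith [re_le_norm x]
  have hsq : √x.re ^ 2 = x.re := Real.sq_sqrt hx₀.le
  have hℓη : 0 ≤ η ^ 2 * ‖ℓ‖ := by positivity
  have hCη : 0 ≤ η ^ 2 * (8 * C * A ^ 2) := by positivity
  refine ⟨by nlinarith [sq_nonneg ‖x‖], mul_le_one₀ hη₁.le (Real.sqrt_nonneg _)
    (Real.sqrt_le_one.2 hx₁), ?_, ?_⟩
  · rw [mul_pow, hsq]
    nlinarith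
  · rw [mul_pow, mul_pow, hsq]
    nlinarith

/- In the splitting `ℂ a ⊕ ker ℓ` the map `T` is bounded by `k ^ 2` in the first and by `k` in the
second component, so the inverse scaling `anisoScale ℓ a k⁻¹` makes it bounded. -/
theorem norm_anisoScale_inv_comp_le {T : E →L[ℂ] E} {k A₁ A₂ : ℝ} (hk : 0 < k)
    (hT : ‖T‖ ≤ A₁ * k) (hℓT : ‖ℓ.comp T‖ ≤ A₂ * k ^ 2) :
    ‖(anisoScale ℓ a (k : ℂ)⁻¹).comp T‖ ≤ A₂ * ‖a‖ + (A₁ + ‖ℓ‖ * A₁ * ‖a‖) := by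
  have hA₁ : 0 ≤ A₁ := nonneg_of_mul_nonneg_left ((norm_nonneg _).trans hT) hk
  have hA₂ : 0 ≤ A₂ := nonneg_of_mul_nonneg_left ((norm_nonneg _).trans hℓT) (by positivity)
  refine ContinuousLinearMap.opNorm_le_bound _ (by positivity) fun v => ?_
  refine (norm_anisoScale_apply_le _ _ _ _).trans ?_
  rw [norm_inv, norm_real, Real.norm_of_nonneg hk.le]
  calc k⁻¹ ^ 2 * ‖ℓ (T v)‖ * ‖a‖ + k⁻¹ * (‖T v‖ + ‖ℓ‖ * ‖T v‖ * ‖a‖)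
      ≤ k⁻¹ ^ 2 * (A₂ * k ^ 2 * ‖v‖) * ‖a‖ +
        k⁻¹ * (A₁ * k * ‖v‖ + ‖ℓ‖ * (A₁ * k * ‖v‖) * ‖a‖) := by
        gcongr
        · exact (ℓ.comp T).le_of_opNorm_le hℓT v
        · exact T.le_of_opNorm_le hT v
        · exact T.le_of_opNorm_le hT v
    _ = _ := by field_simp

theorem det_clm_comp (A B : E →L[ℂ] E) : (A.comp B).det = A.det * B.det := by
  rw [ContinuousLinearMap.det, ContinuousLinearMap.toLinearMap_comp, LinearMap.det_comp]

variable [FiniteDimensional ℂ E]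

theorem exists_norm_det_le (R : ℝ) : ∃ C > 0, ∀ A : E →L[ℂ] E, ‖A‖ ≤ R → ‖A.det‖ ≤ C := by
  have : ProperSpace (E →L[ℂ] E) := FiniteDimensional.proper ℂ _
  obtain ⟨C, hC⟩ := (isCompact_closedBall (0 : E →L[ℂ] E) R).exists_bound_of_continuousOn
    (ContinuousLinearMap.continuous_det (𝕜 := ℂ) (E := E)).continuousOn
  exact ⟨max C 1, by positivity, fun A hA =>
    (hC A (mem_closedBall_zero_iff.2 hA)).trans (le_max_left _ _)⟩

theorem exists_norm_det_anisoScale_le (ℓ : E →L[ℂ] ℂ) (a : E) :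
    ∃ C > 0, ∀ e : ℝ, 1 ≤ e →
      ‖(anisoScale ℓ a e).det‖ ≤ C * e ^ (2 * Module.finrank ℂ E) := by
  let A : ℝ → E →L[ℂ] E := fun e =>
    -ℓ.smulRight a + (e : ℂ)⁻¹ • (ContinuousLinearMap.id ℂ E + ℓ.smulRight a)
  obtain ⟨C, hC, hdet⟩ := exists_norm_det_le (E := E)
    (‖ℓ.smulRight a‖ + ‖ContinuousLinearMap.id ℂ E + ℓ.smulRight a‖)
  refine ⟨C, hC, fun e he => ?_⟩
  have he₀ : 0 < e := by linarith
  have hne : (e : ℂ) ≠ 0 := ofReal_ne_zero.2 he₀.ne'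
  have hA : ‖A e‖ ≤ ‖ℓ.smulRight a‖ + ‖ContinuousLinearMap.id ℂ E + ℓ.smulRight a‖ := by
    refine (norm_add_le _ _).trans ?_
    rw [norm_neg, norm_smul, norm_inv, norm_real, Real.norm_of_nonneg he₀.le]
    gcongr
    exact mul_le_of_le_one_left (norm_nonneg _) (inv_le_one_of_one_le₀ he)
  have hscale : anisoScale ℓ a e = ((e : ℂ) ^ 2) • A e := by
    rw [anisoScale, smul_add ((e : ℂ) ^ 2), smul_smul, smul_neg, neg_smul,
      show (e : ℂ) ^ 2 * (e : ℂ)⁻¹ = e by field_simp]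
  rw [hscale, ContinuousLinearMap.det, ContinuousLinearMap.toLinearMap_smul, LinearMap.det_smul,
    norm_mul, norm_pow, norm_pow, norm_real, Real.norm_of_nonneg he₀.le, ← pow_mul, mul_comm]
  gcongr
  exact hdet _ hA

theorem exists_norm_det_le_of_comp_anisoScale (ha : ℓ a = -1) (A₁ A₂ : ℝ) :
    ∃ D > 0, ∀ (L : E →L[ℂ] E) (k d : ℝ), 0 < d → d ≤ k → ‖L.comp (anisoScale ℓ a d)‖ ≤ A₁ * k →
      ‖ℓ.comp (L.comp (anisoScale ℓ a d))‖ ≤ A₂ * k ^ 2 →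
      ‖L.det‖ ≤ D * (k / d) ^ (2 * Module.finrank ℂ E) := by
  obtain ⟨D₁, hD₁, hdet⟩ := exists_norm_det_le (E := E)
    (A₂ * ‖a‖ + (A₁ + ‖ℓ‖ * A₁ * ‖a‖))
  obtain ⟨D₂, hD₂, hdetS⟩ := exists_norm_det_anisoScale_le ℓ a
  refine ⟨D₁ * D₂, mul_pos hD₁ hD₂, fun L k d hd hdk hT hℓT => ?_⟩
  set M := (anisoScale ℓ a (k : ℂ)⁻¹).comp (L.comp (anisoScale ℓ a d)) with hM
  have hk : (k : ℂ) ≠ 0 := ofReal_ne_zero.2 (hd.trans_le hdk).ne'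
  have hd' : (d : ℂ) ≠ 0 := ofReal_ne_zero.2 hd.ne'
  have hL : L = ((anisoScale ℓ a k).comp M).comp (anisoScale ℓ a (d : ℂ)⁻¹) := by
    rw [hM, ← ContinuousLinearMap.comp_assoc, anisoScale_comp_anisoScale ha, mul_inv_cancel₀ hk,
      anisoScale_one, ContinuousLinearMap.id_comp, ContinuousLinearMap.comp_assoc,
      anisoScale_comp_anisoScale ha, mul_inv_cancel₀ hd', anisoScale_one,
      ContinuousLinearMap.comp_id]
  have hLdet : L.det = M.det * (anisoScale ℓ a ((k / d : ℝ) : ℂ)).det := by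
    clear_value M
    rw [hL, det_clm_comp, det_clm_comp, ofReal_div, div_eq_mul_inv,
      ← anisoScale_comp_anisoScale ha, det_clm_comp]
    ring
  rw [hLdet, norm_mul, mul_assoc]
  gcongr
  · exact hdet M (norm_anisoScale_inv_comp_le (hd.trans_le hdk) hT hℓT)
  · exact hdetS _ ((one_le_div hd).2 hdk)

end AnisotropicScaling

section DeterminantBound

theorem norm_le_of_re_inv_le {X Q : ℂ} {s t : ℝ} (hs : 0 < s) (hre : s ≤ X.re) (hX : ‖X‖ ≤ t)
    (hQ : (X⁻¹).re / 2 ≤ (-Q⁻¹).re) : ‖Q‖ ≤ 2 * t ^ 2 / s := by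
  have hX₀ : 0 < ‖X‖ := (hs.trans_le hre).trans_le (re_le_norm X)
  have hinv : s / (2 * t ^ 2) ≤ ‖Q‖⁻¹ :=
    calc s / (2 * t ^ 2) ≤ X.re / (2 * ‖X‖ ^ 2) := by gcongr; exact hs.le.trans hre
      _ = (X⁻¹).re / 2 := by rw [inv_re, normSq_eq_norm_sq]; ring
      _ ≤ ‖Q‖⁻¹ := hQ.trans ((re_le_norm _).trans_eq (by rw [norm_neg, norm_inv]))
  have ht : 0 < t := hX₀.trans_le hX
  rw [← inv_div]
  exact le_inv_of_le_inv₀ (by positivity) hinv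

variable {E : Type*} [NormedAddCommGroup E] [NormedSpace ℂ E]
  {Ω : Set E} {p a : E} {ℓ : E →L[ℂ] ℂ} {B : E →L[ℂ] E →L[ℂ] ℂ} {r c C : ℝ}

theorem hasFDerivAt_quadPoly (p : E) (ℓ : E →L[ℂ] ℂ) (B : E →L[ℂ] E →L[ℂ] ℂ) (z : E) :
    HasFDerivAt (quadPoly p ℓ B) (ℓ + (B (z - p) + B.flip (z - p))) z := by
  have hsub : HasFDerivAt (fun z : E => z - p) (ContinuousLinearMap.id ℂ E) z :=
    (hasFDerivAt_id z).sub_const p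
  have := (ℓ.hasFDerivAt.comp z hsub).add ((B.hasFDerivAt.comp z hsub).clm_apply hsub)
  refine this.congr_fderiv ?_
  ext v
  simp

theorem norm_apply_add_flip_apply_le (B : E →L[ℂ] E →L[ℂ] ℂ) {w : E} {m : ℝ} (hw : ‖w‖ ≤ m) :
    ‖B w + B.flip w‖ ≤ 2 * (‖B‖ * m) := by
  have hB : ‖B w‖ ≤ ‖B‖ * m := B.le_opNorm_of_le hw
  have hflip : ‖B.flip w‖ ≤ ‖B‖ * m := by
    rw [← ContinuousLinearMap.opNorm_flip B]
    exact B.flip.le_opNorm_of_le hw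
  linarith [norm_add_le (B w) (B.flip w)]

theorem norm_comp_fderiv_le_of_norm_quadPoly_le {f : E → E} {x : E} {m q : ℝ}
    (hf : DifferentiableOn ℂ f (ball x 1)) (hm : ∀ v ∈ ball x 1, ‖f v - p‖ ≤ m)
    (hq : ∀ v ∈ ball x 1, ‖quadPoly p ℓ B (f v)‖ ≤ q) :
    ‖ℓ.comp (fderiv ℂ f x)‖ ≤ 2 * q + 4 * ‖B‖ * m ^ 2 := by
  have hx := mem_ball_self (x := x) one_pos
  have hm₀ : 0 ≤ m := (norm_nonneg _).trans (hm x hx)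
  set A := B (f x - p) + B.flip (f x - p)
  have hfx := (hf.differentiableAt (isOpen_ball.mem_nhds hx)).hasFDerivAt
  have hT : ‖fderiv ℂ f x‖ ≤ 2 * m := by
    simpa [fderiv_sub_const] using
      norm_fderiv_le_of_forall_norm_le one_pos (hf.sub_const p) hm
  have hquad : ‖(ℓ + A).comp (fderiv ℂ f x)‖ ≤ 2 * q := by
    rw [← ((hasFDerivAt_quadPoly p ℓ B (f x)).comp x hfx).fderiv]
    simpa using norm_fderiv_le_of_forall_norm_le one_pos
      ((differentiable_quadPoly p ℓ B).comp_differentiableOn hf) hq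
  have hA : ‖A.comp (fderiv ℂ f x)‖ ≤ 2 * (‖B‖ * m) * (2 * m) :=
    (A.opNorm_comp_le _).trans
      (mul_le_mul (norm_apply_add_flip_apply_le B (hm x hx)) hT (norm_nonneg _) (by positivity))
  calc ‖ℓ.comp (fderiv ℂ f x)‖ = ‖(ℓ + A).comp (fderiv ℂ f x) - A.comp (fderiv ℂ f x)‖ := by
        rw [ContinuousLinearMap.add_comp, add_sub_cancel_right]
    _ ≤ 2 * q + 2 * (‖B‖ * m) * (2 * m) := (norm_sub_le _ _).trans (add_le_add hquad hA)
    _ = _ := by ring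

theorem exists_norm_det_fderiv_le_of_norm_quadPoly_le [FiniteDimensional ℂ E] (p : E)
    (B : E →L[ℂ] E →L[ℂ] ℂ) (ha : ℓ a = -1) (m q : ℝ) :
    ∃ D > 0, ∀ (G : E → E) (z : E) (k d : ℝ), 0 < d → d ≤ k → DifferentiableAt ℂ G z →
      DifferentiableOn ℂ (fun v => G (z + anisoScale ℓ a d v)) (ball 0 1) →
      (∀ v ∈ ball 0 1, ‖G (z + anisoScale ℓ a d v) - p‖ ≤ m * k) →
      (∀ v ∈ ball 0 1, ‖quadPoly p ℓ B (G (z + anisoScale ℓ a d v))‖ ≤ q * k ^ 2) →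
      ‖(fderiv ℂ G z).det‖ ≤ D * (k / d) ^ (2 * Module.finrank ℂ E) := by
  obtain ⟨D, hD, hdet⟩ := exists_norm_det_le_of_comp_anisoScale ha (2 * m)
    (2 * q + 4 * ‖B‖ * m ^ 2)
  refine ⟨D, hD, fun G z k d hd hdk hGz hGS hnorm hquad => ?_⟩
  have hfderiv : fderiv ℂ (fun v => G (z + anisoScale ℓ a d v)) 0 =
      (fderiv ℂ G z).comp (anisoScale ℓ a d) := by
    have hGz' := hGz.hasFDerivAt
    rw [← add_zero z, ← map_zero (anisoScale ℓ a d)] at hGz'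
    have := (hGz'.comp 0 ((anisoScale ℓ a d).hasFDerivAt.const_add z)).fderiv
    rwa [map_zero, add_zero] at this
  refine hdet _ k d hd hdk ?_ ?_
  · have := norm_fderiv_le_of_forall_norm_le one_pos (hGS.sub_const p) hnorm
    rw [fderiv_sub_const, hfderiv] at this
    linarith
  · have := norm_comp_fderiv_le_of_norm_quadPoly_le hGS hnorm hquad
    rw [hfderiv] at this
    linarith

namespace IsSupportAt

theorem mul_norm_sq_le_norm_quadPoly (h : IsSupportAt Ω p ℓ B r c C) {z : E} (hz : z ∈ Ω)
    (hzr : z ∈ ball p r) : c * ‖z - p‖ ^ 2 ≤ ‖quadPoly p ℓ B z‖ := by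
  linarith [h.peak z (subset_closure hz) hzr, neg_abs_le (quadPoly p ℓ B z).re,
    abs_re_le_norm (quadPoly p ℓ B z)]

theorem exists_anisotropic_bound (h : IsSupportAt Ω p ℓ B r c C) (hΩ : Bornology.IsBounded Ω)
    (ha : ℓ a = -1) :
    ∃ K > 0, ∃ η > 0, η ≤ 1 ∧ ∀ G : E → E, DifferentiableOn ℂ G Ω → MapsTo G Ω Ω →
      ((fun z => G z - z) =o[𝓝[Ω] p] fun z => ‖z - p‖ ^ 1) → ∀ x : ℂ, K * ‖x‖ ^ 2 < x.re →
      ∀ v ∈ ball (0 : E) 1, p + x • a + anisoScale ℓ a (η * √x.re : ℝ) v ∈ Ω ∧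
        ‖G (p + x • a + anisoScale ℓ a (η * √x.re : ℝ) v) - p‖ < r / 2 ∧
        ‖quadPoly p ℓ B (G (p + x • a + anisoScale ℓ a (η * √x.re : ℝ) v))‖ ≤
          16 * (‖x‖ ^ 2 / x.re) := by
  obtain ⟨C₁, hC₁, hunif⟩ := h.exists_uniform_bound hΩ
  have hC₁₀ := h.nonneg.trans hC₁
  obtain ⟨K, hK, η, hη, hη₁, hradius⟩ := exists_anisotropic_radius ℓ a hC₁₀
  refine ⟨K, hK, η, hη, hη₁, fun G hG hmaps hflat x hx v hv => ?_⟩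
  obtain ⟨hx₁, he₁, heℓ, heC⟩ := hradius x hx
  have hx₀ : 0 < x.re := lt_of_le_of_lt (by positivity) hx
  have hnorm : ‖((η * √x.re : ℝ) : ℂ)‖ = η * √x.re :=
    (norm_real _).trans (Real.norm_of_nonneg (by positivity))
  rw [← hnorm] at he₁ heℓ heC
  have hv₁ := (mem_ball_zero_iff.1 hv).le
  have hmem := add_anisoScale_mem_innerRegion p hC₁₀ ha hx₁ he₁ heℓ heC hv₁
  obtain ⟨hclose, hquad⟩ := hunif G hG hmaps hflat _ hmem
  refine ⟨h.inner_subset ((mul_le_mul_of_nonneg_right hC₁ (sq_nonneg _)).trans_lt hmem),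
    hclose, ?_⟩
  rw [add_assoc, add_sub_cancel_left, ← add_assoc] at hquad
  refine (norm_le_of_re_inv_le (half_pos hx₀) (half_re_le_re_neg_apply ha heℓ hv₁)
    (norm_apply_le_two_mul ha heℓ hv₁) hquad).trans_eq ?_
  ring

theorem exists_norm_det_fderiv_le [FiniteDimensional ℂ E] (h : IsSupportAt Ω p ℓ B r c C)
    (hΩo : IsOpen Ω) (hΩ : Bornology.IsBounded Ω) (ha : ℓ a = -1) :
    ∃ K > 0, ∃ D > 0, ∀ G : E → E, DifferentiableOn ℂ G Ω → MapsTo G Ω Ω →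
      ((fun z => G z - z) =o[𝓝[Ω] p] fun z => ‖z - p‖ ^ 1) → ∀ x : ℂ, K * ‖x‖ ^ 2 < x.re →
      p + x • a ∈ Ω ∧ ‖G (p + x • a) - p‖ < r / 2 ∧
        c * ‖G (p + x • a) - p‖ ^ 2 ≤ 16 * (‖x‖ ^ 2 / x.re) ∧
        ‖(fderiv ℂ G (p + x • a)).det‖ ≤ D * (‖x‖ / x.re) ^ (2 * Module.finrank ℂ E) := by
  have hc := h.peak_pos
  obtain ⟨K, hK, η, hη, hη₁, hbound⟩ := h.exists_anisotropic_bound hΩ ha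
  obtain ⟨D, hD, hdet⟩ := exists_norm_det_fderiv_le_of_norm_quadPoly_le p B ha (4 / √c) 16
  refine ⟨K, hK, D * η⁻¹ ^ (2 * Module.finrank ℂ E), by positivity,
    fun G hG hmaps hflat x hx => ?_⟩
  have hx₀ : 0 < x.re := lt_of_le_of_lt (by positivity) hx
  have hsqrt : 0 < √x.re := Real.sqrt_pos.2 hx₀
  have hsq : √x.re ^ 2 = x.re := Real.sq_sqrt hx₀.le
  set S := anisoScale ℓ a (η * √x.re : ℝ)
  set k := ‖x‖ / √x.re with hk
  have hk₂ : k ^ 2 = ‖x‖ ^ 2 / x.re := by rw [hk, div_pow, hsq]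
  replace hbound := hbound G hG hmaps hflat x hx
  rw [← hk₂] at hbound ⊢
  have hnorm : ∀ v ∈ ball (0 : E) 1, c * ‖G (p + x • a + S v) - p‖ ^ 2 ≤ 16 * k ^ 2 := fun v hv =>
    (h.mul_norm_sq_le_norm_quadPoly (hmaps (hbound v hv).1) (mem_ball_iff_norm.2
      ((hbound v hv).2.1.trans (half_lt_self h.radius_pos)))).trans (hbound v hv).2.2
  have hcentre : p + x • a + S 0 = p + x • a := by rw [map_zero, add_zero]
  have h0 := mem_ball_self (x := (0 : E)) one_pos
  have hmem : p + x • a ∈ Ω := hcentre ▸ (hbound 0 h0).1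
  refine ⟨hmem, hcentre ▸ (hbound 0 h0).2.1, hcentre ▸ hnorm 0 h0, ?_⟩
  refine (hdet G _ k (η * √x.re) (by positivity) ?_ (hG.differentiableAt (hΩo.mem_nhds hmem))
    (hG.comp (by fun_prop) fun v hv => (hbound v hv).1) (fun v hv => ?_)
    fun v hv => (hbound v hv).2.2).trans_eq ?_
  · rw [hk, le_div_iff₀ hsqrt, mul_assoc, ← sq, hsq]
    exact (mul_le_of_le_one_left hx₀.le hη₁).trans (re_le_norm x)
  · refine le_of_sq_le_sq ?_ (by positivity)
    rw [mul_pow, div_pow, Real.sq_sqrt hc.le, div_mul_eq_mul_div, le_div_iff₀ hc]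
    linarith [hnorm v hv]
  · have hratio : k / (η * √x.re) = η⁻¹ * (‖x‖ / x.re) := by
      rw [hk, ← hsq, Real.sqrt_sq hsqrt.le]
      field_simp
    rw [hratio, mul_pow, mul_assoc]

end IsSupportAt

end DeterminantBound

section Hopf

variable {V : Type*} [NormedAddCommGroup V] [NormedSpace ℂ V]

theorem norm_le_of_forall_mem_sphere_norm_le {f : ℂ → V} {c z : ℂ} {s R M : ℝ}
    (hf : DifferentiableOn ℂ f (closedBall c R \ ball c s)) (hs : ∀ x ∈ sphere c s, ‖f x‖ ≤ M)
    (hR : ∀ x ∈ sphere c R, ‖f x‖ ≤ M) (hz : z ∈ ball c R \ closedBall c s) : ‖f z‖ ≤ M := by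
  have hopen : IsOpen (ball c R \ closedBall c s) := isOpen_ball.sdiff isClosed_closedBall
  have hclosure : closure (ball c R \ closedBall c s) ⊆ closedBall c R \ ball c s :=
    closure_minimal (sdiff_subset_sdiff ball_subset_closedBall ball_subset_closedBall)
      (isClosed_closedBall.sdiff isOpen_ball)
  refine Complex.norm_le_of_forall_mem_frontier_norm_le (isBounded_ball.subset sdiff_subset)
    (hf.mono hclosure).diffContOnCl (fun x hx => ?_) (subset_closure hz)
  rw [hopen.frontier_eq] at hx
  obtain ⟨hxR, hxs⟩ := hclosure hx.1
  rcases eq_or_lt_of_le (mem_closedBall.1 hxR) with h | h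
  · exact hR x h
  · have : x ∈ closedBall c s := by_contra fun h' => hx.2 ⟨h, h'⟩
    exact hs x (le_antisymm this (not_lt.1 hxs))

theorem norm_le_mul_div_pow_of_forall_mem_sphere {f : ℂ → V} {c z : ℂ} {s R M : ℝ} {j : ℕ}
    (hs₀ : 0 < s) (hf : DifferentiableOn ℂ f (closedBall c R \ ball c s))
    (hs : ∀ x ∈ sphere c s, ‖f x‖ ≤ M * (s / R) ^ j) (hR : ∀ x ∈ sphere c R, ‖f x‖ ≤ M)
    (hz : z ∈ ball c R \ closedBall c s) : ‖f z‖ ≤ M * (dist z c / R) ^ j := by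
  have hsz : s < dist z c := not_le.1 hz.2
  have hR₀ : 0 < R := hs₀.trans (hsz.trans hz.1)
  have hne : ∀ x ∈ closedBall c R \ ball c s, x - c ≠ 0 := fun x hx h => hx.2 <| by
    rw [mem_ball_iff_norm, h, norm_zero]
    exact hs₀
  have hnorm : ∀ x, ‖((R / (x - c)) ^ j) • f x‖ = (R / dist x c) ^ j * ‖f x‖ := fun x => by
    rw [norm_smul, norm_pow, norm_div, norm_real, Real.norm_of_nonneg hR₀.le, dist_eq_norm]
  have hinv : ∀ d : ℝ, 0 < d → (d / R) ^ j * (R / d) ^ j = 1 := fun d hd => by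
    rw [← mul_pow, div_mul_div_cancel₀ hR₀.ne', div_self hd.ne', one_pow]
  have hmax := norm_le_of_forall_mem_sphere_norm_le (f := fun x => ((R / (x - c)) ^ j) • f x)
    (M := M) (by fun_prop (disch := assumption)) (fun x hx => ?_) (fun x hx => ?_) hz
  · rw [hnorm] at hmax
    calc ‖f z‖ = (dist z c / R) ^ j * ((R / dist z c) ^ j * ‖f z‖) := by
          rw [← mul_assoc, hinv _ (hs₀.trans hsz), one_mul]
      _ ≤ _ := by rw [mul_comm M]; gcongr
  · rw [hnorm, mem_sphere.1 hx]
    calc (R / s) ^ j * ‖f x‖ ≤ (R / s) ^ j * (M * (s / R) ^ j) := by gcongr; exact hs x hx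
      _ = M := by rw [mul_left_comm, mul_comm ((R / s) ^ j), hinv s hs₀, mul_one]
  · rw [hnorm, mem_sphere.1 hx, div_self hR₀.ne', one_pow, one_mul]
    exact hR x hx

theorem norm_div_pow_smul_le {v : V} {x : ℂ} {t A : ℝ} {N : ℕ} (ht : 0 < t) (htx : t ≤ 2 * x.re)
    (hv : ‖v‖ ≤ A * (‖x‖ / x.re) ^ N) : ‖((t / x) ^ N) • v‖ ≤ A * 2 ^ N := by
  have hxre : 0 < x.re := by linarith
  have hxn : 0 < ‖x‖ := hxre.trans_le (re_le_norm x)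
  have hA : 0 ≤ A := nonneg_of_mul_nonneg_left ((norm_nonneg _).trans hv) (by positivity)
  rw [norm_smul, norm_pow, norm_div, norm_real, Real.norm_of_nonneg ht.le]
  calc (t / ‖x‖) ^ N * ‖v‖ ≤ (t / ‖x‖) ^ N * (A * (‖x‖ / x.re) ^ N) := by gcongr
    _ = A * (t / x.re) ^ N := by rw [mul_left_comm, ← mul_pow, div_mul_div_cancel₀ hxn.ne']
    _ ≤ A * 2 ^ N := by gcongr; exact (div_le_iff₀ hxre).2 htx

/- Hopf's lemma at the boundary point `0` of `ball x₀ x₀`. The factor `(t / x) ^ N` compensates the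
growth of `f` allowed by `hbound`, after which the two circles estimate applies. -/
theorem norm_le_of_hopf {f : ℂ → V} {x₀ s M q t : ℝ} {N j : ℕ} (hs : 0 < s)
    (hM : 0 ≤ M) (hq : 0 ≤ q) (hqs : q ≤ s / x₀) (hf : DifferentiableOn ℂ f (ball (x₀ : ℂ) x₀))
    (hbound : ∀ x ∈ ball (x₀ : ℂ) x₀, ‖f x‖ ≤ M * (‖x‖ / x.re) ^ N)
    (hsmall : ∀ x ∈ closedBall (x₀ : ℂ) s, ‖f x‖ ≤ M * q ^ j) (ht : 0 < t) (hts : t < x₀ - s) :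
    ‖f t‖ ≤ M * 2 ^ N * (1 - t / (2 * x₀)) ^ j := by
  have hx₀ : 0 < x₀ := by linarith
  set R := x₀ - t / 2 with hR
  have hR₀ : 0 < R := by linarith
  have hsub : closedBall (x₀ : ℂ) R ⊆ ball (x₀ : ℂ) x₀ := closedBall_subset_ball (by linarith)
  have hsR : sphere (x₀ : ℂ) s ⊆ closedBall (x₀ : ℂ) R :=
    sphere_subset_closedBall.trans (closedBall_subset_closedBall (by linarith))
  have hre : ∀ x ∈ closedBall (x₀ : ℂ) R, t ≤ 2 * x.re := fun x hx => by
    have := neg_le_of_abs_le ((abs_re_le_norm _).trans (mem_closedBall_iff_norm.1 hx))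
    rw [sub_re, ofReal_re] at this
    linarith
  have hne : ∀ x ∈ closedBall (x₀ : ℂ) R \ ball (x₀ : ℂ) s, x ≠ 0 := fun x hx h => by
    have := hre x hx.1
    rw [h, zero_re] at this
    linarith
  have hdist : dist (t : ℂ) x₀ = x₀ - t := by
    rw [dist_comm, dist_eq, ← ofReal_sub, norm_real, Real.norm_of_nonneg (by linarith)]
  have htwo := norm_le_mul_div_pow_of_forall_mem_sphere (f := fun x => ((t / x) ^ N) • f x)
    (c := x₀) (z := t) (R := R) (M := M * 2 ^ N) (j := j) hs ?_ (fun x hx => ?_)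
    (fun x hx => norm_div_pow_smul_le ht (hre x (sphere_subset_closedBall hx))
      (hbound x (hsub (sphere_subset_closedBall hx)))) ?_
  · rw [div_self (ofReal_ne_zero.2 ht.ne'), one_pow, one_smul, hdist] at htwo
    refine htwo.trans ?_
    have : 0 ≤ x₀ - t := by linarith
    gcongr
    rw [div_le_iff₀ hR₀, hR]
    have : (1 - t / (2 * x₀)) * (x₀ - t / 2) = x₀ - t + t ^ 2 / (4 * x₀) := by field_simp; ring
    linarith [show 0 ≤ t ^ 2 / (4 * x₀) by positivity]
  · have hfR := hf.mono (sdiff_subset.trans hsub : closedBall (x₀ : ℂ) R \ ball (x₀ : ℂ) s ⊆ _)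
    fun_prop (disch := assumption)
  · have htx := hre x (hsR hx)
    have hfx : ‖f x‖ ≤ M * (s / R) ^ j * (‖x‖ / x.re) ^ N := by
      have hqR : q ≤ s / R := hqs.trans (by gcongr; linarith)
      have hone : 1 ≤ ‖x‖ / x.re := (one_le_div (by linarith)).2 (re_le_norm x)
      exact ((hsmall x (sphere_subset_closedBall hx)).trans (by gcongr)).trans
        (le_mul_of_one_le_right (by positivity) (one_le_pow₀ hone))
    exact (norm_div_pow_smul_le ht htx hfx).trans_eq (by ring)
  · exact ⟨by rw [mem_ball, hdist]; linarith, by rw [mem_closedBall, hdist]; linarith⟩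

end Hopf

section LowerBound

theorem norm_iterate_sub_le_of_forall_mem_ball {V : Type*} [SeminormedAddCommGroup V] {F : V → V}
    {z : V} {δ R : ℝ} (hR : 0 < R)
    (hF : ∀ w ∈ ball z R, ‖F w - w‖ ≤ δ) {m : ℕ} (hm : m * δ < R) : ‖F^[m] z - z‖ ≤ m * δ := by
  induction m with
  | zero => simp
  | succ m ih =>
    push_cast at hm ⊢
    have hδ : 0 ≤ δ := (norm_nonneg _).trans (hF z (mem_ball_self hR))
    have hmem : F^[m] z ∈ ball z R :=
      mem_ball_iff_norm.2 ((ih (by linarith)).trans_lt (by linarith))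
    rw [iterate_succ_apply']
    linarith [norm_sub_le_norm_sub_add_norm_sub (F (F^[m] z)) (F^[m] z) z, hF _ hmem,
      ih (by linarith)]

variable {E : Type*} [NormedAddCommGroup E] [NormedSpace ℂ E] {Ω : Set E} {p a : E} {F : E → E}

theorem eventually_forall_mem_ball_norm_sub_le {k : ℕ}
    (hF : (fun z => F z - z) =o[𝓝[Ω] p] fun z => ‖z - p‖ ^ k) {c : ℝ} (hc : 0 < c)
    (hball : ∀ᶠ t : ℝ in 𝓝[>] 0, ball (p + (t : ℂ) • a) (c * t) ⊆ Ω) {ε : ℝ} (hε : 0 < ε) :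
    ∀ᶠ t : ℝ in 𝓝[>] 0, ∀ w ∈ ball (p + (t : ℂ) • a) (c * t), ‖F w - w‖ ≤ ε * t ^ k := by
  set M := ‖a‖ + c
  have hM : 0 < M := by positivity
  obtain ⟨δ, hδ, hF⟩ := Metric.mem_nhdsWithin_iff.1 (hF.def (c := ε / M ^ k) (by positivity))
  filter_upwards [hball, Ioo_mem_nhdsGT (div_pos hδ hM)] with t hsub ⟨ht, htδ⟩ w hw
  have hwp : ‖w - p‖ ≤ M * t := by
    have hta : ‖(t : ℂ) • a‖ = t * ‖a‖ := by
      rw [norm_smul, norm_real, Real.norm_of_nonneg ht.le]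
    have hw' := mem_ball_iff_norm.1 hw
    rw [← sub_sub] at hw'
    linarith [norm_le_norm_sub_add (w - p) ((t : ℂ) • a)]
  refine (hF ⟨mem_ball_iff_norm.2 (hwp.trans_lt ?_), hsub hw⟩).trans ?_
  · rwa [mul_comm, ← lt_div_iff₀ hM]
  · rw [norm_pow, norm_norm]
    calc ε / M ^ k * ‖w - p‖ ^ k ≤ ε / M ^ k * (M * t) ^ k := by gcongr
      _ = ε * t ^ k := by rw [mul_pow]; field_simp

/- Each step moves a point at distance of order `t` from `p` by `o(t ^ 2)`, so `K / t` steps move it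
by `o(t)`. -/
theorem eventually_norm_iterate_sub_le
    (hF : (fun z => F z - z) =o[𝓝[Ω] p] fun z => ‖z - p‖ ^ 2) {c : ℝ} (hc : 0 < c)
    (hball : ∀ᶠ t : ℝ in 𝓝[>] 0, ball (p + (t : ℂ) • a) (c * t) ⊆ Ω) {K ε : ℝ} (hK : 0 < K)
    (hε : 0 < ε) : ∀ᶠ t : ℝ in 𝓝[>] 0, ∀ m : ℕ, m * t ≤ K →
      ∀ z ∈ ball (p + (t : ℂ) • a) (c / 2 * t), ‖F^[m] z - z‖ ≤ ε * t := by
  set ε' := min ε (c / 4) / K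
  have hε' : 0 < ε' := by positivity
  filter_upwards [eventually_forall_mem_ball_norm_sub_le hF hc hball hε',
    self_mem_nhdsWithin] with t hstep (ht : 0 < t) m hm z hz
  have hsub : ball z (c / 2 * t) ⊆ ball (p + (t : ℂ) • a) (c * t) :=
    ball_subset_ball' (by linarith [mem_ball.1 hz])
  have hmε : m * (ε' * t ^ 2) ≤ min ε (c / 4) * t :=
    calc m * (ε' * t ^ 2) = ε' * t * (m * t) := by ring
      _ ≤ ε' * t * K := by gcongr
      _ = min ε (c / 4) * t := by simp only [ε']; field_simp
  have hmc : m * (ε' * t ^ 2) < c / 2 * t :=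
    hmε.trans_lt (by gcongr; exact (min_le_right _ _).trans_lt (by linarith))
  refine ((norm_iterate_sub_le_of_forall_mem_ball (by positivity) (fun w hw => hstep w (hsub hw))
    hmc).trans hmε).trans ?_
  gcongr
  exact min_le_left _ _

theorem eventually_half_le_norm_det [FiniteDimensional ℂ E] :
    ∀ᶠ A : E →L[ℂ] E in 𝓝 (ContinuousLinearMap.id ℂ E), 1 / 2 ≤ ‖A.det‖ := by
  have hcont : Continuous fun A : E →L[ℂ] E => ‖A.det‖ :=
    (ContinuousLinearMap.continuous_det (𝕜 := ℂ) (E := E)).norm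
  refine (hcont.tendsto _).eventually_const_le ?_
  rw [ContinuousLinearMap.det, ContinuousLinearMap.coe_id, LinearMap.det_id, norm_one]
  norm_num

theorem eventually_le_norm_det_fderiv_iterate [FiniteDimensional ℂ E]
    (hF : (fun z => F z - z) =o[𝓝[Ω] p] fun z => ‖z - p‖ ^ 2) (hd : DifferentiableOn ℂ F Ω)
    (hmaps : MapsTo F Ω Ω) {c : ℝ} (hc : 0 < c)
    (hball : ∀ᶠ t : ℝ in 𝓝[>] 0, ball (p + (t : ℂ) • a) (c * t) ⊆ Ω) {K : ℝ} (hK : 0 < K) :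
    ∀ᶠ t : ℝ in 𝓝[>] 0, ∀ m : ℕ, m * t ≤ K →
      1 / 2 ≤ ‖(fderiv ℂ F^[m] (p + (t : ℂ) • a)).det‖ := by
  obtain ⟨η, hη, hdet⟩ := Metric.eventually_nhds_iff.1 (eventually_half_le_norm_det (E := E))
  filter_upwards [eventually_norm_iterate_sub_le hF hc hball hK (ε := η * c / 8) (by positivity),
    hball, self_mem_nhdsWithin] with t hclose hsub (ht : 0 < t) m hm
  have hR : 0 < c / 2 * t := by positivity
  have hdiff : DifferentiableOn ℂ F^[m] (ball (p + (t : ℂ) • a) (c / 2 * t)) :=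
    (differentiableOn_iterate_of_mapsTo hd hmaps m).mono
      ((ball_subset_ball (by linarith)).trans hsub)
  have hcauchy := norm_fderiv_le_of_forall_norm_le hR (hdiff.sub differentiableOn_id)
    (hclose m hm)
  have hat := (hdiff.differentiableAt (ball_mem_nhds _ hR)).hasFDerivAt
  rw [(hat.sub (hasFDerivAt_id _)).fderiv] at hcauchy
  refine hdet ((dist_eq_norm _ _).trans_lt (hcauchy.trans_lt ?_))
  rw [div_lt_iff₀ hR]
  nlinarith [mul_pos hη hR]

end LowerBound

section Equicontinuity

variable {ι E G : Type*} [NormedAddCommGroup E] [NormedSpace ℂ E] [NormedAddCommGroup G]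
  [NormedSpace ℂ G] {f : ι → E → G} {Ω : Set E} {M : ℝ}

theorem equicontinuousAt_of_forall_norm_le (hΩ : IsOpen Ω) (hf : ∀ i, DifferentiableOn ℂ (f i) Ω)
    (hM : ∀ i, ∀ z ∈ Ω, ‖f i z‖ ≤ M) {x : E} (hx : x ∈ Ω) : EquicontinuousAt f x := by
  obtain ⟨R, hR, hsub⟩ := Metric.isOpen_iff.1 hΩ x hx
  have hlim : Tendsto (fun y => 2 * M / R * ‖y - x‖) (𝓝 x) (𝓝 0) := by
    simpa only [sub_self, norm_zero, mul_zero] using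
      (by fun_prop : Continuous fun y => 2 * M / R * ‖y - x‖).tendsto x
  refine Metric.equicontinuousAt_of_continuity_modulus _ hlim f ?_
  filter_upwards [ball_mem_nhds x hR] with y hy i
  rw [dist_comm, dist_eq_norm]
  exact norm_sub_le_of_forall_norm_le ((hf i).mono hsub) (fun z hz => hM i z (hsub hz)) hy

theorem tendstoUniformlyOn_of_tendsto_of_norm_le {l : Filter ι} {q : G} {K : Set E}
    (hΩ : IsOpen Ω) (hf : ∀ i, DifferentiableOn ℂ (f i) Ω) (hM : ∀ i, ∀ z ∈ Ω, ‖f i z‖ ≤ M)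
    (hlim : ∀ z ∈ Ω, Tendsto (fun i => f i z) l (𝓝 q)) (hK : IsCompact K) (hKΩ : K ⊆ Ω) :
    TendstoUniformlyOn f (fun _ => q) l K := by
  rw [← tendstoLocallyUniformlyOn_iff_tendstoUniformlyOn_of_compact hK,
    Metric.tendstoLocallyUniformlyOn_iff]
  intro ε hε x hx
  have hequi := equicontinuousAt_of_forall_norm_le hΩ hf hM (hKΩ hx)
  refine ⟨_, mem_nhdsWithin_of_mem_nhds
    (Metric.equicontinuousAt_iff_right.1 hequi (ε / 2) (half_pos hε)), ?_⟩
  filter_upwards [hlim x (hKΩ hx) (ball_mem_nhds q (half_pos hε))] with i hi y hy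
  rw [dist_comm]
  linarith [dist_triangle_left (f i y) q (f i x), hy i, mem_ball.1 hi]

end Equicontinuity

section Contraction

variable {E : Type*} [NormedAddCommGroup E] [NormedSpace ℂ E] {Ω : Set E} {F : E → E} {x z : E}

theorem det_fderiv_iterate_add (hΩ : IsOpen Ω) (hF : DifferentiableOn ℂ F Ω)
    (hmaps : MapsTo F Ω Ω) (i m : ℕ) (hz : z ∈ Ω) :
    (fderiv ℂ F^[i + m] z).det = (fderiv ℂ F^[i] (F^[m] z)).det * (fderiv ℂ F^[m] z).det := by
  have hd := fun j {w : E} (hw : w ∈ Ω) =>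
    (differentiableOn_iterate_of_mapsTo hF hmaps j).differentiableAt (hΩ.mem_nhds hw)
  rw [iterate_add, fderiv_comp z (hd i (hmaps.iterate m hz)) (hd m hz), det_clm_comp]

theorem det_fderiv_iterate (hΩ : IsOpen Ω) (hF : DifferentiableOn ℂ F Ω) (hmaps : MapsTo F Ω Ω)
    (m : ℕ) (hz : z ∈ Ω) :
    (fderiv ℂ F^[m] z).det = ∏ i ∈ Finset.range m, (fderiv ℂ F (F^[i] z)).det := by
  induction m with
  | zero =>
    rw [iterate_zero, fderiv_id, ContinuousLinearMap.det, ContinuousLinearMap.coe_id,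
      LinearMap.det_id, Finset.prod_range_zero]
  | succ m ih =>
    rw [add_comm m 1, det_fderiv_iterate_add hΩ hF hmaps 1 m hz, iterate_one, ih, add_comm 1 m,
      Finset.prod_range_succ, mul_comm]

variable [FiniteDimensional ℂ E]

theorem exists_eventually_norm_det_fderiv_le {ι : Type*} {f : ι → E → E} {M : ℝ} (hΩ : IsOpen Ω)
    (hf : ∀ i, DifferentiableOn ℂ (f i) Ω) (hM : ∀ i, ∀ z ∈ Ω, ‖f i z‖ ≤ M) (hx : x ∈ Ω) :
    ∃ C > 0, ∀ᶠ z in 𝓝 x, ∀ i, ‖(fderiv ℂ (f i) z).det‖ ≤ C := by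
  obtain ⟨R, hR, hsub⟩ := Metric.isOpen_iff.1 hΩ x hx
  obtain ⟨C, hC, hdet⟩ := exists_norm_det_le (E := E) (2 * M / (R / 2))
  refine ⟨C, hC, ?_⟩
  filter_upwards [ball_mem_nhds x (half_pos hR)] with z hz i
  have hzΩ : ball z (R / 2) ⊆ Ω :=
    (ball_subset_ball' (by linarith [mem_ball.1 hz])).trans hsub
  exact hdet _ (norm_fderiv_le_of_forall_norm_le (half_pos hR) ((hf i).mono hzΩ)
    fun w hw => hM i w (hzΩ hw))

theorem eventually_norm_det_fderiv_iterate_le {M μ : ℝ} (hΩ : IsOpen Ω) (hM : ∀ z ∈ Ω, ‖z‖ ≤ M)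
    (hF : DifferentiableOn ℂ F Ω) (hmaps : MapsTo F Ω Ω) (hx : x ∈ Ω) (hfix : IsFixedPt F x)
    (hμ : ‖(fderiv ℂ F x).det‖ < μ) :
    ∀ᶠ z in 𝓝 x, ∀ m, ‖(fderiv ℂ F^[m] z).det‖ ≤ μ ^ m := by
  have hcont : ContinuousAt (fun z => ‖(fderiv ℂ F z).det‖) x :=
    ((ContinuousLinearMap.continuous_det (𝕜 := ℂ) (E := E)).continuousAt.comp
      ((differentiableOn_fderiv_of_isOpen hΩ hF).continuousOn.continuousAt
        (hΩ.mem_nhds hx))).norm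
  obtain ⟨δ, hδ, hdet⟩ := Metric.eventually_nhds_iff.1 (hcont.eventually_lt_const hμ)
  have hequi := equicontinuousAt_of_forall_norm_le hΩ
    (differentiableOn_iterate_of_mapsTo hF hmaps) (fun m z hz => hM _ (hmaps.iterate m hz)) hx
  filter_upwards [Metric.equicontinuousAt_iff_right.1 hequi δ hδ, hΩ.mem_nhds hx] with z hnear hz m
  have hle : ∀ i, ‖(fderiv ℂ F (F^[i] z)).det‖ ≤ μ := fun i => by
    have := hnear i
    rw [hfix.iterate i, dist_comm] at this
    exact (hdet this).le
  calc ‖(fderiv ℂ F^[m] z).det‖ = ∏ i ∈ Finset.range m, ‖(fderiv ℂ F (F^[i] z)).det‖ := by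
        rw [det_fderiv_iterate hΩ hF hmaps m hz, norm_prod]
    _ ≤ ∏ _i ∈ Finset.range m, μ :=
        Finset.prod_le_prod (fun _ _ => norm_nonneg _) fun i _ => hle i
    _ = μ ^ m := by rw [Finset.prod_const, Finset.card_range]

theorem exists_eventually_norm_det_fderiv_iterate_le {M μ : ℝ} (hΩ : IsOpen Ω)
    (hM : ∀ z ∈ Ω, ‖z‖ ≤ M) (hF : DifferentiableOn ℂ F Ω) (hmaps : MapsTo F Ω Ω) (hx : x ∈ Ω)
    (hfix : IsFixedPt F x) (hμ : ‖(fderiv ℂ F x).det‖ < μ) (hμ₁ : μ < 1) (hz : z ∈ Ω)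
    (hacc : x ∈ closure (range fun m => F^[m] z)) :
    ∃ C > 0, ∀ᶠ w in 𝓝 z, ∀ m, ‖(fderiv ℂ F^[m] w).det‖ ≤ C * μ ^ m := by
  have hμ₀ : 0 < μ := (norm_nonneg _).trans_lt hμ
  have hnear := eventually_norm_det_fderiv_iterate_le hΩ hM hF hmaps hx hfix hμ
  obtain ⟨_, hk, k, rfl⟩ := mem_closure_iff_nhds.1 hacc _ (eventually_eventually_nhds.2 hnear)
  obtain ⟨C, hC, hbound⟩ := exists_eventually_norm_det_fderiv_le hΩ
    (differentiableOn_iterate_of_mapsTo hF hmaps) (fun m z hz => hM _ (hmaps.iterate m hz)) hz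
  have hcont : ContinuousAt F^[k] z :=
    (differentiableOn_iterate_of_mapsTo hF hmaps k).continuousOn.continuousAt (hΩ.mem_nhds hz)
  refine ⟨C * (μ ^ k)⁻¹, by positivity, ?_⟩
  filter_upwards [hbound, hcont.eventually hk, hΩ.mem_nhds hz] with w hC hw hwΩ m
  rcases le_total m k with hm | hm
  · calc ‖(fderiv ℂ F^[m] w).det‖ ≤ C * ((μ ^ k)⁻¹ * μ ^ k) := by
          rw [inv_mul_cancel₀ (by positivity), mul_one]
          exact hC m
      _ ≤ C * ((μ ^ k)⁻¹ * μ ^ m) := by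
          gcongr ?_ * (_ * ?_)
          exact pow_le_pow_of_le_one hμ₀.le hμ₁.le hm
      _ = C * (μ ^ k)⁻¹ * μ ^ m := (mul_assoc _ _ _).symm
  · obtain ⟨i, rfl⟩ := Nat.exists_eq_add_of_le' hm
    rw [det_fderiv_iterate_add hΩ hF hmaps i k hwΩ, norm_mul]
    calc ‖(fderiv ℂ F^[i] (F^[k] w)).det‖ * ‖(fderiv ℂ F^[k] w).det‖ ≤ μ ^ i * C := by
          gcongr
          exacts [hw i, hC k]
      _ = C * (μ ^ k)⁻¹ * μ ^ (i + k) := by rw [pow_add]; field_simp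

theorem eventuallyEq_id_of_comp_eventuallyEq {g : E → E} {L : E →L[ℂ] E}
    (hg : HasStrictFDerivAt g L x) (hL : L.det ≠ 0) (hF : ContinuousAt F x)
    (hfix : IsFixedPt F x) (hgF : g ∘ F =ᶠ[𝓝 x] g) : F =ᶠ[𝓝 x] id := by
  have : CompleteSpace E := FiniteDimensional.complete ℂ E
  have hg : HasStrictFDerivAt g (L.toContinuousLinearEquivOfDetNeZero hL : E →L[ℂ] E) x := by
    simpa only [ContinuousLinearMap.coe_toContinuousLinearEquivOfDetNeZero] using hg
  have hleft := hg.eventually_left_inverse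
  have hFx : Tendsto F (𝓝 x) (𝓝 x) := by simpa only [hfix.eq] using hF.tendsto
  filter_upwards [hleft, hFx.eventually hleft, hgF] with z hz hFz hgz
  rw [← hFz, ← comp_apply (f := g), hgz, hz, id]

end Contraction

section Limits

variable {E : Type*} [NormedAddCommGroup E] [NormedSpace ℂ E] {Ω : Set E} {p a : E} {F : E → E}

theorem isFixedPt_of_tendsto_iterate_of_tendsto_iterate_apply {X : Type*} [TopologicalSpace X]
    [T2Space X] {f : X → X} {x y : X} {l : Filter ℕ} [l.NeBot] (hf : ContinuousAt f y)
    (hx : Tendsto (fun j => f^[j] x) l (𝓝 y)) (hfx : Tendsto (fun j => f^[j] (f x)) l (𝓝 y)) :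
    IsFixedPt f y :=
  tendsto_nhds_unique ((hf.tendsto.comp hx).congr fun j => by
    rw [comp_apply, ← iterate_succ_apply' f j x, iterate_succ_apply]) hfx

theorem norm_det_fderiv_lt_one_of_tendsto_iterate [FiniteDimensional ℂ E] {x : E} {L : E →L[ℂ] E}
    {l : Filter ℕ} [l.NeBot] (hΩ : IsOpen Ω) (hF : DifferentiableOn ℂ F Ω) (hmaps : MapsTo F Ω Ω)
    (hx : x ∈ Ω) (hfix : IsFixedPt F x) (hL : Tendsto (fun j => fderiv ℂ F^[j] x) l (𝓝 L))
    (hdet : L.det = 0) : ‖(fderiv ℂ F x).det‖ < 1 := by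
  by_contra! hge
  have hlim : Tendsto (fun j => ‖(fderiv ℂ F^[j] x).det‖) l (𝓝 ‖L.det‖) :=
    (((ContinuousLinearMap.continuous_det (𝕜 := ℂ) (E := E)).tendsto L).comp hL).norm
  have hone : 1 ≤ ‖L.det‖ := ge_of_tendsto hlim <| .of_forall fun j => by
    rw [det_fderiv_iterate hΩ hF hmaps j hx, norm_prod]
    exact Finset.one_le_prod fun i _ => by rwa [hfix.iterate i]
  rw [hdet, norm_zero] at hone
  exact hone.not_gt one_pos

/- An invertible derivative of `g` at `x` would make `g` injective there, so `g ∘ F = g` forces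
`F = id` near `x`. Otherwise the derivatives of the iterates at `x` have a singular limit point. -/
theorem eqOn_id_or_norm_det_fderiv_lt_one [FiniteDimensional ℂ E] {u : Ultrafilter ℕ} {g : E → E}
    {x : E} {M : ℝ} (hΩ : IsOpen Ω) (hc : IsPreconnected Ω) (hM : ∀ z ∈ Ω, ‖z‖ ≤ M)
    (hF : DifferentiableOn ℂ F Ω) (hmaps : MapsTo F Ω Ω)
    (hlim : ∀ z ∈ Ω, Tendsto (fun j => F^[j] z) u (𝓝 (g z))) (hgF : EqOn (g ∘ F) g Ω)
    (hx : x ∈ Ω) (hfix : IsFixedPt F x) : EqOn F id Ω ∨ ‖(fderiv ℂ F x).det‖ < 1 := by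
  have : CompleteSpace E := FiniteDimensional.complete ℂ E
  have : ProperSpace (E →L[ℂ] E) := FiniteDimensional.proper ℂ _
  have hiter := differentiableOn_iterate_of_mapsTo hF hmaps
  obtain ⟨R, hR, hsub⟩ := Metric.isOpen_iff.1 hΩ x hx
  have hbound : ∀ j, ∀ z ∈ ball x R, ‖F^[j] z‖ ≤ M := fun j z hz =>
    hM _ (hmaps.iterate j (hsub hz))
  obtain ⟨L, hL⟩ := exists_tendsto_ultrafilter_of_norm_le u (f := fun j => fderiv ℂ F^[j] x)
    (.of_forall fun j => norm_fderiv_le_of_forall_norm_le hR ((hiter j).mono hsub) (hbound j))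
  have hgL : HasStrictFDerivAt g L x :=
    hasStrictFDerivAt_of_tendsto hR (.of_forall fun j => (hiter j).mono hsub)
      (.of_forall hbound) (fun z hz => hlim z (hsub hz)) hL
  by_cases hdet : L.det = 0
  · exact Or.inr (norm_det_fderiv_lt_one_of_tendsto_iterate hΩ hF hmaps hx hfix hL hdet)
  · have hid := eventuallyEq_id_of_comp_eventuallyEq hgL hdet
      (hF.continuousOn.continuousAt (hΩ.mem_nhds hx)) hfix
      (hgF.eventuallyEq_of_mem (hΩ.mem_nhds hx))
    exact Or.inl (eqOn_of_eventuallyEq_of_isPreconnected hΩ hc hF differentiableOn_id hx hid)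

theorem differentiable_det [FiniteDimensional ℂ E] :
    Differentiable ℂ fun A : E →L[ℂ] E => A.det := by
  set b := Module.finBasis ℂ E
  have hdet : (fun A : E →L[ℂ] E => A.det) = fun A =>
      ∑ σ : Equiv.Perm (Fin (Module.finrank ℂ E)), (Equiv.Perm.sign σ : ℂ) *
        ∏ i, LinearMap.toContinuousLinearMap (b.coord (σ i)) (A (b i)) := by
    funext A
    rw [ContinuousLinearMap.det, ← LinearMap.det_toMatrix b, Matrix.det_apply']
    simp only [LinearMap.toMatrix_apply, ContinuousLinearMap.coe_coe,
      LinearMap.coe_toContinuousLinearMap', Module.Basis.coord_apply]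
  rw [hdet]
  fun_prop

theorem exists_eventually_norm_le_of_hopf {V : Type*} [NormedAddCommGroup V] [NormedSpace ℂ V]
    {f : ℕ → ℂ → V} {x₀ C D μ : ℝ} {N : ℕ} (hx₀ : 0 < x₀) (hD : 0 ≤ D) (hμ : 0 ≤ μ) (hμ₁ : μ < 1)
    (hf : ∀ m, DifferentiableOn ℂ (f m) (ball (x₀ : ℂ) x₀))
    (hbound : ∀ m, ∀ x ∈ ball (x₀ : ℂ) x₀, ‖f m x‖ ≤ D * (‖x‖ / x.re) ^ N)
    (hdecay : ∀ᶠ x in 𝓝 (x₀ : ℂ), ∀ m, ‖f m x‖ ≤ C * μ ^ m) :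
    ∃ (M : ℝ) (k : ℕ), ∀ᶠ t : ℝ in 𝓝[>] 0, ∀ j : ℕ,
      ‖f (k * j) t‖ ≤ M * (1 - t / (2 * x₀)) ^ j := by
  obtain ⟨δ, hδ, hball⟩ := Metric.nhds_basis_closedBall.mem_iff.1 hdecay
  set s := min δ (x₀ / 2)
  have hs : 0 < s := by positivity
  have hsx : s < x₀ := (min_le_right _ _).trans_lt (half_lt_self hx₀)
  obtain ⟨k, hk⟩ := exists_pow_lt_of_lt_one (div_pos hs hx₀) hμ₁
  refine ⟨max C D * 2 ^ N, k, ?_⟩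
  filter_upwards [Ioo_mem_nhdsGT (sub_pos.2 hsx)] with t ⟨ht, hts⟩ j
  refine norm_le_of_hopf hs (by positivity) (pow_nonneg hμ k) hk.le (hf _) (fun x hx => ?_)
    (fun x hx => ?_) ht hts
  · have hre : 0 < x.re := by
      have := neg_lt_of_abs_lt ((abs_re_le_norm _).trans_lt (mem_ball_iff_norm.1 hx))
      rw [sub_re, ofReal_re] at this
      linarith
    refine (hbound _ x hx).trans ?_
    gcongr
    exact le_max_right _ _
  · rw [← pow_mul]
    refine (hball (closedBall_subset_closedBall (min_le_left _ _) hx) _).trans ?_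
    gcongr
    exact le_max_left _ _

theorem exists_eventually_exists_mul_pow_lt (M : ℝ) {x ε : ℝ} (hx : 0 < x) (hε : 0 < ε) :
    ∃ κ > 0, ∀ᶠ t : ℝ in 𝓝[>] 0, ∃ j : ℕ, j * t ≤ κ ∧ M * (1 - t / x) ^ j < ε := by
  have hlim : Tendsto (fun κ : ℝ => |M| * Real.exp (-((κ - 1) / x))) atTop (𝓝 0) := by
    simpa only [mul_zero, comp_def, id, sub_eq_add_neg] using
      (Real.tendsto_exp_neg_atTop_nhds_zero.comp
        ((tendsto_atTop_add_const_right _ (-1) tendsto_id).atTop_div_const hx)).const_mul |M|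
  obtain ⟨κ, hκ, hsmall⟩ := ((eventually_gt_atTop 0).and (hlim.eventually_lt_const hε)).exists
  refine ⟨κ, hκ, ?_⟩
  filter_upwards [Ioo_mem_nhdsGT (lt_min one_pos hx)] with t ⟨ht, htx⟩
  have hjle : (⌊κ / t⌋₊ : ℝ) * t ≤ κ := (le_div_iff₀ ht).1 (Nat.floor_le (by positivity))
  have hjge : κ - 1 ≤ ⌊κ / t⌋₊ * t := by
    have := (div_lt_iff₀ ht).1 (Nat.lt_floor_add_one (κ / t))
    linarith [htx.trans_le (min_le_left 1 x)]
  refine ⟨⌊κ / t⌋₊, hjle, lt_of_le_of_lt ?_ hsmall⟩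
  have hnonneg : 0 ≤ 1 - t / x := by
    rw [sub_nonneg, div_le_one hx]
    exact (htx.trans_le (min_le_right 1 x)).le
  calc M * (1 - t / x) ^ ⌊κ / t⌋₊ ≤ |M| * Real.exp (-(t / x)) ^ ⌊κ / t⌋₊ := by
        gcongr
        exacts [le_abs_self M, Real.one_sub_le_exp_neg _]
    _ = |M| * Real.exp (-(⌊κ / t⌋₊ * t / x)) := by
        rw [← Real.exp_nat_mul, mul_neg, mul_div_assoc]
    _ ≤ |M| * Real.exp (-((κ - 1) / x)) := by gcongr

theorem exists_eventually_exists_norm_lt_of_hopf {V : Type*} [NormedAddCommGroup V]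
    [NormedSpace ℂ V] {f : ℕ → ℂ → V} {x₀ C D μ ε : ℝ} {N : ℕ} (hx₀ : 0 < x₀) (hD : 0 ≤ D)
    (hμ : 0 ≤ μ) (hμ₁ : μ < 1) (hε : 0 < ε)
    (hf : ∀ m, DifferentiableOn ℂ (f m) (ball (x₀ : ℂ) x₀))
    (hbound : ∀ m, ∀ x ∈ ball (x₀ : ℂ) x₀, ‖f m x‖ ≤ D * (‖x‖ / x.re) ^ N)
    (hdecay : ∀ᶠ x in 𝓝 (x₀ : ℂ), ∀ m, ‖f m x‖ ≤ C * μ ^ m) :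
    ∃ κ > 0, ∀ᶠ t : ℝ in 𝓝[>] 0, ∃ m : ℕ, m * t ≤ κ ∧ ‖f m t‖ < ε := by
  obtain ⟨M, k, hM⟩ := exists_eventually_norm_le_of_hopf hx₀ hD hμ hμ₁ hf hbound hdecay
  obtain ⟨κ, hκ, hsmall⟩ :=
    exists_eventually_exists_mul_pow_lt M (x := 2 * x₀) (by positivity) hε
  refine ⟨k * κ + 1, by positivity, ?_⟩
  filter_upwards [hM, hsmall] with t hMt ⟨j, hjκ, hjε⟩
  refine ⟨k * j, ?_, (hMt j).trans_lt hjε⟩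
  have := mul_le_mul_of_nonneg_left hjκ (Nat.cast_nonneg k)
  push_cast
  linarith

/- If `g` met `Ω` at a fixed point where `F` contracts volume, the Jacobian determinants of the
iterates would decay like `exp (-m * t / κ)` at `p + t • a`, whereas flatness keeps them above
`1 / 2` as long as `m * t` is bounded. -/
theorem eqOn_id_of_limit_mem [FiniteDimensional ℂ E] {u : Ultrafilter ℕ} {g : E → E}
    {M c x₀ D : ℝ} {N : ℕ} (hΩ : IsOpen Ω) (hconn : IsPreconnected Ω) (hM : ∀ z ∈ Ω, ‖z‖ ≤ M)
    (hF : DifferentiableOn ℂ F Ω) (hmaps : MapsTo F Ω Ω)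
    (hflat : (fun z => F z - z) =o[𝓝[Ω] p] fun z => ‖z - p‖ ^ 2) (hc : 0 < c)
    (hball : ∀ᶠ t : ℝ in 𝓝[>] 0, ball (p + (t : ℂ) • a) (c * t) ⊆ Ω)
    (hlim : ∀ z ∈ Ω, Tendsto (fun j => F^[j] z) u (𝓝 (g z))) (hgF : EqOn (g ∘ F) g Ω)
    (hx₀ : 0 < x₀) (hD : 0 ≤ D) (hdisc : ∀ x ∈ ball (x₀ : ℂ) x₀, p + x • a ∈ Ω)
    (hdet : ∀ m, ∀ x ∈ ball (x₀ : ℂ) x₀,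
      ‖(fderiv ℂ F^[m] (p + x • a)).det‖ ≤ D * (‖x‖ / x.re) ^ N)
    (hmem : g (p + (x₀ : ℂ) • a) ∈ Ω) : EqOn F id Ω := by
  have hz₀ := hdisc _ (mem_ball_self hx₀)
  have hfix : IsFixedPt F (g (p + (x₀ : ℂ) • a)) :=
    isFixedPt_of_tendsto_iterate_of_tendsto_iterate_apply
      (hF.continuousOn.continuousAt (hΩ.mem_nhds hmem)) (hlim _ hz₀)
      (hgF hz₀ ▸ hlim _ (hmaps hz₀))
  refine (eqOn_id_or_norm_det_fderiv_lt_one hΩ hconn hM hF hmaps hlim hgF hmem hfix).resolve_right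
    fun hlt => ?_
  obtain ⟨μ, hμ, hμ₁⟩ := exists_between hlt
  obtain ⟨C, -, hdecay⟩ := exists_eventually_norm_det_fderiv_iterate_le hΩ hM hF hmaps hmem hfix
    hμ hμ₁ hz₀ (mem_closure_of_tendsto (hlim _ hz₀) (.of_forall mem_range_self))
  have hline : Continuous fun x : ℂ => p + x • a := by fun_prop
  have hd (m : ℕ) : DifferentiableOn ℂ (fun x : ℂ => fderiv ℂ F^[m] (p + x • a)) (ball x₀ x₀) :=
    (differentiableOn_fderiv_of_isOpen hΩ (differentiableOn_iterate_of_mapsTo hF hmaps m)).comp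
      (by fun_prop) hdisc
  obtain ⟨κ, hκ, hsmall⟩ := exists_eventually_exists_norm_lt_of_hopf (ε := 1 / 2)
    (f := fun m x => (fderiv ℂ F^[m] (p + x • a)).det) hx₀ hD ((norm_nonneg _).trans hμ.le) hμ₁
    one_half_pos
    (fun m => (differentiable_det (E := E)).comp_differentiableOn (hd m)) hdet
    (hline.continuousAt.eventually hdecay)
  obtain ⟨t, ⟨m, hm, hlt⟩, hge⟩ := (hsmall.and
    (eventually_le_norm_det_fderiv_iterate hflat hF hmaps hc hball hκ)).exists
  exact (hge m hm).not_gt hlt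

theorem mul_norm_sq_lt_re_of_mem_ball {K x₀ : ℝ} {x : ℂ} (hK : 0 < K) (hKx : K * (2 * x₀) ≤ 1)
    (hx : x ∈ ball (x₀ : ℂ) x₀) : K * ‖x‖ ^ 2 < x.re := by
  have hsq : ‖x - x₀‖ ^ 2 < x₀ ^ 2 := by
    have := mem_ball_iff_norm.1 hx
    gcongr
  rw [← normSq_eq_norm_sq, normSq_apply, sub_re, sub_im, ofReal_re, ofReal_im] at hsq
  have hlt : ‖x‖ ^ 2 < 2 * x₀ * x.re := by
    rw [← normSq_eq_norm_sq, normSq_apply]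
    linarith
  have hx₀ : 0 < x₀ := pos_of_mem_ball hx
  have hre : 0 < x.re := pos_of_mul_pos_right ((sq_nonneg _).trans_lt hlt) (by positivity)
  calc K * ‖x‖ ^ 2 < K * (2 * x₀ * x.re) := by gcongr
    _ = K * (2 * x₀) * x.re := by ring
    _ ≤ x.re := mul_le_of_le_one_left hre.le hKx

/- The limits of `F^[j + m]`, `m : ℤ`, form a bounded two-sided family shifted by `F`. -/
theorem exists_limit_iterate [FiniteDimensional ℂ E] {ℓ : E →L[ℂ] ℂ} {C M : ℝ}
    (hΩ : IsOpen Ω) (hconn : IsPreconnected Ω) (hC : 0 ≤ C) (hV : innerRegion p ℓ C ⊆ Ω)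
    (ha : ℓ a = -1) (hM : ∀ z ∈ Ω, ‖z‖ ≤ M) (hF : DifferentiableOn ℂ F Ω) (hmaps : MapsTo F Ω Ω)
    (hflat : (fun z => F z - z) =o[𝓝[Ω] p] fun z => ‖z - p‖ ^ 2) (u : Ultrafilter ℕ)
    (hu : ↑u ≤ (atTop : Filter ℕ)) :
    ∃ g : E → E, DifferentiableOn ℂ g Ω ∧
      (∀ z ∈ Ω, Tendsto (fun j => F^[j] z) u (𝓝 (g z))) ∧ EqOn (g ∘ F) g Ω := by
  have : ProperSpace E := FiniteDimensional.proper ℂ E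
  set f : ℤ → E → E := fun m z => limUnder u fun j : ℕ => F^[((j : ℤ) + m).toNat] z
  have hf (m : ℤ) {z : E} (hz : z ∈ Ω) :
      Tendsto (fun j : ℕ => F^[((j : ℤ) + m).toNat] z) u (𝓝 (f m z)) :=
    tendsto_nhds_limUnder <| exists_tendsto_ultrafilter_of_norm_le u
      (.of_forall fun j => hM _ (hmaps.iterate _ hz))
  have hd (m : ℤ) : DifferentiableOn ℂ (f m) Ω :=
    differentiableOn_of_tendsto hΩ (fun j => differentiableOn_iterate_of_mapsTo hF hmaps _)
      (fun j z hz => hM _ (hmaps.iterate _ hz)) fun z hz => hf m hz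
  have hbound (m : ℤ) (z : E) (hz : z ∈ Ω) : ‖f m z‖ ≤ M :=
    le_of_tendsto (hf m hz).norm (.of_forall fun j => hM _ (hmaps.iterate _ hz))
  have hshift (m : ℤ) (z : E) (hz : z ∈ Ω) : f m (F z) = f (m + 1) z := by
    refine tendsto_nhds_unique (hf m (hmaps hz)) ((hf (m + 1) hz).congr' ?_)
    filter_upwards [hu (eventually_ge_atTop (-m).toNat)] with j hj
    rw [show ((j : ℤ) + (m + 1)).toNat = ((j : ℤ) + m).toNat + 1 by omega, iterate_succ_apply]
  have hconst := eqOn_of_bounded_of_shift hΩ hconn hC hV ha hflat hd hbound hshift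
  refine ⟨f 0, hd 0, fun z hz => ?_, fun z hz => ?_⟩
  · simpa only [add_zero, Int.toNat_natCast] using hf 0 hz
  · rw [comp_apply, hshift 0 z hz, zero_add, hconst hz]

end Limits

section Convergence

variable {E : Type*} [NormedAddCommGroup E] [NormedSpace ℂ E] {Ω : Set E} {p : E} {F : E → E}
  {r c : ℝ}

theorem exists_apply_eq_neg_one {ℓ : E →L[ℂ] ℂ} (hℓ : ℓ ≠ 0) : ∃ a, ℓ a = -1 :=
  LinearMap.surjective (f := ℓ.toLinearMap) (ContinuousLinearMap.coe_injective.ne hℓ) (-1)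

theorem eq_of_mul_norm_sub_sq_nonpos {V : Type*} [NormedAddCommGroup V] {x y : V} (hc : 0 < c)
    (h : c * ‖x - y‖ ^ 2 ≤ 0) : x = y := by
  have hsq : ‖x - y‖ ^ 2 = 0 := (nonpos_of_mul_nonpos_right h hc).antisymm (sq_nonneg _)
  exact sub_eq_zero.1 (norm_eq_zero.1 (pow_eq_zero_iff two_ne_zero |>.1 hsq))

theorem eventually_eq_of_re_le_neg_mul_norm_sq {V : Type*} [NormedAddCommGroup V]
    [NormedSpace ℂ V] {g : E → V} {φ : V → ℂ} {z₀ : E} (hc : 0 < c)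
    (hg : ∀ᶠ z in 𝓝 z₀, DifferentiableAt ℂ g z) (hφ : Differentiable ℂ φ) (hφ₀ : φ (g z₀) = 0)
    (hpeak : ∀ᶠ z in 𝓝 z₀, (φ (g z)).re ≤ -c * ‖g z - g z₀‖ ^ 2) :
    ∀ᶠ z in 𝓝 z₀, g z = g z₀ := by
  have hmax : IsLocalMax (norm ∘ fun z => cexp (φ (g z))) z₀ := by
    filter_upwards [hpeak] with z hz
    simp only [comp_apply, norm_exp, hφ₀, zero_re, Real.exp_le_exp]
    exact hz.trans (mul_nonpos_of_nonpos_of_nonneg (neg_nonpos.2 hc.le) (sq_nonneg _))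
  filter_upwards [hpeak, eventually_eq_of_isLocalMax_norm
    (hg.mono fun z hz => ((hφ (g z)).comp z hz).cexp) hmax] with z hz heq
  have hre : (φ (g z)).re = 0 := by
    simpa only [comp_apply, norm_exp, hφ₀, zero_re, Real.exp_eq_exp] using congrArg norm heq
  rw [hre, neg_mul, le_neg, neg_zero] at hz
  exact eq_of_mul_norm_sub_sq_nonpos hc hz

/-- Every point `q` of `closure Ω \ Ω` near `p` admits an entire function whose real part peaks at
`q` on `closure Ω ∩ ball p r`, with the quadratic decay rate `c` independent of `q`. -/
def HasPeakFunctions (Ω : Set E) (p : E) (r c : ℝ) : Prop :=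
  ∀ q ∈ ball p r, q ∈ closure Ω → q ∉ Ω → ∃ φ : E → ℂ, Differentiable ℂ φ ∧ φ q = 0 ∧
    ∀ z ∈ closure Ω, z ∈ ball p r → (φ z).re ≤ -c * ‖z - q‖ ^ 2

theorem HasPeakFunctions.eqOn_const_of_apply_notMem [CompleteSpace E] {g : E → E} {z₀ : E}
    (hpeak : HasPeakFunctions Ω p r c) (hΩ : IsOpen Ω) (hconn : IsPreconnected Ω) (hc : 0 < c)
    (hg : DifferentiableOn ℂ g Ω) (hmaps : MapsTo g Ω (closure Ω)) (hz₀ : z₀ ∈ Ω)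
    (hnear : g z₀ ∈ ball p r) (hout : g z₀ ∉ Ω) : EqOn g (fun _ => g z₀) Ω := by
  obtain ⟨φ, hφ, hφ₀, hφpeak⟩ := hpeak _ hnear (hmaps hz₀) hout
  have hcont : ContinuousAt g z₀ := hg.continuousOn.continuousAt (hΩ.mem_nhds hz₀)
  refine eqOn_of_eventuallyEq_of_isPreconnected hΩ hconn hg (differentiableOn_const _) hz₀
    (eventually_eq_of_re_le_neg_mul_norm_sq hc (hg.eventually_differentiableAt (hΩ.mem_nhds hz₀))
      hφ hφ₀ ?_)
  filter_upwards [hΩ.mem_nhds hz₀, hcont (isOpen_ball.mem_nhds hnear)] with z hz hzr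
  exact hφpeak _ (hmaps hz) hzr

namespace IsSupportAt

variable {ℓ : E →L[ℂ] ℂ} {B : E →L[ℂ] E →L[ℂ] ℂ} {C : ℝ} {a : E} [FiniteDimensional ℂ E]

theorem exists_iterate_bounds (h : IsSupportAt Ω p ℓ B r c C) (hΩo : IsOpen Ω)
    (hΩ : Bornology.IsBounded Ω) (ha : ℓ a = -1) (hF : DifferentiableOn ℂ F Ω)
    (hmaps : MapsTo F Ω Ω) (hflat : (fun z => F z - z) =o[𝓝[Ω] p] fun z => ‖z - p‖ ^ 1) :
    ∃ x₀ > (0 : ℝ), ∃ D > 0, ∀ x ∈ ball (x₀ : ℂ) x₀, p + x • a ∈ Ω ∧ ∀ m,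
      ‖F^[m] (p + x • a) - p‖ < r / 2 ∧
        c * ‖F^[m] (p + x • a) - p‖ ^ 2 ≤ 16 * (‖x‖ ^ 2 / x.re) ∧
          ‖(fderiv ℂ F^[m] (p + x • a)).det‖ ≤ D * (‖x‖ / x.re) ^ (2 * Module.finrank ℂ E) := by
  obtain ⟨K, hK, D, hD, hbound⟩ := h.exists_norm_det_fderiv_le hΩo hΩ ha
  refine ⟨1 / (2 * K), by positivity, D, hD, fun x hx => ?_⟩
  have hxre := mul_norm_sq_lt_re_of_mem_ball hK (le_of_eq (by field_simp)) hx
  have hiter (m : ℕ) := hbound F^[m] (differentiableOn_iterate_of_mapsTo hF hmaps m)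
    (hmaps.iterate m) (isLittleO_iterate_sub_self le_rfl hflat hmaps m) x hxre
  exact ⟨(hiter 0).1, fun m => (hiter m).2⟩

theorem eq_of_tendsto_iterate (h : IsSupportAt Ω p ℓ B r c C) (hΩo : IsOpen Ω)
    (hΩ : Bornology.IsBounded Ω) (hF : DifferentiableOn ℂ F Ω) (hmaps : MapsTo F Ω Ω)
    (hflat : (fun z => F z - z) =o[𝓝[Ω] p] fun z => ‖z - p‖ ^ 1) {l : Filter ℕ} [l.NeBot] {q : E}
    (hlim : ∀ z ∈ Ω, Tendsto (fun j => F^[j] z) l (𝓝 q)) : q = p := by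
  obtain ⟨a, ha⟩ := exists_apply_eq_neg_one h.ne_zero
  obtain ⟨x₀, hx₀, D, -, hbound⟩ := h.exists_iterate_bounds hΩo hΩ ha hF hmaps hflat
  have hle : ∀ᶠ t : ℝ in 𝓝[>] 0, c * ‖q - p‖ ^ 2 ≤ 16 * t := by
    filter_upwards [Ioo_mem_nhdsGT hx₀] with t ⟨ht, htx⟩
    obtain ⟨htΩ, hiter⟩ := hbound t (by
      rw [mem_ball_iff_norm, ← ofReal_sub, norm_real, Real.norm_eq_abs, abs_lt]
      constructor <;> linarith)
    have hsq : ‖(t : ℂ)‖ ^ 2 / (t : ℂ).re = t := by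
      rw [norm_real, Real.norm_eq_abs, sq_abs, ofReal_re, sq, mul_div_cancel_right₀ _ ht.ne']
    exact le_of_tendsto ((((hlim _ htΩ).sub_const p).norm.pow 2).const_mul c)
      (.of_forall fun j => (hiter j).2.1.trans_eq (by rw [hsq]))
  refine eq_of_mul_norm_sub_sq_nonpos h.peak_pos ?_
  simpa using ge_of_tendsto ((tendsto_id.mono_left nhdsWithin_le_nhds).const_mul 16) hle

theorem tendsto_iterate (h : IsSupportAt Ω p ℓ B r c C) (hΩo : IsOpen Ω)
    (hconn : IsPreconnected Ω) (hΩ : Bornology.IsBounded Ω) (hpeak : HasPeakFunctions Ω p r c)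
    (hF : DifferentiableOn ℂ F Ω) (hmaps : MapsTo F Ω Ω)
    (hflat : (fun z => F z - z) =o[𝓝[Ω] p] fun z => ‖z - p‖ ^ 2) (hne : ¬ EqOn F id Ω) {z : E}
    (hz : z ∈ Ω) : Tendsto (fun j => F^[j] z) atTop (𝓝 p) := by
  have : CompleteSpace E := FiniteDimensional.complete ℂ E
  obtain ⟨M, hM⟩ := hΩ.exists_norm_le
  obtain ⟨a, ha⟩ := exists_apply_eq_neg_one h.ne_zero
  obtain ⟨s, hs, t₀, ht₀, hball⟩ := exists_ball_subset_innerRegion p h.nonneg ha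
  have hflat₁ := isLittleO_sub_self_of_le one_le_two hflat
  obtain ⟨x₀, hx₀, D, hD, hbound⟩ := h.exists_iterate_bounds hΩo hΩ ha hF hmaps hflat₁
  refine tendsto_iff_ultrafilter _ _ _ |>.2 fun u hu => ?_
  obtain ⟨g, hg, hlim, hgF⟩ := exists_limit_iterate hΩo hconn h.nonneg h.inner_subset ha hM hF
    hmaps hflat u hu
  obtain ⟨hz₀, hiter₀⟩ := hbound x₀ (mem_ball_self hx₀)
  have hnear : g (p + (x₀ : ℂ) • a) ∈ ball p r := mem_ball_iff_norm.2 <|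
    (le_of_tendsto ((hlim _ hz₀).sub_const p).norm (.of_forall fun j => (hiter₀ j).1.le)).trans_lt
      (half_lt_self h.radius_pos)
  have hout : g (p + (x₀ : ℂ) • a) ∉ Ω := fun hmem => hne <|
    eqOn_id_of_limit_mem hΩo hconn hM hF hmaps hflat hs
      (mem_of_superset (Ioo_mem_nhdsGT ht₀) fun t ht => (hball t ht.1 ht.2).trans h.inner_subset)
      hlim hgF hx₀ hD.le (fun x hx => (hbound x hx).1) (fun m x hx => ((hbound x hx).2 m).2.2) hmem
  have hconst := hpeak.eqOn_const_of_apply_notMem hΩo hconn h.peak_pos hg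
    (fun w hw => mem_closure_of_tendsto (hlim w hw) (.of_forall fun j => hmaps.iterate j hw))
    hz₀ hnear hout
  have hlim' : ∀ w ∈ Ω, Tendsto (fun j => F^[j] w) u (𝓝 (g (p + (x₀ : ℂ) • a))) :=
    fun w hw => (hlim w hw).trans_eq (congrArg 𝓝 (hconst hw))
  exact h.eq_of_tendsto_iterate hΩo hΩ hF hmaps hflat₁ hlim' ▸ hlim' z hz

theorem eqOn_id_of_leftInvOn {G : E → E} (h : IsSupportAt Ω p ℓ B r c C) (hΩo : IsOpen Ω)
    (hconn : IsPreconnected Ω) (hΩ : Bornology.IsBounded Ω) (hF : DifferentiableOn ℂ F Ω)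
    (hmaps : MapsTo F Ω Ω) (hflat : (fun z => F z - z) =o[𝓝[Ω] p] fun z => ‖z - p‖ ^ 2)
    (hG : DifferentiableOn ℂ G Ω) (hGmaps : MapsTo G Ω Ω) (hGF : LeftInvOn G F Ω) :
    EqOn F id Ω := by
  obtain ⟨M, hM⟩ := hΩ.exists_norm_le
  obtain ⟨a, ha⟩ := exists_apply_eq_neg_one h.ne_zero
  have hd (m : ℤ) : DifferentiableOn ℂ (fun z => G^[(-m).toNat] (F^[m.toNat] z)) Ω :=
    (differentiableOn_iterate_of_mapsTo hG hGmaps _).comp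
      (differentiableOn_iterate_of_mapsTo hF hmaps _) (hmaps.iterate _)
  have hshift (m : ℤ) (z : E) (hz : z ∈ Ω) : G^[(-m).toNat] (F^[m.toNat] (F z)) =
      G^[(-(m + 1)).toNat] (F^[(m + 1).toNat] z) := by
    rcases le_or_gt 0 m with hm | hm
    · rw [show (-m).toNat = 0 by omega, show (-(m + 1)).toNat = 0 by omega,
        show (m + 1).toNat = m.toNat + 1 by omega, iterate_succ_apply]
    · rw [show (-m).toNat = (-(m + 1)).toNat + 1 by omega, show m.toNat = 0 by omega,
        show (m + 1).toNat = 0 by omega, iterate_succ_apply, iterate_zero_apply,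
        iterate_zero_apply, hGF hz]
  exact eqOn_of_bounded_of_shift hΩo hconn h.nonneg h.inner_subset ha hflat hd
    (fun m z hz => hM _ (hGmaps.iterate _ (hmaps.iterate _ hz))) hshift

end IsSupportAt

theorem LittleOh.isLittleO {n k : ℕ} {Ω : Set (En n)} {F : En n → En n} {p : En n}
    (h : LittleOh Ω F p k) (hp : p ∉ Ω) :
    (fun z => F z - z) =o[𝓝[Ω] p] fun z => ‖z - p‖ ^ k := by
  refine Asymptotics.isLittleO_norm_left.1 ((Asymptotics.isLittleO_iff_tendsto' ?_).2 h)
  filter_upwards [self_mem_nhdsWithin] with z hz hzero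
  exact absurd (sub_eq_zero.1 (norm_eq_zero.1 (eq_zero_of_pow_eq_zero hzero)) ▸ hz) hp

namespace IsDefiningFunction

variable {n : ℕ} {m : ℕ∞} {Ω : Set (En n)} {ρ : En n → ℝ} {z : En n}

theorem nonpos_of_mem_closure (hρ : IsDefiningFunction Ω m ρ) (hz : z ∈ closure Ω) : ρ z ≤ 0 :=
  closure_lt_subset_le hρ.1.continuous continuous_const (hρ.2.1 ▸ hz)

theorem eq_zero_of_mem_closure (hρ : IsDefiningFunction Ω m ρ) (hz : z ∈ closure Ω)
    (hzΩ : z ∉ Ω) : ρ z = 0 :=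
  (hρ.nonpos_of_mem_closure hz).antisymm (not_lt.1 fun hlt => hzΩ (hρ.2.1 ▸ hlt))

theorem exists_isSupportAt {p : En n} (hρ : IsDefiningFunction Ω 2 ρ) (hp : p ∈ frontier Ω)
    (hspc : StronglyPcxAt ρ p) :
    ∃ ℓ B r c C, IsSupportAt Ω p ℓ B r c C ∧ HasPeakFunctions Ω p r c := by
  have hp₀ : ρ p = 0 := by
    rw [hρ.2.2.1] at hp
    exact hp
  have hpΩ : p ∉ Ω := by
    rw [hρ.2.1]
    exact hp₀.not_lt
  obtain ⟨r, hr, c, hc, B, hsupp⟩ := exists_support_functions hρ.1 hp₀ fun ξ hξ h₁ h₂ => by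
    have := hspc ξ hξ ⟨h₁, h₂⟩
    simp only [LeviForm, iteratedFDeriv_two_apply, Matrix.cons_val_zero,
      Matrix.cons_val_one] at this
    linarith
  obtain ⟨C, hC, hinner⟩ := exists_innerRegion_subset hρ.1 hp₀
  refine ⟨_, B, r, c, C, ⟨hpΩ, hr, hc, hC, fun hzero => hρ.2.2.2 p hp ?_,
    hinner.trans_eq hρ.2.1.symm, fun z hz hzr =>
      hsupp p (mem_ball_self hr) hp₀ z hzr (hρ.nonpos_of_mem_closure hz)⟩, fun q hqr hq hqΩ =>
    ⟨_, differentiable_quadPoly q _ B, by simp [quadPoly], fun z hz hzr =>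
      hsupp q hqr (hρ.eq_zero_of_mem_closure hq hqΩ) z hzr (hρ.nonpos_of_mem_closure hz)⟩⟩
  ext ξ
  simpa [StrongDual.extendRCLike_apply] using congrArg re (DFunLike.congr_fun hzero ξ)

end IsDefiningFunction

end Convergence

theorem main_theorem_case_k_eq_two_general {n : ℕ} (Ω : Set (En n)) (ρ : En n → ℝ)
    (hΩ : IsDomain' Ω) (hbd : Bornology.IsBounded Ω) (hρ : IsDefiningFunction Ω 2 ρ)
    (p : En n) (hp : p ∈ frontier Ω) (hspc : StronglyPcxAt ρ p)
    (F : En n → En n) (hF : DifferentiableOn ℂ F Ω) (hFself : MapsTo F Ω Ω)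
    (ho : LittleOh Ω F p 2) (hne : ¬ ∀ z ∈ Ω, F z = z) :
    (∀ K ⊆ Ω, IsCompact K →
      TendstoUniformlyOn (fun m => F^[m]) (fun _ => p) atTop K) ∧
    ¬ IsAutomorphismOf F Ω := by
  obtain ⟨ℓ, B, r, c, C, hsupp, hpeak⟩ := hρ.exists_isSupportAt hp hspc
  have hflat := ho.isLittleO hsupp.notMem
  obtain ⟨M, hM⟩ := hbd.exists_norm_le
  refine ⟨fun K hKΩ hK => ?_, fun ⟨_, _, G, hG, hGmaps, hGF, _⟩ => hne ?_⟩
  · exact tendstoUniformlyOn_of_tendsto_of_norm_le hΩ.1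
      (differentiableOn_iterate_of_mapsTo hF hFself) (fun m z hz => hM _ (hFself.iterate m hz))
      (fun z hz => hsupp.tendsto_iterate hΩ.1 hΩ.2.isPreconnected hbd hpeak hF hFself hflat hne hz)
      hK hKΩ
  · exact hsupp.eqOn_id_of_leftInvOn hΩ.1 hΩ.2.isPreconnected hbd hF hFself hflat hG hGmaps hGF

theorem main_theorem_case_k_eq_two
    {n : ℕ} (hn : 2 ≤ n) (Ω : Set (En n)) (ρ : En n → ℝ)
    (hΩ : IsDomain' Ω) (hbd : Bornology.IsBounded Ω)
    (hρ : IsPcxCinfBoundary Ω ρ)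
    (p : En n) (hp : p ∈ frontier Ω) (hspc : StronglyPcxAt ρ p)
    (F : En n → En n) (hF : DifferentiableOn ℂ F Ω) (hFself : MapsTo F Ω Ω)
    (ho : LittleOh Ω F p 2)
    (hne : ¬ ∀ z ∈ Ω, F z = z) :
    (∀ K ⊆ Ω, IsCompact K →
      TendstoUniformlyOn (fun m => F^[m]) (fun _ => p) atTop K) ∧
    ¬ IsAutomorphismOf F Ω :=
  main_theorem_case_k_eq_two_general Ω ρ hΩ hbd
    ⟨contDiff_infty.1 hρ.1.1 2, hρ.1.2⟩ p hp hspc F hF hFself ho hne
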